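/- Let B be a finite simplicial complex and let p : E → B be a Hurewicz fibration such that for every b ∈ B the fiber p⁻¹(b) is homotopy equivalent to a finite simplicial complex. Then there exist a compact ENR X, a continuous map q : X → B which is an approximate fibration, and a homotopy equivalence φ : X → E such that p ∘ φ = q. -/

import Mathlib

noncomputable section

open unitInterval

/-- A map `p : E → B` is a (Hurewicz) fibration if it is continuous and has the homotopy
lifting property with respect to every topological space. -/
def IsHurewiczFibration {E B : Type} [TopologicalSpace E] [TopologicalSpace B]
    (p : E → B) : Prop :=
  Continuous p ∧
  ∀ (X : Type) [TopologicalSpace X] (f : C(X, E)) (h : C(X × I, B)),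
    (∀ x : X, h (x, 0) = p (f x)) →
    ∃ H : C(X × I, E), (∀ x : X, H (x, 0) = f x) ∧ (∀ z : X × I, p (H z) = h z)

/-- A map `p : E → B` is an approximate fibration if it is continuous and, for every space `X`,
every partial lift and every open cover `𝒰` of `B`, there is a lift of the homotopy which
commutes with the given homotopy "up to `𝒰`". -/
def IsApproxFibration {E B : Type} [TopologicalSpace E] [TopologicalSpace B]
    (p : E → B) : Prop :=
  Continuous p ∧
  ∀ (X : Type) [TopologicalSpace X] (f : C(X, E)) (h : C(X × I, B)),
    (∀ x : X, h (x, 0) = p (f x)) →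
    ∀ 𝒰 : Set (Set B), (∀ U ∈ 𝒰, IsOpen U) → (⋃₀ 𝒰 = Set.univ) →
    ∃ H : C(X × I, E), (∀ x : X, H (x, 0) = f x) ∧
      (∀ z : X × I, ∃ U ∈ 𝒰, p (H z) ∈ U ∧ h z ∈ U)

/-- A topological space is a Euclidean neighborhood retract: it is homeomorphic to a subspace
`X'` of some `ℝⁿ` which is a retract of an open neighborhood `U` of `X'` in `ℝⁿ`. -/
def IsENR (X : Type) [TopologicalSpace X] : Prop :=
  ∃ (n : ℕ) (X' : Set (Fin n → ℝ)), Nonempty (X ≃ₜ X') ∧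
    ∃ U : Set (Fin n → ℝ), IsOpen U ∧ X' ⊆ U ∧
      ∃ r : C(U, X'), ∀ (x : U) (hx : (x : Fin n → ℝ) ∈ X'), r x = ⟨(x : Fin n → ℝ), hx⟩

/-- A space is (homeomorphic to) the polyhedron of a finite geometric simplicial complex
in some Euclidean space. -/
def IsFiniteSimplicialComplex (B : Type) [TopologicalSpace B] : Prop :=
  ∃ (n : ℕ) (K : Geometry.SimplicialComplex ℝ (Fin n → ℝ)),
    K.faces.Finite ∧ Nonempty (B ≃ₜ K.space)

/-- `X` is homotopy equivalent to (the polyhedron of) a finite simplicial complex. -/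
def HomotopyEquivToFiniteComplex (X : Type) [TopologicalSpace X] : Prop :=
  ∃ (n : ℕ) (K : Geometry.SimplicialComplex ℝ (Fin n → ℝ)),
    K.faces.Finite ∧ Nonempty (ContinuousMap.HomotopyEquiv X K.space)

set_option linter.all false

section Calc
variable {V X Y Z W E : Type} [PseudoMetricSpace V]
  [TopologicalSpace X] [TopologicalSpace Y] [TopologicalSpace Z] [TopologicalSpace W]
  [TopologicalSpace E]

/-- controlled homotopy, with real time, stationary outside the unit interval -/
def CH (q : Z → V) (b : X → V) (ε : ℝ) (f g : X → Z) : Prop :=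
  ∃ H : X × ℝ → Z, Continuous H ∧ (∀ x t, t ≤ 0 → H (x, t) = f x) ∧
    (∀ x t, 1 ≤ t → H (x, t) = g x) ∧ ∀ x t, dist (q (H (x, t))) (b x) < ε

/-- clamp -/
def cl (t : ℝ) : ℝ := max 0 (min 1 t)

lemma cl_cont : Continuous cl := by unfold cl; fun_prop
@[fun_prop] lemma cl_cont' {f : X → ℝ} (hf : Continuous f) : Continuous fun x => cl (f x) :=
  cl_cont.comp hf
lemma cl_nonneg (t : ℝ) : 0 ≤ cl t := le_max_left _ _
lemma cl_le (t : ℝ) : cl t ≤ 1 := max_le (by norm_num) (min_le_left _ _)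
lemma cl_of_le {t : ℝ} (h : t ≤ 0) : cl t = 0 := by
  unfold cl; exact max_eq_left ((min_le_right _ _).trans h)
lemma cl_of_ge {t : ℝ} (h : 1 ≤ t) : cl t = 1 := by
  unfold cl; rw [min_eq_left h]; norm_num
lemma cl_of_mem {t : ℝ} (h : 0 ≤ t) (h' : t ≤ 1) : cl t = t := by
  unfold cl; rw [min_eq_right h', max_eq_right h]

lemma CH.mk' {q : Z → V} {b : X → V} {ε : ℝ} {f g : X → Z} (H : X × ℝ → Z) (hH : Continuous H)
    (h0 : ∀ x, H (x, 0) = f x) (h1 : ∀ x, H (x, 1) = g x)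
    (hc : ∀ x t, 0 ≤ t → t ≤ 1 → dist (q (H (x, t))) (b x) < ε) : CH q b ε f g := by
  refine ⟨fun z => H (z.1, cl z.2), by fun_prop, ?_, ?_, ?_⟩
  · intro x t ht; simp [cl_of_le ht, h0]
  · intro x t ht; simp [cl_of_ge ht, h1]
  · intro x t; exact hc _ _ (cl_nonneg _) (cl_le _)

variable {q : Z → V} {b : X → V} {ε η : ℝ} {f g h : X → Z}

lemma CH.cont_left (H : CH q b ε f g) : Continuous f := by
  obtain ⟨H, hH, h0, h1, hc⟩ := H
  have : f = fun x => H (x, 0) := by ext x; rw [h0 _ _ le_rfl]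
  rw [this]; fun_prop
lemma CH.cont_right (H : CH q b ε f g) : Continuous g := by
  obtain ⟨H, hH, h0, h1, hc⟩ := H
  have : g = fun x => H (x, 1) := by ext x; rw [h1 _ _ le_rfl]
  rw [this]; fun_prop
lemma CH.dist_left (H : CH q b ε f g) (x : X) : dist (q (f x)) (b x) < ε := by
  obtain ⟨H, hH, h0, h1, hc⟩ := H
  rw [← h0 x 0 le_rfl]; exact hc _ _
lemma CH.dist_right (H : CH q b ε f g) (x : X) : dist (q (g x)) (b x) < ε := by
  obtain ⟨H, hH, h0, h1, hc⟩ := H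
  rw [← h1 x 1 le_rfl]; exact hc _ _

lemma CH.mono (H : CH q b ε f g) (h : ε ≤ η) : CH q b η f g := by
  obtain ⟨H, hH, h0, h1, hc⟩ := H
  exact ⟨H, hH, h0, h1, fun x t => (hc x t).trans_le h⟩

lemma CH.symm (H : CH q b ε f g) : CH q b ε g f := by
  obtain ⟨H, hH, h0, h1, hc⟩ := H
  exact ⟨fun z => H (z.1, 1 - z.2), by fun_prop, fun x t ht => h1 _ _ (by simp; linarith),
    fun x t ht => h0 _ _ (by simp; linarith), fun x t => hc _ _⟩

lemma CH.trans (H : CH q b ε f g) (K : CH q b ε g h) : CH q b ε f h := by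
  obtain ⟨H, hH, h0, h1, hc⟩ := H
  obtain ⟨K, hK, k0, k1, kc⟩ := K
  refine ⟨fun z => if z.2 ≤ 1/2 then H (z.1, 2 * z.2) else K (z.1, 2 * z.2 - 1), ?_, ?_, ?_, ?_⟩
  · refine Continuous.if_le (by fun_prop) (by fun_prop) (by fun_prop) (by fun_prop) ?_
    intro z hz
    rw [h1 _ _ (by linarith), k0 _ _ (by linarith)]
  · intro x t ht
    dsimp only
    rw [if_pos (by linarith), h0 _ _ (by linarith)]
  · intro x t ht
    dsimp only
    rw [if_neg (by linarith), k1 _ _ (by linarith)]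
  · intro x t
    dsimp only
    split_ifs
    · exact hc _ _
    · exact kc _ _

lemma CH.precomp (H : CH q b ε f g) {m : Y → X} (hm : Continuous m) :
    CH q (fun y => b (m y)) ε (fun y => f (m y)) (fun y => g (m y)) := by
  obtain ⟨H, hH, h0, h1, hc⟩ := H
  exact ⟨fun z => H (m z.1, z.2), by fun_prop, fun x t ht => h0 _ _ ht,
    fun x t ht => h1 _ _ ht, fun x t => hc _ _⟩

lemma CH.postcomp (H : CH q b ε f g) {m : Z → W} (hm : Continuous m) {q' : W → V}
    (hq : ∀ z, dist (q' (m z)) (q z) ≤ η) :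
    CH q' b (ε + η) (fun y => m (f y)) (fun y => m (g y)) := by
  obtain ⟨H, hH, h0, h1, hc⟩ := H
  refine ⟨fun z => m (H z), by fun_prop, fun x t ht => by simp [h0 _ _ ht],
    fun x t ht => by simp [h1 _ _ ht], fun x t => ?_⟩
  have := dist_triangle (q' (m (H (x,t)))) (q (H (x,t))) (b x)
  linarith [hc x t, hq (H (x,t))]

lemma CH.rebase (H : CH q b ε f g) {b' : X → V} (hb : ∀ x, dist (b x) (b' x) ≤ η) :
    CH q b' (ε + η) f g := by
  obtain ⟨H, hH, h0, h1, hc⟩ := H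
  refine ⟨H, hH, h0, h1, fun x t => ?_⟩
  have := dist_triangle (q (H (x,t))) (b x) (b' x)
  linarith [hc x t, hb x]

/-- controlled equivalence -/
def CE (qX : X → V) (qE : E → V) (φ : X → E) : Prop :=
  Continuous φ ∧ (∀ x, qE (φ x) = qX x) ∧ ∀ ε > 0, ∃ ψ : E → X, Continuous ψ ∧
    CH qX qX ε (fun x => x) (fun x => ψ (φ x)) ∧ CH qE qE ε (fun e => e) (fun e => φ (ψ e))

lemma CE.of_homeo (e : X ≃ₜ E) {qX : X → V} {qE : E → V} (h : ∀ x, qE (e x) = qX x) :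
    CE qX qE e := by
  refine ⟨e.continuous, h, fun ε hε => ⟨e.symm, e.symm.continuous, ?_, ?_⟩⟩
  · exact CH.mk' (fun z => z.1) (by fun_prop) (by simp) (by simp) (by simp [hε])
  · exact CH.mk' (fun z => z.1) (by fun_prop) (by simp) (by simp) (by simp [hε])

lemma CE.comp {qX : X → V} {qY : Y → V} {qE : E → V} {β : Y → E} {α : X → Y}
    (hβ : CE qY qE β) (hα : CE qX qY α) : CE qX qE (fun x => β (α x)) := by
  obtain ⟨cβ, sβ, hβ⟩ := hβ
  obtain ⟨cα, sα, hα⟩ := hα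
  refine ⟨cβ.comp cα, fun x => by rw [sβ, sα], fun ε hε => ?_⟩
  obtain ⟨ψ, cψ, Gα, Kα⟩ := hα (ε/3) (by linarith)
  obtain ⟨χ, cχ, Gβ, Kβ⟩ := hβ (ε/3) (by linarith)
  have dψ : ∀ y, dist (qX (ψ y)) (qY y) ≤ ε/3 := fun y => by
    have := Kα.dist_right y
    rw [sα] at this; exact this.le
  have dχ : ∀ y, dist (qY (χ y)) (qE y) ≤ ε/3 := fun y => by
    have := Kβ.dist_right y
    rw [sβ] at this; exact this.le
  refine ⟨fun e => ψ (χ e), cψ.comp cχ, ?_, ?_⟩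
  · refine CH.trans (Gα.mono (by linarith)) ?_
    have := (Gβ.precomp cα).postcomp cψ dψ
    simp only [sα] at this
    exact this.mono (by linarith)
  · refine CH.trans (Kβ.mono (by linarith)) ?_
    have := ((Kα.precomp cχ).postcomp cβ (q' := qE) (η := 0) (by simp [sβ])).rebase dχ
    exact this.mono (by linarith)

lemma CE.of_comp {qX : X → V} {qY : Y → V} {qE : E → V} {β : Y → E} {α : X → Y}
    (hα : CE qX qY α) (cβ : Continuous β) (sβ : ∀ y, qE (β y) = qY y)
    (hβα : CE qX qE (fun x => β (α x))) : CE qY qE β := by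
  obtain ⟨cα, sα, hα⟩ := hα
  obtain ⟨-, s, h⟩ := hβα
  refine ⟨cβ, sβ, fun ε hε => ?_⟩
  obtain ⟨ψ, cψ, Gα, Kα⟩ := hα (ε/4) (by linarith)
  obtain ⟨χ, cχ, Gβ, Kβ⟩ := h (ε/4) (by linarith)
  have dψ : ∀ y, dist (qX (ψ y)) (qY y) ≤ ε/4 := fun y => by
    have := Kα.dist_right y
    rw [sα] at this; exact this.le
  have dχ : ∀ y, dist (qX (χ y)) (qE y) ≤ ε/4 := fun y => by
    have := Kβ.dist_right y
    rw [s] at this; exact this.le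
  refine ⟨fun e => α (χ e), cα.comp cχ, ?_, Kβ.mono (by linarith)⟩
  have h1 := ((Gβ.precomp cψ).postcomp cα (q' := qY) (η := 0) (by simp [sα])).rebase dψ
  have h2 := (Kα.symm.postcomp (cχ.comp cβ) (q' := qX) (η := ε/4) 
    (fun y => by simpa [sβ] using dχ (β y))).postcomp cα (q' := qY) (η := 0) (by simp [sα])
  exact (Kα.mono (by linarith)).trans ((h1.mono (by linarith)).trans (h2.mono (by linarith)))

lemma CE.congr {qX : X → V} {qE : E → V} {φ φ' : X → E} (hφ : CE qX qE φ)
    (s : ∀ x, qE (φ' x) = qX x)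
    (h : ∀ η > 0, CH qE qX η φ φ') : CE qX qE φ' := by
  obtain ⟨c, s', hφ⟩ := hφ
  refine ⟨(h 1 one_pos).cont_right, s, fun ε hε => ?_⟩
  obtain ⟨ψ, cψ, G, K⟩ := hφ (ε/3) (by linarith)
  have dψ : ∀ y, dist (qX (ψ y)) (qE y) ≤ ε/3 := fun y => by
    have := K.dist_right y
    rw [s'] at this; exact this.le
  refine ⟨ψ, cψ, ?_, ?_⟩
  · exact (G.mono (by linarith)).trans (((h (ε/3) (by linarith)).postcomp cψ dψ).mono (by linarith))
  · exact (K.mono (by linarith)).trans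
      ((((h (ε/3) (by linarith)).precomp cψ).rebase dψ).mono (by linarith))

/-- coherent controlled inverse data -/
structure CCE (qX : X → V) (qE : E → V) (φ : X → E) (ε : ℝ) (ψ : E → X) (G : X × ℝ → X)
    (K : E × ℝ → E) (Φ : X × ℝ × ℝ → E) : Prop where
  cψ : Continuous ψ
  cG : Continuous G
  cK : Continuous K
  cΦ : Continuous Φ
  G0 : ∀ x t, t ≤ 0 → G (x, t) = x
  G1 : ∀ x t, 1 ≤ t → G (x, t) = ψ (φ x)
  K0 : ∀ x t, t ≤ 0 → K (x, t) = x
  K1 : ∀ x t, 1 ≤ t → K (x, t) = φ (ψ x)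
  Φ0 : ∀ x t r, r ≤ 0 → Φ (x, t, r) = φ (G (x, t))
  Φ1 : ∀ x t r, 1 ≤ r → Φ (x, t, r) = K (φ x, t)
  Φs : ∀ x t r, t ≤ 0 → Φ (x, t, r) = φ x
  Φe : ∀ x t r, 1 ≤ t → Φ (x, t, r) = φ (ψ (φ x))
  dG : ∀ x t, dist (qX (G (x, t))) (qX x) < ε
  dK : ∀ x t, dist (qE (K (x, t))) (qE x) < ε
  dΦ : ∀ x t r, dist (qE (Φ (x, t, r))) (qX x) < ε

lemma CCE.dψ {qX : X → V} {qE : E → V} {φ : X → E} {ψ G K Φ} (h : CCE qX qE φ ε ψ G K Φ)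
    (s : ∀ x, qE (φ x) = qX x) (e : E) : dist (qX (ψ e)) (qE e) < ε := by
  have := h.dK e 1
  rwa [h.K1 _ _ le_rfl, s] at this

lemma CE.coherent {qX : X → V} {qE : E → V} {φ : X → E} (hφ : CE qX qE φ) {ε : ℝ} (hε : 0 < ε) :
    ∃ ψ G K Φ, CCE qX qE φ ε ψ G K Φ := by
  obtain ⟨cφ, s, h⟩ := hφ
  obtain ⟨ψ, cψ, ⟨G, cG, G0, G1, dG⟩, ⟨K, cK, K0, K1, dK⟩⟩ := h (ε/4) (by linarith)
  have dψ : ∀ y, dist (qX (ψ y)) (qE y) < ε/4 := fun y => by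
    have := dK y 1
    rwa [K1 _ _ le_rfl, s] at this
  have dφψ : ∀ x, dist (qX (ψ (φ x))) (qX x) < ε/4 := fun x => by
    have := dψ (φ x)
    rwa [s] at this
  have dGG : ∀ x t t', dist (qX (G (G (x, t), t'))) (qX x) < ε := fun x t t' => by
    have := dist_triangle (qX (G (G (x, t), t'))) (qX (G (x,t))) (qX x)
    linarith [dG x t, dG (G (x,t)) t']
  have dKφ : ∀ x t, dist (qE (K (φ x, t))) (qX x) < ε/4 := fun x t => by
    have := dK (φ x) t
    rwa [s] at this
  have dKG : ∀ x t t', dist (qE (K (φ (G (x, t)), t'))) (qX x) < ε := fun x t t' => by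
    have := dist_triangle (qE (K (φ (G (x, t)), t'))) (qX (G (x,t))) (qX x)
    linarith [dG x t, dKφ (G (x,t)) t']
  let tent : ℝ → ℝ := fun t => max 0 (min (6 * t - 2) (4 - 6 * t))
  have ctent : Continuous tent := by fun_prop
  let A : X × ℝ × ℝ → E := fun z =>
    K (φ (G (z.1, 6 * z.2.1 - 3)), z.2.2 * min (3 * z.2.1) (3 - 3 * z.2.1))
  let B : X × ℝ × ℝ → E := fun z => if z.2.1 ≤ 1/3 then K (φ z.1, 3 * z.2.1) else
    if z.2.1 ≤ 2/3 then φ (G (G (z.1, 6 * z.2.1 - 3), 1 - z.2.2 * tent z.2.1)) else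
      K (φ (ψ (φ z.1)), 3 - 3 * z.2.1)
  let C : X × ℝ × ℝ → E := fun z => if z.2.1 ≤ 1/3 then K (φ z.1, 3 * z.2.1) else
    if z.2.1 ≤ 2/3 then φ (G (G (z.1, 1 - (1 - z.2.2) * tent z.2.1), 6 * z.2.1 - 3)) else
      K (φ (ψ (φ z.1)), 3 - 3 * z.2.1)
  have t1 : tent (1/3) = 0 := by simp only [tent]; norm_num
  have t2 : tent (2/3) = 0 := by simp only [tent]; norm_num
  have cA : Continuous A := by fun_prop
  have cB : Continuous B := by
    refine Continuous.if_le (by fun_prop) (Continuous.if_le (by fun_prop) (by fun_prop)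
      (by fun_prop) (by fun_prop) ?_) (by fun_prop) (by fun_prop) ?_
    · rintro ⟨x, t, r⟩ (rfl : t = _)
      simp only [t2]
      rw [G1 _ _ (by norm_num), G1 _ _ (by norm_num), K1 _ _ (by norm_num)]
    · rintro ⟨x, t, r⟩ (rfl : t = _)
      rw [if_pos (by norm_num)]
      simp only [t1]
      rw [G1 _ _ (by norm_num), G0 _ _ (by norm_num), K1 _ _ (by norm_num)]
  have cC : Continuous C := by
    refine Continuous.if_le (by fun_prop) (Continuous.if_le (by fun_prop) (by fun_prop)
      (by fun_prop) (by fun_prop) ?_) (by fun_prop) (by fun_prop) ?_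
    · rintro ⟨x, t, r⟩ (rfl : t = _)
      simp only [t2]
      rw [G1 _ _ (by norm_num), G1 _ _ (by norm_num), K1 _ _ (by norm_num)]
    · rintro ⟨x, t, r⟩ (rfl : t = _)
      rw [if_pos (by norm_num)]
      simp only [t1]
      rw [G0 _ _ (by norm_num), G1 _ _ (by norm_num), K1 _ _ (by norm_num)]
  have AB : ∀ x t, A (x, t, 1) = B (x, t, 0) := by
    intro x t
    simp only [A, B]
    split_ifs with h1 h2
    · rw [G0 _ _ (by linarith), one_mul, min_eq_left (by linarith)]
    · rw [G1 (G _) _ (by simp), K1 _ _ (by simp; constructor <;> linarith)]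
    · rw [G1 _ _ (by linarith), one_mul, min_eq_right (by linarith)]
  have BC : ∀ x t, B (x, t, 1) = C (x, t, 0) := by
    intro x t
    simp only [B, C]
    split_ifs with h1 h2
    · rfl
    · congr 1
      rcases le_total t (1/2) with h | h
      · have : tent t = 6 * t - 2 := by
          simp only [tent]; rw [min_eq_left (by linarith), max_eq_right (by linarith)]
        rw [this, G0 x (6 * t - 3) (by linarith), G0 _ (6 * t - 3) (by linarith)]
        congr 2; ring
      · have : tent t = 4 - 6 * t := by
          simp only [tent]; rw [min_eq_right (by linarith), max_eq_right (by linarith)]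
        rw [this]
        ring_nf
    · rfl
  refine ⟨ψ, fun z => G (z.1, 6 * z.2 - 3), fun z => if z.2 ≤ 1/3 then K (z.1, 3 * z.2) else
    if z.2 ≤ 2/3 then φ (G (ψ z.1, 6 * z.2 - 3)) else K (φ (ψ z.1), 3 - 3 * z.2),
    fun z => if z.2.2 ≤ 1/3 then A (z.1, z.2.1, cl (3 * z.2.2)) else
      if z.2.2 ≤ 2/3 then B (z.1, z.2.1, 3 * z.2.2 - 1) else C (z.1, z.2.1, cl (3 * z.2.2 - 2)),
      ?_⟩
  constructor
  · exact cψ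
  · fun_prop
  · refine Continuous.if_le (by fun_prop) (Continuous.if_le (by fun_prop) (by fun_prop)
      (by fun_prop) (by fun_prop) ?_) (by fun_prop) (by fun_prop) ?_
    · rintro ⟨x, t⟩ (rfl : t = _)
      dsimp only
      rw [G1 _ _ (by norm_num), K1 _ _ (by norm_num)]
    · rintro ⟨x, t⟩ (rfl : t = _)
      rw [if_pos (by norm_num)]
      dsimp only
      rw [G0 _ _ (by norm_num), K1 _ _ (by norm_num)]
  · refine Continuous.if_le (by fun_prop) (Continuous.if_le (by fun_prop) (by fun_prop)
      (by fun_prop) (by fun_prop) ?_) (by fun_prop) (by fun_prop) ?_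
    · rintro ⟨x, t, r⟩ (rfl : r = _)
      dsimp only
      rw [cl_of_le (by norm_num), ← BC]; norm_num
    · rintro ⟨x, t, r⟩ (rfl : r = _)
      rw [if_pos (by norm_num)]
      dsimp only
      rw [cl_of_ge (by norm_num), AB]; norm_num
  · intro x t ht; exact G0 _ _ (by simp; linarith)
  · intro x t ht; exact G1 _ _ (by simp; linarith)
  · intro x t ht; dsimp only; rw [if_pos (by linarith)]; exact K0 _ _ (by linarith)
  · intro x t ht
    dsimp only
    rw [if_neg (by linarith), if_neg (by linarith)]; exact K0 _ _ (by linarith)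
  · intro x t r hr
    dsimp only
    rw [if_pos (by linarith), cl_of_le (by linarith)]
    simp only [A]
    rw [K0 _ _ (by simp)]
  · intro x t r hr
    dsimp only
    rw [if_neg (by linarith), if_neg (by linarith), cl_of_ge (by linarith)]
    simp only [C, sub_self, zero_mul, sub_zero]
    rw [G1 x 1 le_rfl]
  · intro x t r hr
    dsimp only
    split_ifs
    · simp only [A]
      rw [K0, G0 _ _ (by linarith)]
      exact mul_nonpos_of_nonneg_of_nonpos (cl_nonneg _) ((min_le_left _ _).trans (by linarith))
    · simp only [B]; rw [if_pos (by linarith)]; exact K0 _ _ (by linarith)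
    · simp only [C]; rw [if_pos (by linarith)]; exact K0 _ _ (by linarith)
  · intro x t r hr
    dsimp only
    split_ifs
    · simp only [A]
      rw [K0, G1 _ _ (by linarith)]
      exact mul_nonpos_of_nonneg_of_nonpos (cl_nonneg _) ((min_le_right _ _).trans (by linarith))
    · simp only [B]; rw [if_neg (by linarith), if_neg (by linarith)]; exact K0 _ _ (by linarith)
    · simp only [C]; rw [if_neg (by linarith), if_neg (by linarith)]; exact K0 _ _ (by linarith)
  · intro x t; exact (dG _ _).trans (by linarith)
  · intro x t
    dsimp only
    split_ifs
    · exact (dK _ _).trans (by linarith)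
    · rw [s]
      have := dist_triangle (qX (G (ψ x, 6 * t - 3))) (qX (ψ x)) (qE x)
      linarith [dG (ψ x) (6 * t - 3), dψ x]
    · have := dist_triangle (qE (K (φ (ψ x), 3 - 3 * t))) (qX (ψ x)) (qE x)
      linarith [dKφ (ψ x) (3 - 3 * t), dψ x]
  · have dKψ : ∀ x t, dist (qE (K (φ (ψ (φ x)), t))) (qX x) < ε := fun x t => by
      have := dist_triangle (qE (K (φ (ψ (φ x)), t))) (qX (ψ (φ x))) (qX x)
      linarith [dKφ (ψ (φ x)) t, dφψ x]
    intro x t r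
    dsimp only
    split_ifs
    · exact dKG _ _ _
    · simp only [B]
      split_ifs
      · exact (dKφ _ _).trans (by linarith)
      · rw [s]; exact dGG _ _ _
      · exact dKψ _ _
    · simp only [C]
      split_ifs
      · exact (dKφ _ _).trans (by linarith)
      · rw [s]; exact dGG _ _ _
      · exact dKψ _ _

end Calc

section DMC
variable {V A M L A' Z : Type} [TopologicalSpace A] [TopologicalSpace M] [TopologicalSpace L]
  [TopologicalSpace A'] [TopologicalSpace Z]

inductive dmcRel (i : M → A) (j : M → L) : A ⊕ (M × ℝ) ⊕ L → A ⊕ (M × ℝ) ⊕ L → Prop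
  | top (m : M) (s : ℝ) (h : 1 ≤ s) : dmcRel i j (Sum.inr (Sum.inl (m, s))) (Sum.inl (i m))
  | bot (m : M) (s : ℝ) (h : s ≤ 0) :
      dmcRel i j (Sum.inr (Sum.inl (m, s))) (Sum.inr (Sum.inr (j m)))

/-- double mapping cylinder -/
def dmc (i : M → A) (j : M → L) : Type := Quot (dmcRel i j)

instance (i : M → A) (j : M → L) : TopologicalSpace (dmc i j) :=
  inferInstanceAs (TopologicalSpace (Quot (dmcRel i j)))

namespace dmc
variable {i : M → A} {j : M → L}

def inA (i : M → A) (j : M → L) (a : A) : dmc i j := Quot.mk _ (Sum.inl a)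
def inM (i : M → A) (j : M → L) (m : M) (s : ℝ) : dmc i j := Quot.mk _ (Sum.inr (Sum.inl (m, s)))
def inL (i : M → A) (j : M → L) (l : L) : dmc i j := Quot.mk _ (Sum.inr (Sum.inr l))

@[fun_prop] lemma cont_inA : Continuous (inA i j) := continuous_quot_mk.comp continuous_inl
@[fun_prop] lemma cont_inL : Continuous (inL i j) :=
  continuous_quot_mk.comp (continuous_inr.comp continuous_inr)
@[fun_prop] lemma cont_inM {f : Z → M} {g : Z → ℝ} (hf : Continuous f) (hg : Continuous g) :
    Continuous (fun z => inM i j (f z) (g z)) :=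
  continuous_quot_mk.comp (continuous_inr.comp (continuous_inl.comp (hf.prodMk hg)))

lemma inM_top (m : M) {s : ℝ} (h : 1 ≤ s) : inM i j m s = inA i j (i m) :=
  Quot.sound (dmcRel.top m s h)
lemma inM_bot (m : M) {s : ℝ} (h : s ≤ 0) : inM i j m s = inL i j (j m) :=
  Quot.sound (dmcRel.bot m s h)

lemma inM_cl (m : M) (s : ℝ) : inM i j m (cl s) = inM i j m s := by
  rcases le_total s 0 with h | h
  · rw [cl_of_le h, inM_bot m h, inM_bot m le_rfl]
  rcases le_total s 1 with h' | h'
  · rw [cl_of_mem h h']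
  · rw [cl_of_ge h', inM_top m h', inM_top m le_rfl]

lemma ind {P : dmc i j → Prop} (hA : ∀ a, P (inA i j a))
    (hM : ∀ m s, 0 ≤ s → s ≤ 1 → P (inM i j m s)) (hL : ∀ l, P (inL i j l)) (z) : P z := by
  induction z using Quot.ind with
  | mk z =>
    rcases z with a | ⟨m, s⟩ | l
    · exact hA a
    · have := hM m (cl s) (cl_nonneg _) (cl_le _)
      rwa [inM_cl] at this
    · exact hL l

def lift (fA : A → Z) (fM : M × ℝ → Z) (fL : L → Z) (h1 : ∀ m, fM (m, 1) = fA (i m))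
    (h0 : ∀ m, fM (m, 0) = fL (j m)) : dmc i j → Z :=
  Quot.lift (Sum.elim fA (Sum.elim (fun z => fM (z.1, cl z.2)) fL)) (by
    rintro _ _ (⟨m, s, h⟩ | ⟨m, s, h⟩)
    · simp [cl_of_ge h, h1]
    · simp [cl_of_le h, h0])

section
variable {fA : A → Z} {fM : M × ℝ → Z} {fL : L → Z} {h1 : ∀ m, fM (m, 1) = fA (i m)}
  {h0 : ∀ m, fM (m, 0) = fL (j m)}
@[simp] lemma lift_inA (a : A) : lift fA fM fL h1 h0 (inA i j a) = fA a := rfl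
@[simp] lemma lift_inL (a : L) : lift fA fM fL h1 h0 (inL i j a) = fL a := rfl
lemma lift_inM' (m : M) (s : ℝ) : lift fA fM fL h1 h0 (inM i j m s) = fM (m, cl s) := rfl
lemma lift_inM (m : M) {s : ℝ} (hs : 0 ≤ s) (hs' : s ≤ 1) :
    lift fA fM fL h1 h0 (inM i j m s) = fM (m, s) := by
  rw [lift_inM', cl_of_mem hs hs']
lemma cont_lift (cA : Continuous fA) (cM : Continuous fM) (cL : Continuous fL) :
    Continuous (lift (i := i) (j := j) fA fM fL h1 h0) := by
  refine continuous_quot_lift _ ?_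
  refine continuous_sum_dom.2 ⟨cA, continuous_sum_dom.2 ⟨?_, cL⟩⟩
  show Continuous (fun z : M × ℝ => fM (z.1, cl z.2))
  fun_prop
end

lemma liftH (FA : A × ℝ → Z) (FM : M × ℝ × ℝ → Z) (FL : L × ℝ → Z)
    (cA : Continuous FA) (cM : Continuous FM) (cL : Continuous FL)
    (h1 : ∀ m t, 0 ≤ t → t ≤ 1 → FM (m, 1, t) = FA (i m, t))
    (h0 : ∀ m t, 0 ≤ t → t ≤ 1 → FM (m, 0, t) = FL (j m, t)) :
    ∃ F : dmc i j × ℝ → Z, Continuous F ∧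
      (∀ a t, 0 ≤ t → t ≤ 1 → F (inA i j a, t) = FA (a, t)) ∧
      (∀ m s t, 0 ≤ s → s ≤ 1 → 0 ≤ t → t ≤ 1 → F (inM i j m s, t) = FM (m, s, t)) ∧
      (∀ a t, 0 ≤ t → t ≤ 1 → F (inL i j a, t) = FL (a, t)) := by
  let gA : C(A, C(ℝ, Z)) := ContinuousMap.curry ⟨fun z : A × ℝ => FA (z.1, cl z.2), by fun_prop⟩
  let gL : C(L, C(ℝ, Z)) := ContinuousMap.curry ⟨fun z : L × ℝ => FL (z.1, cl z.2), by fun_prop⟩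
  let gM : C(M × ℝ, C(ℝ, Z)) :=
    ContinuousMap.curry ⟨fun z : (M × ℝ) × ℝ => FM (z.1.1, z.1.2, cl z.2), by fun_prop⟩
  have e1 : ∀ m, gM (m, 1) = gA (i m) := fun m => by
    ext t; exact h1 _ _ (cl_nonneg _) (cl_le _)
  have e0 : ∀ m, gM (m, 0) = gL (j m) := fun m => by
    ext t; exact h0 _ _ (cl_nonneg _) (cl_le _)
  have c := cont_lift (i := i) (j := j) (h1 := e1) (h0 := e0) gA.continuous gM.continuous
    gL.continuous
  refine ⟨fun z => lift (i := i) (j := j) gA gM gL e1 e0 z.1 z.2, ?_, ?_, ?_, ?_⟩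
  · fun_prop
  · intro a t ht ht'
    show FA (a, cl t) = _
    rw [cl_of_mem ht ht']
  · intro m s t hs hs' ht ht'
    show FM (m, cl s, cl t) = _
    rw [cl_of_mem ht ht', cl_of_mem hs hs']
  · intro a t ht ht'
    show FL (a, cl t) = _
    rw [cl_of_mem ht ht']

variable [PseudoMetricSpace V]

lemma ch {q : Z → V} {b : dmc i j → V} {ε : ℝ} {f g : dmc i j → Z}
    (FA : A × ℝ → Z) (FM : M × ℝ × ℝ → Z) (FL : L × ℝ → Z)
    (cA : Continuous FA) (cM : Continuous FM) (cL : Continuous FL)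
    (h1 : ∀ m t, 0 ≤ t → t ≤ 1 → FM (m, 1, t) = FA (i m, t))
    (h0 : ∀ m t, 0 ≤ t → t ≤ 1 → FM (m, 0, t) = FL (j m, t))
    (fA : ∀ a, FA (a, 0) = f (inA i j a))
    (fM : ∀ m s, 0 ≤ s → s ≤ 1 → FM (m, s, 0) = f (inM i j m s))
    (fL : ∀ a, FL (a, 0) = f (inL i j a))
    (gA : ∀ a, FA (a, 1) = g (inA i j a))
    (gM : ∀ m s, 0 ≤ s → s ≤ 1 → FM (m, s, 1) = g (inM i j m s))
    (gL : ∀ a, FL (a, 1) = g (inL i j a))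
    (dA : ∀ a t, 0 ≤ t → t ≤ 1 → dist (q (FA (a, t))) (b (inA i j a)) < ε)
    (dM : ∀ m s t, 0 ≤ s → s ≤ 1 → 0 ≤ t → t ≤ 1 →
      dist (q (FM (m, s, t))) (b (inM i j m s)) < ε)
    (dL : ∀ a t, 0 ≤ t → t ≤ 1 → dist (q (FL (a, t))) (b (inL i j a)) < ε) :
    CH q b ε f g := by
  obtain ⟨F, cF, eA, eM, eL⟩ := liftH FA FM FL cA cM cL h1 h0
  refine CH.mk' F cF ?_ ?_ ?_
  · intro z
    induction z using ind with
    | hA a => rw [eA _ _ le_rfl zero_le_one, fA]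
    | hM m s hs hs' => rw [eM _ _ _ hs hs' le_rfl zero_le_one, fM _ _ hs hs']
    | hL a => rw [eL _ _ le_rfl zero_le_one, fL]
  · intro z
    induction z using ind with
    | hA a => rw [eA _ _ zero_le_one le_rfl, gA]
    | hM m s hs hs' => rw [eM _ _ _ hs hs' zero_le_one le_rfl, gM _ _ hs hs']
    | hL a => rw [eL _ _ zero_le_one le_rfl, gL]
  · intro z t ht ht'
    induction z using ind with
    | hA a => rw [eA _ _ ht ht']; exact dA _ _ ht ht'
    | hM m s hs hs' => rw [eM _ _ _ hs hs' ht ht']; exact dM _ _ _ hs hs' ht ht'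
    | hL a => rw [eL _ _ ht ht']; exact dL _ _ ht ht'

/-- change of the A-end -/
def mapA (φ : A → A') : dmc i j → dmc (fun m => φ (i m)) j :=
  lift (fun a => inA _ _ (φ a)) (fun z => inM _ _ z.1 z.2) (fun l => inL _ _ l)
    (fun m => inM_top m le_rfl) (fun m => inM_bot m le_rfl)

lemma mapA_inM (φ : A → A') (m : M) (s : ℝ) :
  mapA (i := i) (j := j) φ (inM i j m s) = inM _ _ m s := inM_cl _ _

lemma endChange (ci : Continuous i) (cj : Continuous j) {φ : A → A'}
    (q : dmc (fun m => φ (i m)) j → V)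
    (hφ : CE (fun a => q (inA _ _ (φ a))) (fun a => q (inA _ _ a)) φ)
    (hq : ∀ ε > 0, ∃ δ > 0, ∀ m s s', |s - s'| ≤ δ → dist (q (inM _ _ m s)) (q (inM _ _ m s')) < ε) :
    CE (fun z => q (mapA (i := i) (j := j) φ z)) q (mapA φ) := by
  have cφ := hφ.1
  have cm : Continuous (mapA (i := i) (j := j) φ) :=
    cont_lift (by fun_prop) (by fun_prop) (by fun_prop)
  refine ⟨cm, fun x => rfl, fun ε hε => ?_⟩
  obtain ⟨ψ, G, K, Φ, H⟩ := hφ.coherent (half_pos hε)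
  obtain ⟨δ, hδ, hδ'⟩ := hq (ε/2) (half_pos hε)
  have dgen : ∀ (P : dmc (fun m => φ (i m)) j) m s, 0 ≤ s → 1 - s ≤ δ → s ≤ 1 →
      dist (q P) (q (inA _ _ (φ (i m)))) < ε/2 → dist (q P) (q (inM _ _ m s)) < ε := by
    intro P m s hs0 hs hs1 h
    have h2 := hδ' m 1 s (by rw [abs_of_nonneg (by linarith)]; exact hs)
    rw [inM_top m le_rfl] at h2
    linarith [dist_triangle (q P) (q (inA _ _ (φ (i m)))) (q (inM _ _ m s))]
  have mulb : ∀ s t, 0 ≤ s → s ≤ 1 → 0 ≤ t → t ≤ 1 → s ≤ s * (1 + δ * t) ∧ 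
      s * (1 + δ * t) ≤ s + δ := by
    intro s t hs hs' ht ht'
    constructor
    · nlinarith [mul_nonneg hs (mul_nonneg hδ.le ht)]
    · have h1 : s * t ≤ 1 := by nlinarith
      nlinarith
  obtain ⟨cψ, cG, cK, cΦ, G0, G1, K0, K1, Φ0, Φ1, Φs, Φe, dG, dK, dΦ⟩ := H
  let Γ : M × ℝ → dmc i j := fun z =>
    if z.2 ≤ 1 then inM i j z.1 z.2 else inA i j (G (i z.1, (z.2 - 1)/δ))
  have cΓ : Continuous Γ := by
    refine Continuous.if_le (by fun_prop) (by fun_prop) (by fun_prop) (by fun_prop) ?_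
    rintro ⟨m, u⟩ (rfl : u = _)
    rw [inM_top _ le_rfl, G0 _ _ (by simp)]
  have Γtop : ∀ m t, 0 ≤ t → Γ (m, 1 + δ * t) = inA i j (G (i m, t)) := by
    intro m t ht
    simp only [Γ]
    split_ifs with h
    · have : t = 0 := by nlinarith
      subst this
      rw [inM_top _ (by simp), G0 _ _ le_rfl]
    · congr 3; field_simp; ring
  let Γ' : M × ℝ → dmc (fun m => φ (i m)) j := fun z =>
    if z.2 ≤ 1 then inM _ _ z.1 z.2 else inA _ _ (K (φ (i z.1), (z.2 - 1)/δ))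
  have cΓ' : Continuous Γ' := by
    refine Continuous.if_le (by fun_prop) (by fun_prop) (by fun_prop) (by fun_prop) ?_
    rintro ⟨m, u⟩ (rfl : u = _)
    rw [inM_top _ le_rfl, K0 _ _ (by simp)]
  have Γ'top : ∀ m t, 0 ≤ t → Γ' (m, 1 + δ * t) = inA _ _ (K (φ (i m), t)) := by
    intro m t ht
    simp only [Γ']
    split_ifs with h
    · have : t = 0 := by nlinarith
      subst this
      rw [inM_top _ (by simp), K0 _ _ le_rfl]
    · congr 3; field_simp; ring
  have e1 : ∀ m, Γ (m, 1 * (1 + δ)) = inA i j (ψ (φ (i m))) := fun m => by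
    have := Γtop m 1 zero_le_one
    rw [G1 _ _ le_rfl] at this; simpa using this
  have e0 : ∀ m, Γ (m, 0 * (1 + δ)) = inL i j (j m) := fun m => by
    simp only [Γ, zero_mul]
    rw [if_pos (by norm_num), inM_bot _ le_rfl]
  have e1' : ∀ m, Γ' (m, 1 * (1 + δ)) = inA _ _ (φ (ψ (φ (i m)))) := fun m => by
    have := Γ'top m 1 zero_le_one
    rw [K1 _ _ le_rfl] at this; simpa using this
  have e0' : ∀ m, Γ' (m, 0 * (1 + δ)) = inL _ _ (j m) := fun m => by
    simp only [Γ', zero_mul]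
    rw [if_pos (by norm_num), inM_bot _ le_rfl]
  let ψ' : dmc (fun m => φ (i m)) j → dmc i j :=
    lift (fun a => inA _ _ (ψ a)) (fun z => Γ (z.1, z.2 * (1 + δ))) (inL _ _) e1 e0
  let E1 : dmc (fun m => φ (i m)) j → dmc (fun m => φ (i m)) j :=
    lift (fun a => inA _ _ (φ (ψ a))) (fun z => Γ' (z.1, z.2 * (1 + δ))) (inL _ _) e1' e0'
  have cψ' : Continuous ψ' := cont_lift (by fun_prop) (by fun_prop) (by fun_prop)
  refine ⟨ψ', cψ', ?_, ?_⟩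
  · refine ch (fun z => inA _ _ (G z)) (fun z => Γ (z.1, z.2.1 * (1 + δ * z.2.2)))
      (fun z => inL _ _ z.1) (by fun_prop) (by fun_prop) (by fun_prop) ?_ ?_ ?_ ?_ ?_ ?_ ?_ ?_
      ?_ ?_ ?_
    · intro m t ht ht'; simp [Γtop m t ht]
    · intro m t ht ht'; simp [Γ, inM_bot m le_rfl]
    · intro a; simp [G0 a 0 le_rfl]
    · intro m s hs hs'; simp [Γ, hs']
    · intro a; rfl
    · intro a
      simp only [G1 a 1 le_rfl]; rfl
    · intro m s hs hs'
      rw [mapA_inM]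
      simp only [ψ', lift_inM m hs hs']; simp
    · intro a; rfl
    · intro a t ht ht'
      exact (dG a t).trans (by linarith)
    · intro m s t hs hs' ht ht'
      obtain ⟨b1, b2⟩ := mulb s t hs hs' ht ht'
      simp only [Γ]
      split_ifs with hu
      · rw [mapA_inM, mapA_inM]
        exact (hδ' _ _ _ (by rw [abs_of_nonneg] <;> linarith)).trans (by linarith)
      · rw [mapA_inM]
        exact dgen _ _ _ hs (by linarith) hs' (dG (i m) _)
    · intro l t _ _
      simpa using hε
  · have c1 : CH q q ε (fun z => z) E1 := by
      refine ch (fun z => inA _ _ (K z)) (fun z => Γ' (z.1, z.2.1 * (1 + δ * z.2.2)))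
        (fun z => inL _ _ z.1) (by fun_prop) (by fun_prop) (by fun_prop) ?_ ?_ ?_ ?_ ?_ ?_ ?_ ?_
        ?_ ?_ ?_
      · intro m t ht ht'; simp [Γ'top m t ht]
      · intro m t ht ht'; simp [Γ', inM_bot m le_rfl]
      · intro a; simp [K0 a 0 le_rfl]
      · intro m s hs hs'; simp [Γ', hs']
      · intro a; rfl
      · intro a
        simp only [K1 a 1 le_rfl]; rfl
      · intro m s hs hs'
        simp only [E1, lift_inM m hs hs']; simp
      · intro a; rfl
      · intro a t ht ht'
        exact (dK a t).trans (by linarith)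
      · intro m s t hs hs' ht ht'
        obtain ⟨b1, b2⟩ := mulb s t hs hs' ht ht'
        simp only [Γ']
        split_ifs with hu
        · exact (hδ' _ _ _ (by rw [abs_of_nonneg] <;> linarith)).trans (by linarith)
        · exact dgen _ _ _ hs (by linarith) hs' (dK _ _)
      · intro l t _ _
        simpa using hε
    refine c1.trans ?_
    let Ξ : M × ℝ × ℝ → dmc (fun m => φ (i m)) j := fun z =>
      if z.2.1 * (1 + δ) ≤ 1 then inM _ _ z.1 (z.2.1 * (1 + δ)) else
        inA _ _ (Φ (i z.1, (z.2.1 * (1 + δ) - 1)/δ, 1 - z.2.2))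
    have cΞ : Continuous Ξ := by
      refine Continuous.if_le (by fun_prop) (by fun_prop) (by fun_prop) (by fun_prop) ?_
      rintro ⟨m, u, t⟩ hu
      rw [inM_top _ (by simp [hu]), Φs _ _ _ (by simp [hu])]
    have hone : (1 * (1 + δ) - 1) / δ = 1 := by have := hδ.ne'; field_simp; ring
    refine ch (fun z => inA _ _ (φ (ψ z.1))) Ξ
        (fun z => inL _ _ z.1) (by fun_prop) (by fun_prop) (by fun_prop) ?_ ?_ ?_ ?_ ?_ ?_ ?_ ?_
        ?_ ?_ ?_
    · intro m t ht ht'; simp only [Ξ]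
      rw [if_neg (by linarith), hone, Φe _ _ _ le_rfl]
    · intro m t ht ht'; simp [Ξ, inM_bot m le_rfl]
    · intro a; rfl
    · intro m s hs hs'
      simp only [Ξ, E1, lift_inM m hs hs', Γ']
      rw [Φ1 _ _ _ (by norm_num)]
    · intro a; rfl
    · intro a; rfl
    · intro m s hs hs'
      simp only [Ξ, ψ', lift_inM m hs hs', Γ]
      rw [Φ0 _ _ _ (by norm_num)]
      split_ifs
      · rw [mapA_inM]
      · rfl
    · intro a; rfl
    · intro a t ht ht'
      have := dK a 1
      rw [K1 _ _ le_rfl] at this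
      exact this.trans (by linarith)
    · intro m s t hs hs' ht ht'
      obtain ⟨b1, b2⟩ := mulb s 1 hs hs' zero_le_one le_rfl
      rw [mul_one] at b1 b2
      simp only [Ξ]
      split_ifs with hu
      · exact (hδ' _ _ _ (by rw [abs_of_nonneg] <;> linarith)).trans (by linarith)
      · exact dgen _ _ _ hs (by linarith) hs' (dΦ _ _ _)
    · intro l t _ _
      simpa using hε

variable {X0 E0 : Type} [TopologicalSpace X0] [TopologicalSpace E0]

/-- change of the middle -/
def mapM (i : E0 → A) (j : E0 → L) (φ : X0 → E0) :
    dmc (fun m => i (φ m)) (fun m => j (φ m)) → dmc i j :=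
  lift (fun a => inA _ _ a) (fun z => inM _ _ (φ z.1) z.2) (fun l => inL _ _ l)
    (fun m => inM_top _ le_rfl) (fun m => inM_bot _ le_rfl)

lemma mapM_inM (i : E0 → A) (j : E0 → L) (φ : X0 → E0) (m : X0) (s : ℝ) :
  mapM i j φ (inM _ _ m s) = inM _ _ (φ m) s := inM_cl _ _

lemma middleChange {i : E0 → A} {j : E0 → L} (ci : Continuous i) (cj : Continuous j) {φ : X0 → E0}
    (q : dmc i j → V) (qE : E0 → V)
    (hφ : CE (fun a => qE (φ a)) qE φ)
    (hq : ∀ ε > 0, ∃ δ > 0, ∀ m s s', |s - s'| ≤ δ → dist (q (inM _ _ m s)) (q (inM _ _ m s')) < ε)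
    (hqE : ∀ ε > 0, ∃ δ > 0, ∀ m m', dist (qE m) (qE m') < δ → ∀ s,
      dist (q (inM _ _ m s)) (q (inM _ _ m' s)) < ε) :
    CE (fun z => q (mapM i j φ z)) q (mapM i j φ) := by
  have cφ := hφ.1
  have cm : Continuous (mapM i j φ) :=
    cont_lift (by fun_prop) (by fun_prop) (by fun_prop)
  refine ⟨cm, fun x => rfl, fun ε hε => ?_⟩
  obtain ⟨η, hη, hη'⟩ := hqE (ε/2) (half_pos hε)
  obtain ⟨ψ, G, K, Φ, H⟩ := hφ.coherent hη
  obtain ⟨δ, hδ, hδ'⟩ := hq (ε/2) (half_pos hε)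
  have dgen : ∀ m m' s s', |s' - s| ≤ δ → dist (qE m') (qE m) < η →
      dist (q (inM _ _ m' s')) (q (inM _ _ m s)) < ε := by
    intro m m' s s' h h'
    linarith [dist_triangle (q (inM _ _ m' s')) (q (inM _ _ m s')) (q (inM _ _ m s)),
      hη' _ _ h' s', hδ' m s' s h]
  have dgen0 : ∀ m m' s, s ≤ δ → 0 ≤ s → dist (qE m') (qE m) < η →
      dist (q (inL _ _ (j m'))) (q (inM _ _ m s)) < ε := by
    intro m m' s h h0 h'
    rw [← inM_bot (i := i) m' le_rfl]
    exact dgen _ _ _ _ (by rw [abs_of_nonpos] <;> linarith) h'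
  have dgen1 : ∀ m m' s, 1 - s ≤ δ → s ≤ 1 → dist (qE m') (qE m) < η →
      dist (q (inA _ _ (i m'))) (q (inM _ _ m s)) < ε := by
    intro m m' s h h0 h'
    rw [← inM_top (j := j) m' le_rfl]
    exact dgen _ _ _ _ (by rw [abs_of_nonneg] <;> linarith) h'
  let u : ℝ → ℝ → ℝ := fun s t => (1 + 2 * δ * t) * s - δ * t
  have cu : Continuous (fun z : ℝ × ℝ => u z.1 z.2) := by fun_prop
  have mulb : ∀ s t, 0 ≤ s → s ≤ 1 → 0 ≤ t → t ≤ 1 → s - δ ≤ u s t ∧ u s t ≤ s + δ := by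
    intro s t hs hs' ht ht'
    have h1 : s * t ≤ t := by nlinarith
    have h2 : 0 ≤ s * t := by positivity
    have h3 : δ * t ≤ δ := by nlinarith
    simp only [u]
    constructor
    · nlinarith
    · nlinarith
  have u1 : ∀ t, u 1 t = 1 + δ * t := fun t => by simp only [u]; ring
  have u0 : ∀ t, u 0 t = - (δ * t) := fun t => by simp only [u]; ring
  have us : ∀ s, u s 0 = s := fun t => by simp only [u]; ring
  have hd : δ ≠ 0 := hδ.ne'
  have h1e : ∀ a t, a - (1 + δ * t - 1) / δ = a - t := fun a t => by field_simp; ring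
  have h0e : ∀ a t, a + (- (δ * t)) / δ = a - t := fun a t => by field_simp; ring
  obtain ⟨cψ, cG, cK, cΦ, G0, G1, K0, K1, Φ0, Φ1, Φs, Φe, dG, dK, dΦ⟩ := H
  have cS : ∀ (N : E0 × ℝ → E0) (cN : Continuous N),
      Continuous (fun z : E0 × ℝ × ℝ => if u z.2.1 z.2.2 ≤ 0 then
        inL i j (j (N (z.1, z.2.2 + u z.2.1 z.2.2 / δ))) else if u z.2.1 z.2.2 ≤ 1 then
        inM i j (N (z.1, z.2.2)) (u z.2.1 z.2.2) else
        inA i j (i (N (z.1, z.2.2 - (u z.2.1 z.2.2 - 1) / δ)))) := by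
    intro N cN
    refine Continuous.if_le (by fun_prop) (Continuous.if_le (by fun_prop) (by fun_prop)
      (by fun_prop) (by fun_prop) ?_) (by fun_prop) (by fun_prop) ?_
    · rintro ⟨x, t, r⟩ hz
      simp only at hz ⊢
      simp [hz, inM_top _ le_rfl]
    · rintro ⟨x, t, r⟩ hz
      simp only at hz ⊢
      simp [hz, inM_bot _ le_rfl]
  have cS2 : ∀ (N : X0 × ℝ → E0) (N' : X0 × ℝ → X0) (cN : Continuous N) (cN' : Continuous N')
      (hN : ∀ z, N z = φ (N' z)),
      Continuous (fun z : X0 × ℝ × ℝ => if u z.2.1 z.2.2 ≤ 0 then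
        inL (fun m => i (φ m)) (fun m => j (φ m)) (j (N (z.1, z.2.2 + u z.2.1 z.2.2 / δ)))
        else if u z.2.1 z.2.2 ≤ 1 then
        inM (fun m => i (φ m)) (fun m => j (φ m)) (N' (z.1, z.2.2)) (u z.2.1 z.2.2) else
        inA (fun m => i (φ m)) (fun m => j (φ m))
          (i (N (z.1, z.2.2 - (u z.2.1 z.2.2 - 1) / δ)))) := by
    intro N N' cN cN' hN
    refine Continuous.if_le (by fun_prop) (Continuous.if_le (by fun_prop) (by fun_prop)
      (by fun_prop) (by fun_prop) ?_) (by fun_prop) (by fun_prop) ?_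
    · rintro ⟨x, t, r⟩ hz
      simp only at hz ⊢
      simp [hz, inM_top _ le_rfl, hN]
    · rintro ⟨x, t, r⟩ hz
      simp only at hz ⊢
      simp [hz, inM_bot _ le_rfl, hN]
  let P : E0 × ℝ → dmc (fun m => i (φ m)) (fun m => j (φ m)) := fun z => if u z.2 1 ≤ 0 then
        inL _ _ (j (K (z.1, 1 + u z.2 1 / δ))) else if u z.2 1 ≤ 1 then
        inM _ _ (ψ z.1) (u z.2 1) else
        inA _ _ (i (K (z.1, 1 - (u z.2 1 - 1) / δ)))
  have cP : Continuous P := by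
    refine Continuous.if_le (by fun_prop) (Continuous.if_le (by fun_prop) (by fun_prop)
      (by fun_prop) (by fun_prop) ?_) (by fun_prop) (by fun_prop) ?_
    · rintro ⟨x, t⟩ hz
      simp only at hz ⊢
      simp [hz, inM_top _ le_rfl, K1 _ _ le_rfl]
    · rintro ⟨x, t⟩ hz
      simp only at hz ⊢
      simp [hz, inM_bot _ le_rfl, K1 _ _ le_rfl]
  have P1 : ∀ m, P (m, 1) = inA _ _ (i m) := fun m => by
    simp only [P, u1]
    rw [if_neg (by linarith), if_neg (by linarith), h1e, K0 _ _ (by simp)]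
  have P0 : ∀ m, P (m, 0) = inL _ _ (j m) := fun m => by
    simp only [P, u0]
    rw [if_pos (by linarith), h0e, K0 _ _ (by simp)]
  let ψ' : dmc i j → dmc (fun m => i (φ m)) (fun m => j (φ m)) :=
    lift (inA _ _) P (inL _ _) P1 P0
  have cψ' : Continuous ψ' := cont_lift (by fun_prop) (by fun_prop) (by fun_prop)
  let Q : X0 × ℝ → dmc (fun m => i (φ m)) (fun m => j (φ m)) := fun z => if u z.2 1 ≤ 0 then
        inL _ _ (j (φ (G (z.1, 1 + u z.2 1 / δ)))) else if u z.2 1 ≤ 1 then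
        inM _ _ (ψ (φ z.1)) (u z.2 1) else
        inA _ _ (i (φ (G (z.1, 1 - (u z.2 1 - 1) / δ))))
  have Q1 : ∀ m, Q (m, 1) = inA _ _ (i (φ m)) := fun m => by
    simp only [Q, u1]
    rw [if_neg (by linarith), if_neg (by linarith), h1e, G0 _ _ (by simp)]
  have Q0 : ∀ m, Q (m, 0) = inL _ _ (j (φ m)) := fun m => by
    simp only [Q, u0]
    rw [if_pos (by linarith), h0e, G0 _ _ (by simp)]
  let E1 : dmc (fun m => i (φ m)) (fun m => j (φ m)) → dmc (fun m => i (φ m)) (fun m => j (φ m)) :=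
    lift (inA _ _) Q (inL _ _) Q1 Q0
  refine ⟨ψ', cψ', CH.trans (g := E1) ?_ ?_, ?_⟩
  · refine ch (fun z => inA _ _ z.1) _
      (fun z => inL _ _ z.1) (by fun_prop) (cS2 (fun z => φ (G z)) G (by fun_prop) cG
      (fun z => rfl)) (by fun_prop) ?_ ?_ ?_ ?_ ?_ ?_ ?_ ?_ ?_ ?_ ?_
    · intro m t ht ht'
      have : 0 ≤ δ * t := by positivity
      simp only [u1]
      rw [if_neg (by linarith)]
      split_ifs with h
      · rw [inM_top _ (by linarith)]
        have : t = 0 := by nlinarith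
        rw [G0 _ _ (by linarith)]
      · rw [h1e, G0 _ _ (by simp)]
    · intro m t ht ht'
      have : 0 ≤ δ * t := by positivity
      simp only [u0]
      rw [if_pos (by linarith), h0e, G0 _ _ (by simp)]
    · intro a; rfl
    · intro m s hs hs'
      simp only [us]
      split_ifs with h
      · have : s = 0 := le_antisymm h hs
        subst this
        rw [G0 _ _ (by simp), inM_bot _ le_rfl]
      · rw [G0 _ _ le_rfl]
    · intro a; rfl
    · intro a; rfl
    · intro m s hs hs'
      simp only [E1, lift_inM m hs hs', Q]
      rw [G1 m 1 le_rfl]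
    · intro a; rfl
    · intro a t _ _; simpa using hε
    · intro m s t hs hs' ht ht'
      obtain ⟨b1, b2⟩ := mulb s t hs hs' ht ht'
      rw [mapM_inM]
      simp only
      split_ifs
      · exact dgen0 _ _ _ (by linarith) hs (dG _ _)
      · rw [mapM_inM]
        exact dgen _ _ _ _ (by rw [abs_le]; constructor <;> linarith) (dG _ _)
      · exact dgen1 _ _ _ (by linarith) hs' (dG _ _)
    · intro a t _ _; simpa using hε
  · let R : X0 × ℝ × ℝ → dmc (fun m => i (φ m)) (fun m => j (φ m)) := fun z =>
      if u z.2.1 1 ≤ 0 then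
        inL _ _ (j (Φ (z.1, 1 + u z.2.1 1 / δ, z.2.2))) else if u z.2.1 1 ≤ 1 then
        inM _ _ (ψ (φ z.1)) (u z.2.1 1) else
        inA _ _ (i (Φ (z.1, 1 - (u z.2.1 1 - 1) / δ, z.2.2)))
    have cR : Continuous R := by
      refine Continuous.if_le (by fun_prop) (Continuous.if_le (by fun_prop) (by fun_prop)
        (by fun_prop) (by fun_prop) ?_) (by fun_prop) (by fun_prop) ?_
      · rintro ⟨x, t⟩ hz
        simp only at hz ⊢
        simp [hz, inM_top _ le_rfl, Φe _ _ _ le_rfl]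
      · rintro ⟨x, t⟩ hz
        simp only at hz ⊢
        simp [hz, inM_bot _ le_rfl, Φe _ _ _ le_rfl]
    refine ch (fun z => inA _ _ z.1) R
      (fun z => inL _ _ z.1) (by fun_prop) cR (by fun_prop) ?_ ?_ ?_ ?_ ?_ ?_ ?_ ?_ ?_ ?_ ?_
    · intro m t ht ht'
      simp only [u1, R]
      rw [if_neg (by linarith), if_neg (by linarith), h1e, Φs _ _ _ (by simp)]
    · intro m t ht ht'
      simp only [u0, R]
      rw [if_pos (by linarith), h0e, Φs _ _ _ (by simp)]
    · intro a; rfl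
    · intro m s hs hs'
      simp only [E1, lift_inM m hs hs', Q, R, Φ0 _ _ _ le_rfl]
    · intro a; rfl
    · intro a; rfl
    · intro m s hs hs'
      rw [mapM_inM]
      simp only [ψ', lift_inM _ hs hs', P, R, Φ1 _ _ _ le_rfl]
    · intro a; rfl
    · intro a t _ _; simpa using hε
    · intro m s t hs hs' ht ht'
      obtain ⟨b1, b2⟩ := mulb s 1 hs hs' zero_le_one le_rfl
      rw [mapM_inM]
      simp only [R]
      split_ifs
      · exact dgen0 _ _ _ (by linarith) hs (dΦ _ _ _)
      · rw [mapM_inM]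
        refine dgen _ _ _ _ (by rw [abs_le]; constructor <;> linarith) ?_
        rw [← G1 m 1 le_rfl]; exact dG _ _
      · exact dgen1 _ _ _ (by linarith) hs' (dΦ _ _ _)
    · intro a t _ _; simpa using hε
  · refine ch (fun z => inA _ _ z.1) _
      (fun z => inL _ _ z.1) (by fun_prop) (cS K cK) (by fun_prop) ?_ ?_ ?_ ?_ ?_ ?_ ?_ ?_ ?_ ?_ ?_
    · intro m t ht ht'
      have : 0 ≤ δ * t := by positivity
      simp only [u1]
      rw [if_neg (by linarith)]
      split_ifs with h
      · rw [inM_top _ (by linarith)]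
        have : t = 0 := by nlinarith
        rw [K0 _ _ (by linarith)]
      · rw [h1e, K0 _ _ (by simp)]
    · intro m t ht ht'
      have : 0 ≤ δ * t := by positivity
      simp only [u0]
      rw [if_pos (by linarith), h0e, K0 _ _ (by simp)]
    · intro a; rfl
    · intro m s hs hs'
      simp only [us]
      split_ifs with h
      · have : s = 0 := le_antisymm h hs
        subst this
        rw [K0 _ _ (by simp), inM_bot _ le_rfl]
      · rw [K0 _ _ le_rfl]
    · intro a; rfl
    · intro a; rfl
    · intro m s hs hs'
      simp only [ψ', lift_inM m hs hs', P]
      rw [K1 m 1 le_rfl]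
      split_ifs
      · rfl
      · rw [mapM_inM]
      · rfl
    · intro a; rfl
    · intro a t _ _; simpa using hε
    · intro m s t hs hs' ht ht'
      obtain ⟨b1, b2⟩ := mulb s t hs hs' ht ht'
      simp only
      split_ifs
      · exact dgen0 _ _ _ (by linarith) hs (dK _ _)
      · exact dgen _ _ _ _ (by rw [abs_le]; constructor <;> linarith) (dK _ _)
      · exact dgen1 _ _ _ (by linarith) hs' (dK _ _)
    · intro a t _ _; simpa using hε

/-- flip -/
def flip (i : M → A) (j : M → L) : dmc i j ≃ₜ dmc j i where
  toFun := lift (inL _ _) (fun z => inM _ _ z.1 (1 - z.2)) (inA _ _)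
    (fun m => inM_bot _ (by simp)) (fun m => inM_top _ (by simp))
  invFun := lift (inL _ _) (fun z => inM _ _ z.1 (1 - z.2)) (inA _ _)
    (fun m => inM_bot _ (by simp)) (fun m => inM_top _ (by simp))
  left_inv z := by
    induction z using ind with
    | hA a => rfl
    | hM m s hs hs' => rw [lift_inM _ hs hs', lift_inM _ (by simpa) (by simpa)]; simp
    | hL a => rfl
  right_inv z := by
    induction z using ind with
    | hA a => rfl
    | hM m s hs hs' => rw [lift_inM _ hs hs', lift_inM _ (by simpa) (by simpa)]; simp
    | hL a => rfl
  continuous_toFun := cont_lift (by fun_prop) (by fun_prop) (by fun_prop)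
  continuous_invFun := cont_lift (by fun_prop) (by fun_prop) (by fun_prop)

lemma flip_inA (a : A) : flip i j (inA i j a) = inL _ _ a := rfl
lemma flip_inL (a : L) : flip i j (inL i j a) = inA _ _ a := rfl
lemma flip_inM (m : M) {s : ℝ} (hs : 0 ≤ s) (hs' : s ≤ 1) :
    flip i j (inM i j m s) = inM _ _ m (1 - s) := by
  show inM _ _ m (1 - cl s) = _
  rw [cl_of_mem hs hs']
lemma flip_inM' (m : M) (s : ℝ) :
    flip i j (inM i j m s) = inM _ _ m (1 - s) := by
  rw [← inM_cl, flip_inM _ (cl_nonneg _) (cl_le _)]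
  rcases le_total s 0 with h | h
  · rw [cl_of_le h, inM_top _ (by linarith), inM_top _ (by linarith)]
  rcases le_total s 1 with h' | h'
  · rw [cl_of_mem h h']
  · rw [cl_of_ge h', inM_bot _ (by linarith), inM_bot _ (by linarith)]

/-- change of the L-end -/
def mapL {L' : Type} [TopologicalSpace L'] (φ : L → L') : dmc i j → dmc i (fun m => φ (j m)) :=
  lift (fun a => inA _ _ a) (fun z => inM _ _ z.1 z.2) (fun l => inL _ _ (φ l))
    (fun m => inM_top m le_rfl) (fun m => inM_bot m le_rfl)

lemma mapL_inM {L' : Type} [TopologicalSpace L'] (φ : L → L') (m : M) (s : ℝ) :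
  mapL (i := i) (j := j) φ (inM i j m s) = inM _ _ m s := inM_cl _ _

lemma endChangeL {L' : Type} [TopologicalSpace L'] (ci : Continuous i) (cj : Continuous j)
    {φ : L → L'} (q : dmc i (fun m => φ (j m)) → V)
    (hφ : CE (fun a => q (inL _ _ (φ a))) (fun a => q (inL _ _ a)) φ)
    (hq : ∀ ε > 0, ∃ δ > 0, ∀ m s s', |s - s'| ≤ δ → dist (q (inM _ _ m s)) (q (inM _ _ m s')) < ε) :
    CE (fun z => q (mapL (i := i) (j := j) φ z)) q (mapL φ) := by
  have h := endChange (i := j) (j := i) cj ci (φ := φ) (fun z => q (flip _ _ z)) hφ (by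
    intro ε hε
    obtain ⟨δ, hδ, h⟩ := hq ε hε
    refine ⟨δ, hδ, fun m s s' hs => ?_⟩
    simp only [flip_inM']
    refine h _ _ _ ?_
    rw [← abs_neg]; convert hs using 2; ring)
  have h1 := CE.of_homeo (V := V) (flip (fun m => φ (j m)) i) (qX := fun z => q (flip _ _ z))
    (qE := q) (fun _ => rfl)
  have h2 := CE.of_homeo (V := V) (flip i j) (qX := fun z => q (mapL (i := i) (j := j) φ z))
    (qE := fun z => q (flip _ _ (mapA (i := j) (j := i) φ z))) (by
    intro z
    induction z using ind with
    | hA a => rfl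
    | hM m s hs hs' => rw [flip_inM', mapA_inM, mapL_inM, flip_inM']; simp
    | hL a => rfl)
  have h3 := (h1.comp h).comp h2
  convert h3 using 2
  rename_i z
  induction z using ind with
  | hA a => rfl
  | hM m s hs hs' => rw [flip_inM', mapA_inM, mapL_inM, flip_inM']; simp
  | hL a => rfl

end dmc
end DMC

section ConeStep

lemma glue {X Z : Type} [TopologicalSpace X] [TopologicalSpace Z] {S₁ S₂ : Set X}
    (h₁ : IsClosed S₁) (h₂ : IsClosed S₂) (hc : ∀ x, x ∈ S₁ ∨ x ∈ S₂) (f₁ : S₁ → Z) (f₂ : S₂ → Z)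
    (c₁ : Continuous f₁) (c₂ : Continuous f₂)
    (h : ∀ x (a : x ∈ S₁) (b : x ∈ S₂), f₁ ⟨x, a⟩ = f₂ ⟨x, b⟩) :
    ∃ F : X → Z, Continuous F ∧ (∀ x a, F x = f₁ ⟨x, a⟩) ∧ ∀ x a, F x = f₂ ⟨x, a⟩ := by
  classical
  let F : X → Z := fun x => if a : x ∈ S₁ then f₁ ⟨x, a⟩ else f₂ ⟨x, (hc x).resolve_left a⟩
  have F1 : ∀ x a, F x = f₁ ⟨x, a⟩ := fun x a => by simp only [F]; rw [dif_pos a]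
  have F2 : ∀ x a, F x = f₂ ⟨x, a⟩ := fun x a => by
    by_cases a' : x ∈ S₁
    · rw [F1 x a', h]
    · simp only [F]; rw [dif_neg a']
  refine ⟨F, ?_, F1, F2⟩
  rw [← continuousOn_univ]
  have : Set.univ = S₁ ∪ S₂ := by ext x; simpa using hc x
  rw [this]
  refine ContinuousOn.union_of_isClosed ?_ ?_ h₁ h₂
  · rw [continuousOn_iff_continuous_restrict]
    convert c₁ using 1
    ext x; exact F1 x.1 x.2
  · rw [continuousOn_iff_continuous_restrict]
    convert c₂ using 1
    ext x; exact F2 x.1 x.2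

def rr (s : ℝ) : ℝ := max 0 (2 * s - 1)
@[fun_prop] lemma rr_cont {X : Type} [TopologicalSpace X] {f : X → ℝ} (hf : Continuous f) :
    Continuous fun x => rr (f x) := by unfold rr; fun_prop
lemma rr_nonneg (s : ℝ) : 0 ≤ rr s := le_max_left _ _
lemma rr_le {s a : ℝ} (h : 0 ≤ a) (h' : 2 * s - 1 ≤ a) : rr s ≤ a := max_le h h'
lemma rr_of_le {s : ℝ} (h : s ≤ 1/2) : rr s = 0 := max_eq_left (by linarith)
lemma rr_of_ge {s : ℝ} (h : 1/2 ≤ s) : rr s = 2 * s - 1 := max_eq_right (by linarith)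
lemma rr_lip (s t : ℝ) : |rr s - rr t| ≤ 2 * |s - t| := by
  have := abs_max_sub_max_le_abs (2 * s - 1) (2 * t - 1) 0
  unfold rr
  rw [max_comm 0, max_comm 0]
  refine this.trans (le_of_eq ?_)
  rw [show 2 * s - 1 - (2 * t - 1) = 2 * (s - t) by ring, abs_mul]; norm_num

def rho (δ s : ℝ) : ℝ := cl ((s - δ) / δ) * ((1 + s) / 2)
@[fun_prop] lemma rho_cont {δ : ℝ} {X : Type} [TopologicalSpace X] {f : X → ℝ}
    (hf : Continuous f) : Continuous fun x => rho δ (f x) := by unfold rho; fun_prop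
section
variable {δ s : ℝ} (hδ : 0 < δ) (hδ' : 2 * δ ≤ 1)
include hδ
lemma rho_of_le (h : s ≤ δ) : rho δ s = 0 := by
  unfold rho; rw [cl_of_le, zero_mul]
  exact div_nonpos_of_nonpos_of_nonneg (by linarith) hδ.le
lemma rho_of_ge (h : 2 * δ ≤ s) : rho δ s = (1 + s) / 2 := by
  unfold rho; rw [cl_of_ge, one_mul]
  rw [le_div_iff₀ hδ]; linarith
lemma rho_nonneg (h : 0 ≤ s) : 0 ≤ rho δ s := mul_nonneg (cl_nonneg _) (by linarith)
lemma rho_le (h : 0 ≤ s) : rho δ s ≤ (1 + s) / 2 := by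
  unfold rho; nlinarith [cl_le ((s - δ) / δ)]
lemma w_le (h : 0 ≤ s) : rr (rho δ s) ≤ s := rr_le h (by linarith [rho_le hδ h])
lemma w_ge (h : 0 ≤ s) : max s δ - rr (rho δ s) ≤ 2 * δ := by
  rcases le_total (2 * δ) s with h1 | h1
  · rw [rho_of_ge hδ h1, rr_of_ge (by linarith), max_eq_left (by linarith)]; linarith
  · have := rr_nonneg (rho δ s)
    have : max s δ ≤ 2 * δ := max_le h1 (by linarith)
    linarith
lemma w_of_le (h : s ≤ δ) : rr (rho δ s) = 0 := by
  rw [rho_of_le hδ h, rr_of_le (by norm_num)]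
end

variable {V E : Type} [NormedAddCommGroup V] [NormedSpace ℝ V] [TopologicalSpace E]

/-- part of the total space over `S` -/
def Ov (p : E → V) (S : Set V) : Type := {e : E // p e ∈ S}
instance (p : E → V) (S : Set V) : TopologicalSpace (Ov p S) :=
  inferInstanceAs (TopologicalSpace {e : E // p e ∈ S})
def Ov.v {p : E → V} {S : Set V} (e : Ov p S) : E := e.1
def Ov.b {p : E → V} {S : Set V} (e : Ov p S) : V := p e.1
def Ov.incl {p : E → V} {S T : Set V} (h : S ⊆ T) (e : Ov p S) : Ov p T := ⟨e.1, h e.2⟩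
@[fun_prop] lemma Ov.cont_v {p : E → V} {S : Set V} : Continuous (Ov.v : Ov p S → E) :=
  continuous_subtype_val
@[fun_prop] lemma Ov.cont_incl {p : E → V} {S T : Set V} (h : S ⊆ T) :
    Continuous (Ov.incl h : Ov p S → Ov p T) :=
  continuous_subtype_val.subtype_mk _
@[ext] lemma Ov.ext {p : E → V} {S : Set V} {e e' : Ov p S} (h : e.v = e'.v) : e = e' :=
  Subtype.ext h
def Ov.mk {p : E → V} {S : Set V} (e : E) (h : p e ∈ S) : Ov p S := ⟨e, h⟩
@[fun_prop] lemma Ov.cont_mk {Z : Type} [TopologicalSpace Z] {p : E → V} {S : Set V} {f : Z → E}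
    (hf : Continuous f) (h : ∀ z, p (f z) ∈ S) : Continuous (fun z => (Ov.mk (f z) (h z) : Ov p S)) :=
  hf.subtype_mk _
lemma Ov.mem {p : E → V} {S : Set V} (e : Ov p S) : p e.v ∈ S := e.2
@[simp] lemma Ov.mk_v {p : E → V} {S : Set V} (e : E) (h : p e ∈ S) : (Ov.mk e h : Ov p S).v = e :=
  rfl
@[simp] lemma Ov.incl_v {p : E → V} {S T : Set V} (h : S ⊆ T) (e : Ov p S) :
  (Ov.incl h e).v = e.v := rfl

/-- homotopy lifting for homotopies with values in `B` -/
def HL (p : E → V) (B : Set V) : Prop :=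
  ∀ (Z : Type) [TopologicalSpace Z] (f : Z → E) (h : Z × ℝ → V), Continuous f → Continuous h →
    (∀ z t, 0 ≤ t → t ≤ 1 → h (z, t) ∈ B) → (∀ z, h (z, 0) = p (f z)) →
    ∃ H : Z × ℝ → E, Continuous H ∧ (∀ z, H (z, 0) = f z) ∧
      ∀ z t, 0 ≤ t → t ≤ 1 → p (H (z, t)) = h (z, t)

structure Cone (C D : Set V) (v : V) (s : V → ℝ) (R : ℝ) : Prop where
  cs : Continuous s
  cC : IsClosed C
  hv : v ∈ C
  memD : ∀ b, b ∈ D ↔ b ∈ C ∧ s b = 1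
  s0 : ∀ b ∈ C, 0 ≤ s b
  s1 : ∀ b ∈ C, s b ≤ 1
  scale : ∀ b ∈ C, ∀ μ : ℝ, 0 ≤ μ → μ * s b ≤ 1 →
    v + μ • (b - v) ∈ C ∧ s (v + μ • (b - v)) = μ * s b
  R0 : 0 < R
  bound : ∀ b ∈ C, ‖b - v‖ ≤ R * s b

lemma Cone.DC {C D : Set V} {v : V} {s : V → ℝ} {R : ℝ} (h : Cone C D v s R) : D ⊆ C :=
  fun b hb => ((h.memD b).1 hb).1
lemma Cone.sv {C D : Set V} {v : V} {s : V → ℝ} {R : ℝ} (h : Cone C D v s R) : s v = 0 := by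
  have := (h.scale v h.hv 0 le_rfl (by simp)).2
  simpa using this
lemma Cone.v_nD {C D : Set V} {v : V} {s : V → ℝ} {R : ℝ} (h : Cone C D v s R) {b : V}
    (hb : b ∈ C) : ‖b - v‖ ≤ R := by
  nlinarith [h.bound b hb, h.s1 b hb, h.R0]

lemma mixdist (v : V) (a c : ℝ) (x : V) {k R : ℝ} (hx : ‖x - v‖ ≤ R) (hk : |a - c| ≤ k) :
    dist (v + a • (x - v)) (v + c • (x - v)) ≤ k * R := by
  rw [dist_add_left, dist_eq_norm, ← sub_smul, norm_smul, Real.norm_eq_abs]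
  exact mul_le_mul hk hx (norm_nonneg _) ((abs_nonneg _).trans hk)

theorem CE_theta {p : E → V} (hp : Continuous p) {B A C D : Set V} {v : V} {s : V → ℝ} {R : ℝ}
    (hl : HL p B) (cone : Cone C D v s R) (cA : IsClosed A) (hAD : A ∩ C = D)
    (hAB : A ∪ C ⊆ B) (hDA : D ⊆ A) (hDC : D ⊆ C)
    (T : Ov p C × ℝ → E) (cT : Continuous T) (T0 : ∀ e t, t ≤ 0 → T (e, t) = e.v)
    (pT : ∀ e t, p (T (e, t)) = v + (1 - cl t) • (p e.v - v))
    (θ : dmc (Ov.incl hDA : Ov p D → Ov p A) (Ov.incl hDC : Ov p D → Ov p C) → Ov p (A ∪ C))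
    (cθ : Continuous θ)
    (θA : ∀ a, (θ (dmc.inA _ _ a)).v = a.v)
    (θM : ∀ m t, 0 ≤ t → t ≤ 1 → (θ (dmc.inM _ _ m t)).v = T (Ov.incl hDC m, 1 - rr t))
    (θL : ∀ e, (θ (dmc.inL _ _ e)).v = T (e, 1)) :
    CE (fun z => p (θ z).v) (fun e => p e.v) θ := by
  refine ⟨cθ, fun _ => rfl, fun ε hε => ?_⟩
  have R0 := cone.R0
  obtain ⟨δ, hδ, hδ2, hδR⟩ : ∃ δ : ℝ, 0 < δ ∧ 2 * δ ≤ 1 ∧ 2 * δ * R < ε := by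
    refine ⟨min (1/2) (ε / (4 * R)), by positivity, by linarith [min_le_left (1/2) (ε / (4 * R))], ?_⟩
    have h1 : min (1/2) (ε / (4 * R)) ≤ ε / (4 * R) := min_le_right _ _
    have h2 : ε / (4 * R) * (4 * R) = ε := by field_simp
    nlinarith
  have cs := cone.cs
  have hh : ∀ b : V, 0 < max (s b) δ := fun b => lt_max_of_lt_right hδ
  have hh' : ∀ b : V, max (s b) δ ≠ 0 := fun b => (hh b).ne'
  let μ : V → ℝ → ℝ := fun b t => (1 - t) + t / max (s b) δ
  let u : V × ℝ → V := fun z => v + μ z.1 (cl z.2) • (z.1 - v)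
  have cμ : ∀ {Z : Type} [TopologicalSpace Z] (f : Z → V) (g : Z → ℝ), Continuous f → Continuous g →
      Continuous (fun z => μ (f z) (g z)) := by
    intro Z _ f g hf hg
    refine Continuous.add (by fun_prop) (Continuous.div (by fun_prop) (by fun_prop) (fun z => hh' _))
  have cu : Continuous u := by
    have := cμ (fun z : V × ℝ => z.1) (fun z => cl z.2) (by fun_prop) (by fun_prop)
    fun_prop
  have μ1 : ∀ b ∈ C, ∀ t, 0 ≤ t → t ≤ 1 → 1 ≤ μ b t := by
    intro b hb t ht ht'
    have : 1 ≤ 1 / max (s b) δ := by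
      rw [le_div_iff₀ (hh b), one_mul]; exact max_le (cone.s1 b hb) (by linarith)
    have h2 : t / max (s b) δ = t * (1 / max (s b) δ) := by ring
    simp only [μ]; rw [h2]; nlinarith
  have μm : ∀ b ∈ C, ∀ t, 0 ≤ t → t ≤ 1 → μ b t * max (s b) δ ≤ 1 := by
    intro b hb t ht ht'
    have : max (s b) δ ≤ 1 := max_le (cone.s1 b hb) (by linarith)
    have h2 : t / max (s b) δ * max (s b) δ = t := by have := hh' b; field_simp
    simp only [μ]; rw [add_mul, h2]; nlinarith
  have μs : ∀ b ∈ C, ∀ t, 0 ≤ t → t ≤ 1 → μ b t * s b ≤ 1 := by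
    intro b hb t ht ht'
    have := mul_le_mul_of_nonneg_left (le_max_left (s b) δ) (zero_le_one.trans (μ1 b hb t ht ht'))
    exact this.trans (μm b hb t ht ht')
  have uC : ∀ b ∈ C, ∀ t, u (b, t) ∈ C ∧ s (u (b, t)) = μ b (cl t) * s b := by
    intro b hb t
    exact cone.scale b hb _ (zero_le_one.trans (μ1 b hb _ (cl_nonneg _) (cl_le _)))
      (μs b hb _ (cl_nonneg _) (cl_le _))
  have uD : ∀ b ∈ D, ∀ t, u (b, t) = b := by
    intro b hb t
    have := ((cone.memD b).1 hb).2
    simp only [u, μ, this]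
    rw [max_eq_left (by linarith)]; simp
  have u1D : ∀ b ∈ C, δ ≤ s b → u (b, 1) ∈ D := by
    intro b hb h
    refine (cone.memD _).2 ⟨(uC b hb 1).1, ?_⟩
    rw [(uC b hb 1).2, cl_of_ge le_rfl]
    simp only [μ]; rw [max_eq_left h]
    have : s b ≠ 0 := by linarith
    field_simp; ring
  have mAC : ∀ b, b ∈ A → b ∈ C → b ∈ D := fun b h1 h2 => hAD ▸ ⟨h1, h2⟩
  obtain ⟨U, cU, U0, pUA, pUC⟩ : ∃ U : Ov p (A ∪ C) × ℝ → E, Continuous U ∧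
      (∀ e t, t ≤ 0 → U (e, t) = e.v) ∧ (∀ e t, p e.v ∈ A → p (U (e, t)) = p e.v) ∧
      (∀ e t, p e.v ∈ C → p (U (e, t)) = u (p e.v, t)) := by
    obtain ⟨h, ch, hA, hC⟩ := glue (X := Ov p (A ∪ C) × ℝ) (Z := V)
      (S₁ := {z | p z.1.v ∈ A}) (S₂ := {z | p z.1.v ∈ C}) (cA.preimage (by fun_prop))
      (cone.cC.preimage (by fun_prop)) (fun z => z.1.mem) (fun z => p z.1.1.v)
      (fun z => u (p z.1.1.v, z.1.2)) (by fun_prop) (by fun_prop)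
      (fun z a c => (uD _ (mAC _ a c) _).symm)
    obtain ⟨H, cH, H0, pH⟩ := hl (Ov p (A ∪ C)) (fun e => e.v) h (by fun_prop) ch (by
        intro z t ht ht'
        rcases z.mem with h' | h'
        · rw [hA (z, t) h']; exact hAB (Or.inl h')
        · rw [hC (z, t) h']; exact hAB (Or.inr (uC _ h' _).1)) (by
        intro z
        rcases z.mem with h' | h'
        · rw [hA (z, 0) h']
        · rw [hC (z, 0) h']; simp [u, μ, cl_of_le le_rfl])
    refine ⟨fun z => H (z.1, cl z.2), by fun_prop, ?_, ?_, ?_⟩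
    · intro e t ht; simp [cl_of_le ht, H0]
    · intro e t h'
      simp only [pH _ _ (cl_nonneg t) (cl_le t)]
      rw [hA (e, _) h']
    · intro e t h'
      simp only [pH _ _ (cl_nonneg t) (cl_le t)]
      rw [hC (e, _) h']
      simp only [u, cl_of_mem (cl_nonneg t) (cl_le t)]
  let UA : Ov p A × ℝ → Ov p A := fun z => Ov.mk (U (Ov.incl Set.subset_union_left z.1, z.2))
    (by rw [pUA _ _ z.1.mem]; exact z.1.mem)
  have cUA : Continuous UA := by fun_prop
  let UC : Ov p C × ℝ → Ov p C := fun z => Ov.mk (U (Ov.incl Set.subset_union_right z.1, z.2))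
    (by rw [pUC _ _ z.1.mem]; exact (uC _ z.1.mem _).1)
  have cUC : Continuous UC := by fun_prop
  have pUD : ∀ (e : Ov p D) t, p (U (Ov.incl (hDA.trans Set.subset_union_left) e, t)) = p e.v := by
    intro e t; exact pUA _ _ (hDA e.mem)
  let UD : Ov p D × ℝ → Ov p D := fun z =>
    Ov.mk (U (Ov.incl (hDA.trans Set.subset_union_left) z.1, z.2)) (by rw [pUD]; exact z.1.mem)
  have cUD : Continuous UD := by fun_prop
  let TC : Ov p C × ℝ → Ov p C := fun z => Ov.mk (T z) (by
    rw [pT]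
    refine (cone.scale _ z.1.mem _ (by linarith [cl_le z.2]) ?_).1
    have := cone.s1 _ z.1.mem
    have := cone.s0 _ z.1.mem
    nlinarith [cl_nonneg z.2, cl_le z.2])
  have cTC : Continuous TC := by fun_prop
  have sT : ∀ e t, s (p (T (e, t))) = (1 - cl t) * s (p e.v) := by
    intro e t
    rw [pT]
    refine (cone.scale _ e.mem _ (by linarith [cl_le t]) ?_).2
    have := cone.s1 _ e.mem
    have := cone.s0 _ e.mem
    nlinarith [cl_nonneg t, cl_le t]
  let N : {e : Ov p C // δ ≤ s (p e.v)} → Ov p D := fun e => Ov.mk (UC (e.1, 1)).v (by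
    show p (U _) ∈ D
    rw [pUC _ _ e.1.mem]; exact u1D _ e.1.mem e.2)
  have cN : Continuous N := by fun_prop
  obtain ⟨ψC, cψC, ψC1, ψC2⟩ := glue (X := Ov p C)
      (Z := dmc (Ov.incl hDA : Ov p D → Ov p A) (Ov.incl hDC : Ov p D → Ov p C))
      (S₁ := {e | δ ≤ s (p e.v)}) (S₂ := {e | s (p e.v) ≤ δ})
      (isClosed_le (by fun_prop) (by fun_prop)) (isClosed_le (by fun_prop) (by fun_prop))
      (fun e => le_total δ (s (p e.v))) (fun e => dmc.inM _ _ (N e) (rho δ (s (p e.1.v))))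
      (fun e => dmc.inL _ _ (UC (e.1, 1))) (by fun_prop) (by fun_prop) (by
        intro e h1 h2
        rw [rho_of_le hδ h2, dmc.inM_bot _ le_rfl]
        rfl)
  obtain ⟨ψ, cψ, ψA, ψC'⟩ := glue (X := Ov p (A ∪ C))
      (Z := dmc (Ov.incl hDA : Ov p D → Ov p A) (Ov.incl hDC : Ov p D → Ov p C))
      (S₁ := {e | p e.v ∈ A}) (S₂ := {e | p e.v ∈ C})
      (cA.preimage (by fun_prop)) (cone.cC.preimage (by fun_prop))
      (fun e => e.mem) (fun e => dmc.inA _ _ (UA (Ov.mk e.1.v e.2, 1)))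
      (fun e => ψC (Ov.mk e.1.v e.2)) 
      (by have : ∀ e : {e : Ov p (A ∪ C) | p e.v ∈ A}, p e.1.v ∈ A := fun e => e.2
          fun_prop) 
      (by have : ∀ e : {e : Ov p (A ∪ C) | p e.v ∈ C}, p e.1.v ∈ C := fun e => e.2
          fun_prop) (by
        intro e h1 h2
        have h3 := ((cone.memD _).1 (mAC _ h1 h2)).2
        have h4 : (Ov.mk e.v h2 : Ov p C) ∈ {e : Ov p C | δ ≤ s (p e.v)} := by
          show δ ≤ s (p e.v); linarith
        simp only
        rw [ψC1 _ h4]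
        have h5 : rho δ (s (p (Ov.mk e.v h2 : Ov p C).v)) = 1 := by
          show rho δ (s (p e.v)) = 1
          rw [h3, rho_of_ge hδ (by linarith)]; norm_num
        rw [h5, dmc.inM_top _ le_rfl]
        rfl)
  have ρb : ∀ b ∈ C, 0 ≤ rho δ (s b) ∧ rho δ (s b) ≤ 1 := by
    intro b hb
    have := rho_le hδ (cone.s0 b hb)
    have := cone.s1 b hb
    exact ⟨rho_nonneg hδ (cone.s0 b hb), by linarith⟩
  have θψC : ∀ (e : Ov p C), (θ (ψC e)).v = T (UC (e, 1), 1 - rr (rho δ (s (p e.v)))) := by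
    intro e
    rcases le_total δ (s (p e.v)) with h | h
    · rw [ψC1 e h]
      obtain ⟨a, b⟩ := ρb _ e.mem
      rw [θM _ _ a b]
      rfl
    · rw [ψC2 e h, θL, w_of_le hδ h, sub_zero]
  refine ⟨ψ, cψ, ?_, ?_⟩
  · have rr1 : ∀ x : ℝ, 0 ≤ x → x ≤ 1 → rr x ≤ 1 := fun x h h' => rr_le (by norm_num) (by linarith)
    have pθM : ∀ m t, 0 ≤ t → t ≤ 1 → p (θ (dmc.inM _ _ m t)).v = v + rr t • (p m.v - v) := by
      intro m t ht ht'
      rw [θM _ _ ht ht', pT, cl_of_mem (by linarith [rr1 t ht ht']) (by linarith [rr_nonneg t]),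
        sub_sub_cancel]
      rfl
    have pθL : ∀ e, p (θ (dmc.inL _ _ e)).v = v := by
      intro e
      rw [θL, pT, cl_of_ge le_rfl]; simp
    have pθA : ∀ e, p (θ (dmc.inA _ _ e)).v = p e.v := fun e => by rw [θA]
    have sD : ∀ m : Ov p D, s (p m.v) = 1 := fun m => ((cone.memD _).1 m.mem).2
    have ND0 : ∀ (m : Ov p D) (x : ℝ), δ ≤ s (p (TC (Ov.incl hDC m, min x (1 - δ))).v) := by
      intro m x
      show δ ≤ s (p (T _))
      rw [sT]
      have : cl (min x (1 - δ)) ≤ 1 - δ := by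
        unfold cl
        exact max_le (by linarith) ((min_le_right _ _).trans (min_le_right _ _))
      simp only [Ov.incl_v, sD]; linarith
    let ND : Ov p D × ℝ → Ov p D := fun z => N ⟨TC (Ov.incl hDC z.1, min z.2 (1 - δ)), ND0 _ _⟩
    have cND : Continuous ND := by fun_prop
    have NDe : ∀ m x, x ≤ 1 - δ → Ov.incl hDC (ND (m, x)) = UC (TC (Ov.incl hDC m, x), 1) := by
      intro m x hx
      ext
      show (UC (TC (_, min x (1 - δ)), 1)).v = _
      rw [min_eq_left hx]
    have NDv : ∀ m x, x ≤ 1 - δ → (ND (m, x)).v = (UC (TC (Ov.incl hDC m, x), 1)).v := by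
      intro m x hx
      rw [← NDe m x hx]; rfl
    have NDb : ∀ m x, p (ND (m, x)).v = p m.v := by
      intro m x
      have h := ND0 m x
      have e1 : p (ND (m, x)).v = u (p (TC (Ov.incl hDC m, min x (1 - δ))).v, 1) :=
        pUC _ _ (Ov.mem _)
      rw [e1]
      have e2 : s (p (TC (Ov.incl hDC m, min x (1 - δ))).v) = 1 - cl (min x (1 - δ)) := by
        show s (p (T _)) = _
        rw [sT]; simp [sD]
      have e3 : p (TC (Ov.incl hDC m, min x (1 - δ))).v =
          v + (1 - cl (min x (1 - δ))) • (p m.v - v) := pT _ _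
      simp only [u, μ, cl_of_ge le_rfl]
      rw [max_eq_left h, e2] 
      rw [e2] at h
      rw [e3]
      have : 1 - cl (min x (1 - δ)) ≠ 0 := by linarith
      simp only [add_sub_cancel_left, smul_smul, sub_self, zero_add]
      rw [one_div_mul_cancel this]; simp
    let r' : ℝ → ℝ := fun x => max (rr x) δ
    have cr' : Continuous r' := by fun_prop
    have r'0 : r' 0 = δ := by simp only [r']; rw [rr_of_le (by norm_num), max_eq_right hδ.le]
    have r'1 : r' 1 = 1 := by
      simp only [r']; rw [rr_of_ge (by norm_num), max_eq_left] <;> linarith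
    have ρ1 : rho δ 1 = 1 := by rw [rho_of_ge hδ (by linarith)]; norm_num
    have ρδ : rho δ δ = 0 := rho_of_le hδ le_rfl
    have T0C : ∀ (e : Ov p C), TC (e, 0) = e := fun e => by ext; exact T0 _ _ le_rfl
    have ND00 : ∀ m, ND (m, 0) = UD (m, 1) := by
      intro m
      ext
      rw [NDv _ _ (by linarith), T0C]
      rfl
    have r'b : ∀ x, 0 ≤ x → x ≤ 1 → δ ≤ r' x ∧ r' x ≤ 1 := fun x h h' => 
      ⟨le_max_right _ _, max_le (rr1 x h h') (by linarith)⟩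
    let Y1 : dmc (Ov.incl hDA : Ov p D → Ov p A) (Ov.incl hDC : Ov p D → Ov p C) →
        dmc (Ov.incl hDA : Ov p D → Ov p A) (Ov.incl hDC : Ov p D → Ov p C) :=
      dmc.lift (fun a => dmc.inA _ _ (UA (a, 1))) (fun z => dmc.inM _ _ (UD (z.1, 1)) z.2)
        (fun e => dmc.inL _ _ (UC (e, 1))) (fun m => dmc.inM_top _ le_rfl)
        (fun m => dmc.inM_bot _ le_rfl)
    let Y2 : dmc (Ov.incl hDA : Ov p D → Ov p A) (Ov.incl hDC : Ov p D → Ov p C) →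
        dmc (Ov.incl hDA : Ov p D → Ov p A) (Ov.incl hDC : Ov p D → Ov p C) :=
      dmc.lift (fun a => dmc.inA _ _ (UA (a, 1)))
        (fun z => dmc.inM _ _ (ND (z.1, 1 - r' z.2)) (rho δ (r' z.2)))
        (fun e => dmc.inL _ _ (UC (TC (e, 1 - δ), 1)))
        (fun m => by
          simp only [r'1, ρ1, sub_self]; rw [dmc.inM_top _ le_rfl, ND00]; rfl)
        (fun m => by
          simp only [r'0, ρδ]; rw [dmc.inM_bot _ le_rfl, NDe _ _ le_rfl])
    have Y1M : ∀ m x, 0 ≤ x → x ≤ 1 →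
        Y1 (dmc.inM _ _ m x) = dmc.inM _ _ (UD (m, 1)) x := by
      intro m x hx hx'
      exact dmc.lift_inM (i := (Ov.incl hDA : Ov p D → Ov p A))
        (j := (Ov.incl hDC : Ov p D → Ov p C)) m hx hx'
    refine CH.trans (g := Y1) ?_ (CH.trans (g := Y2) ?_ ?_)
    · refine dmc.ch (fun z => dmc.inA _ _ (UA z)) (fun z => dmc.inM _ _ (UD (z.1, z.2.2)) z.2.1)
        (fun z => dmc.inL _ _ (UC z)) (by fun_prop) (by fun_prop) (by fun_prop)
        ?_ ?_ ?_ ?_ ?_ ?_ ?_ ?_ ?_ ?_ ?_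
      · intro m t _ _; exact dmc.inM_top _ le_rfl
      · intro m t _ _; exact dmc.inM_bot _ le_rfl
      · intro a
        have : UA (a, 0) = a := by ext; exact U0 _ _ le_rfl
        simp only [this]
      · intro m x _ _
        have : UD (m, 0) = m := by ext; exact U0 _ _ le_rfl
        simp only [this]
      · intro a
        have : UC (a, 0) = a := by ext; exact U0 _ _ le_rfl
        simp only [this]
      · intro a; rfl
      · intro m x hx hx'; exact (Y1M m x hx hx').symm
      · intro a; rfl
      · intro a t _ _
        rw [pθA, pθA]
        have : p (UA (a, t)).v = p a.v := pUA _ _ a.mem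
        rw [this]; simpa using hε
      · intro m x t hx hx' _ _
        simp only
        rw [pθM _ _ hx hx', pθM _ _ hx hx']
        have : p (UD (m, t)).v = p m.v := pUD _ _
        rw [this]; simpa using hε
      · intro a t _ _
        rw [pθL, pθL]; simpa using hε
    · refine dmc.ch (fun z => dmc.inA _ _ (UA (z.1, 1)))
        (fun z => dmc.inM _ _ (ND (z.1, z.2.2 * (1 - r' z.2.1)))
          ((1 - z.2.2) * z.2.1 + z.2.2 * rho δ (r' z.2.1)))
        (fun z => dmc.inL _ _ (UC (TC (z.1, z.2 * (1 - δ)), 1))) (by fun_prop) (by fun_prop)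
        (by fun_prop) ?_ ?_ ?_ ?_ ?_ ?_ ?_ ?_ ?_ ?_ ?_
      · intro m t _ _
        simp only [r'1, ρ1, sub_self, mul_zero, mul_one, sub_add_cancel, ND00]
        exact dmc.inM_top _ le_rfl
      · intro m t _ ht
        simp only [r'0, ρδ, mul_zero, add_zero]
        rw [dmc.inM_bot _ le_rfl, NDe _ _ (by nlinarith)]
      · intro a; rfl
      · intro m x hx hx'
        simp only [zero_mul, ND00, sub_zero, one_mul, add_zero]
        exact (Y1M m x hx hx').symm
      · intro a; simp only [zero_mul, T0C]; rfl
      · intro a; rfl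
      · intro m x hx hx'; simp only [Y2, dmc.lift_inM _ hx hx', one_mul, sub_self, zero_mul, zero_add]
      · intro a; simp only [one_mul]; rfl
      · intro a t _ _
        rw [pθA, pθA]
        have : p (UA (a, 1)).v = p a.v := pUA _ _ a.mem
        rw [this]; simpa using hε
      · intro m x t hx hx' ht ht'
        simp only
        obtain ⟨b1, b2⟩ := r'b x hx hx'
        have b3 : rho δ (r' x) ≤ (1 + r' x) / 2 := rho_le hδ (by linarith)
        have b4 : 0 ≤ rho δ (r' x) := rho_nonneg hδ (by linarith)
        rw [pθM _ _ (add_nonneg (mul_nonneg (by linarith) hx) (mul_nonneg ht b4)) (by nlinarith), pθM _ _ hx hx', NDb]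
        refine (mixdist v _ _ _ (k := 2 * δ) (cone.v_nD (hDC m.mem)) ?_).trans_lt hδR
        rcases le_total (2 * δ) (rr x) with h | h
        · have h1 : r' x = rr x := max_eq_left (by linarith)
          have h2 : rr x = 2 * x - 1 := by
            rcases le_total x (1/2) with h3 | h3
            · rw [rr_of_le h3] at h; linarith
            · exact rr_of_ge h3
          have h3 : (1 - t) * x + t * rho δ (r' x) = x := by
            rw [h1, rho_of_ge hδ h, h2]; ring
          rw [h3]; simp; linarith
        · have h1 : r' x ≤ 2 * δ := max_le h (by linarith)
          have h2 : 2 * x - 1 ≤ 2 * δ := (le_max_right _ _).trans h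
          have h3 : (1 - t) * x + t * rho δ (r' x) ≤ (1 + 2 * δ) / 2 := by nlinarith
          have h4 := rr_le (s := (1 - t) * x + t * rho δ (r' x)) (a := 2 * δ) (by linarith)
            (by linarith)
          rw [abs_le]; constructor <;> linarith [rr_nonneg x,
            rr_nonneg ((1 - t) * x + t * rho δ (r' x))]
      · intro a t _ _
        rw [pθL, pθL]; simpa using hε
    · refine dmc.ch (fun z => dmc.inA _ _ (UA (z.1, 1)))
        (fun z => if rr z.2.1 ≤ δ then dmc.inL _ _ (UC (TC (Ov.incl hDC z.1,
            (1 - z.2.2) * (1 - δ) + z.2.2 * (1 - rr z.2.1)), 1)) else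
          dmc.inM _ _ (ND (z.1, (1 - r' z.2.1))) (rho δ (r' z.2.1)))
        (fun z => dmc.inL _ _ (UC (TC (z.1, (1 - z.2) * (1 - δ) + z.2), 1))) (by fun_prop)
        (by
          refine Continuous.if_le (by fun_prop) (by fun_prop) (by fun_prop) (by fun_prop) ?_
          intro z hz
          have h1 : r' z.2.1 = δ := by simp only [r', hz, max_self]
          rw [h1, hz, ρδ, dmc.inM_bot _ le_rfl, NDe _ _ le_rfl]
          congr 4; ring)
        (by fun_prop) ?_ ?_ ?_ ?_ ?_ ?_ ?_ ?_ ?_ ?_ ?_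
      · intro m t _ _
        have : rr 1 = 1 := by rw [rr_of_ge] <;> norm_num
        simp only [r'1, ρ1, sub_self, this]
        rw [if_neg (by linarith), ND00]
        exact dmc.inM_top _ le_rfl
      · intro m t _ ht
        have : rr 0 = 0 := by rw [rr_of_le]; norm_num
        simp only [this]
        rw [if_pos hδ.le]; simp
      · intro a; rfl
      · intro m x hx hx'
        simp only [Y2, dmc.lift_inM _ hx hx']
        split_ifs with h
        · have h1 : r' x = δ := max_eq_right h
          rw [h1, ρδ, dmc.inM_bot _ le_rfl, NDe _ _ le_rfl]
          simp
        · rfl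
      · intro a; simp only [sub_zero, one_mul, add_zero]; rfl
      · intro a
        have h : p (θ (dmc.inA _ _ a)).v ∈ A := by rw [pθA]; exact a.mem
        rw [ψA _ h]
        have : (Ov.mk (θ (dmc.inA _ _ a)).v h : Ov p A) = a := by ext; exact θA a
        simp only [this]
      · intro m x hx hx'
        have hx2 := rr1 x hx hx'
        have e1 : (θ (dmc.inM _ _ m x)).v = (TC (Ov.incl hDC m, 1 - rr x)).v := θM _ _ hx hx'
        have h : p (θ (dmc.inM _ _ m x)).v ∈ C := by rw [e1]; exact Ov.mem _
        rw [ψC' _ h]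
        have : (Ov.mk (θ (dmc.inM _ _ m x)).v h : Ov p C) = TC (Ov.incl hDC m, 1 - rr x) := by
          ext; exact e1
        simp only [this]
        have e2 : s (p (TC (Ov.incl hDC m, 1 - rr x)).v) = rr x := by
          show s (p (T _)) = _
          rw [sT, cl_of_mem (by linarith) (by linarith [rr_nonneg x])]; simp [sD]
        split_ifs with h3
        · rw [ψC2 _ (by show s _ ≤ _; rw [e2]; exact h3)]
          simp
        · have h4 : TC (Ov.incl hDC m, 1 - rr x) ∈ {e : Ov p C | δ ≤ s (p e.v)} := by
            show δ ≤ s _; rw [e2]; linarith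
          rw [ψC1 _ h4]
          have h5 : r' x = rr x := max_eq_left (by linarith)
          simp only [e2, h5]
          congr 1
          ext
          rw [NDv _ _ (by linarith)]
          rfl
      · intro a
        have e1 : (θ (dmc.inL _ _ a)).v = (TC (a, 1)).v := θL a
        have h : p (θ (dmc.inL _ _ a)).v ∈ C := by rw [e1]; exact Ov.mem _
        rw [ψC' _ h]
        have : (Ov.mk (θ (dmc.inL _ _ a)).v h : Ov p C) = TC (a, 1) := by
          ext; exact e1
        simp only [this]
        rw [ψC2 _ (by
          show s _ ≤ _
          show s (p (T _)) ≤ _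
          rw [sT, cl_of_ge le_rfl]; simpa using hδ.le)]
        simp
      · intro a t _ _
        rw [pθA, pθA]
        have : p (UA (a, 1)).v = p a.v := pUA _ _ a.mem
        rw [this]; simpa using hε
      · intro m x t hx hx' ht ht'
        simp only
        obtain ⟨b1, b2⟩ := r'b x hx hx'
        have b3 : rho δ (r' x) ≤ (1 + r' x) / 2 := rho_le hδ (by linarith)
        have b4 : 0 ≤ rho δ (r' x) := rho_nonneg hδ (by linarith)
        rw [pθM _ _ hx hx']
        split_ifs with h
        · rw [pθL]
          have h1 := mixdist v 0 (rr x) (p m.v) (k := 2 * δ) (cone.v_nD (hDC m.mem)) (by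
            rw [zero_sub, abs_neg, abs_of_nonneg (rr_nonneg x)]; linarith)
          rw [zero_smul, add_zero] at h1
          exact h1.trans_lt hδR
        · rw [pθM _ _ b4 (by linarith), NDb]
          refine (mixdist v _ _ _ (k := 2 * δ) (cone.v_nD (hDC m.mem)) ?_).trans_lt hδR
          have h5 : r' x = rr x := max_eq_left (by linarith)
          have h6 := w_le hδ (rr_nonneg x)
          have h7 := w_ge hδ (rr_nonneg x)
          rw [h5, abs_le]
          constructor <;> linarith [le_max_left (rr x) δ]
      · intro a t _ _
        rw [pθL, pθL]; simpa using hε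
  · obtain ⟨K, cK, KA, KC⟩ := glue (X := Ov p (A ∪ C) × ℝ) (Z := Ov p (A ∪ C))
      (S₁ := {z | p z.1.v ∈ A}) (S₂ := {z | p z.1.v ∈ C}) (cA.preimage (by fun_prop))
      (cone.cC.preimage (by fun_prop)) (fun z => z.1.mem)
      (fun z => Ov.incl Set.subset_union_left (UA (Ov.mk z.1.1.v z.2, cl z.1.2)))
      (fun z => Ov.incl Set.subset_union_right (TC (UC (Ov.mk z.1.1.v z.2, cl z.1.2),
        1 - (1 / μ (p z.1.1.v) (cl z.1.2) - cl z.1.2 * (max (s (p z.1.1.v)) δ -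
          rr (rho δ (s (p z.1.1.v))))))))
      (by have : ∀ z : {z : Ov p (A ∪ C) × ℝ | p z.1.v ∈ A}, p z.1.1.v ∈ A := fun e => e.2
          fun_prop)
      (by have : ∀ z : {z : Ov p (A ∪ C) × ℝ | p z.1.v ∈ C}, p z.1.1.v ∈ C := fun e => e.2
          have h2 : Continuous (fun z : {z : Ov p (A ∪ C) × ℝ | p z.1.v ∈ C} =>
              1 / μ (p z.1.1.v) (cl z.1.2)) := by
            refine Continuous.div (by fun_prop) (cμ _ _ (by fun_prop) (by fun_prop)) ?_
            intro z
            have := μ1 _ z.2 (cl z.1.2) (cl_nonneg _) (cl_le _)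
            positivity
          fun_prop)
      (by
        intro z h1 h2
        have h3 := ((cone.memD _).1 (mAC _ h1 h2)).2
        ext
        show U _ = T _
        rw [T0]
        · rfl
        simp only [h3, μ]
        rw [rho_of_ge hδ (by linarith), rr_of_ge (by linarith), max_eq_left (by linarith)]
        norm_num)
    refine CH.mk' K cK ?_ ?_ ?_
    · intro e
      ext
      rcases e.mem with h | h
      · rw [KA (e, 0) h]
        exact U0 _ _ (by rw [cl_of_le le_rfl])
      · rw [KC (e, 0) h]
        show T _ = _
        simp only [cl_of_le le_rfl, μ]
        rw [T0 _ _ (by simp)]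
        exact U0 _ _ le_rfl
    · intro e
      ext
      rcases e.mem with h | h
      · rw [KA (e, 1) h, ψA e h, θA, cl_of_ge le_rfl]; rfl
      · rw [KC (e, 1) h, ψC' e h, θψC, cl_of_ge le_rfl]
        show T _ = _
        congr 2
        simp only [μ]
        have := hh' (p e.v)
        field_simp
        simp only [Ov.mk_v]
        ring
    · intro e t ht ht'
      rcases e.mem with h | h
      · rw [KA (e, t) h]
        have : p (UA (Ov.mk e.v h, cl t)).v = p e.v := pUA _ _ h
        simp only [Ov.incl_v]
        rw [this]; simpa using hε
      · rw [KC (e, t) h]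
        have h1 : p (UC (Ov.mk e.v h, t)).v = u (p e.v, t) := pUC _ _ h
        simp only [cl_of_mem ht ht']
        show dist (p (T _)) (p e.v) < ε
        rw [pT, h1]
        clear h1
        revert h
        generalize p e.v = b
        intro h
        have m1 := μ1 b h t ht ht'
        have m2 := μm b h t ht ht'
        have m3 := μs b h t ht ht'
        have w1 := w_le hδ (cone.s0 b h)
        have w2 := w_ge hδ (cone.s0 b h)
        have w3 := rr_nonneg (rho δ (s b))
        have h0 : 0 < max (s b) δ := hh b
        have w4 : 0 ≤ max (s b) δ - rr (rho δ (s b)) := by linarith [le_max_left (s b) δ]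
        have i1 : 1 / μ b t ≤ 1 := by rw [div_le_one (by linarith)]; exact m1
        have i2 : max (s b) δ ≤ 1 / μ b t := by rw [le_div_iff₀ (by linarith)]; linarith
        have i3 : t * (max (s b) δ - rr (rho δ (s b))) ≤ max (s b) δ := by nlinarith
        rw [cl_of_mem (by nlinarith) (by nlinarith)]
        simp only [u, cl_of_mem ht ht', add_sub_cancel_left, smul_smul]
        have e1 : (1 - (1 - (1 / μ b t - t * (max (s b) δ - rr (rho δ (s b)))))) * μ b t =
            1 - t * (max (s b) δ - rr (rho δ (s b))) * μ b t := by
          have : μ b t ≠ 0 := by linarith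
          field_simp; ring
        rw [e1]
        have e2 : b = v + (1:ℝ) • (b - v) := by simp
        have e3 : dist (v + (1 - t * (max (s b) δ - rr (rho δ (s b))) * μ b t) • (b - v)) b =
            t * (max (s b) δ - rr (rho δ (s b))) * μ b t * ‖b - v‖ := by
          rw [dist_comm, dist_eq_norm]
          have : b - (v + (1 - t * (max (s b) δ - rr (rho δ (s b))) * μ b t) • (b - v)) =
            (t * (max (s b) δ - rr (rho δ (s b))) * μ b t) • (b - v) := by
              rw [sub_smul _ _ (b - v), one_smul]; abel
          rw [this, norm_smul, Real.norm_eq_abs, abs_of_nonneg (by positivity)]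
        rw [e3]
        have b1 := cone.bound b h
        calc t * (max (s b) δ - rr (rho δ (s b))) * μ b t * ‖b - v‖ 
            ≤ 1 * (2 * δ) * μ b t * (R * s b) := by gcongr
          _ = (2 * δ * R) * (μ b t * s b) := by ring
          _ ≤ (2 * δ * R) * 1 := by gcongr
          _ < ε := by linarith

end ConeStep

section ConeStep2
variable {V E : Type} [NormedAddCommGroup V] [NormedSpace ℝ V] [TopologicalSpace E]

theorem cone_step {p : E → V} (hp : Continuous p) {B A C D : Set V} {v : V} {s : V → ℝ} {R : ℝ}
    (hl : HL p B) (cone : Cone C D v s R) (cA : IsClosed A) (hAD : A ∩ C = D)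
    (hAB : A ∪ C ⊆ B) (hDA : D ⊆ A) (hDC : D ⊆ C)
    (T : Ov p C × ℝ → E) (cT : Continuous T) (T0 : ∀ e t, t ≤ 0 → T (e, t) = e.v)
    (pT : ∀ e t, p (T (e, t)) = v + (1 - cl t) • (p e.v - v))
    {L : Type} [TopologicalSpace L]
    (T1 : Ov p C → Ov p {v}) (hT1 : ∀ e, (T1 e).v = T (e, 1)) (cT1 : Continuous T1)
    (f : Ov p {v} → L) (cf : Continuous f) (g : L → Ov p {v}) (cg : Continuous g)
    (h : Ov p {v} × ℝ → Ov p {v}) (ch : Continuous h) (h0 : ∀ x, h (x, 0) = x)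
    (h1 : ∀ x, h (x, 1) = g (f x))
    (k : L × ℝ → L) (ck : Continuous k) (k0 : ∀ x, k (x, 0) = x) (k1 : ∀ x, k (x, 1) = f (g x))
    (ω : Ov p D × ℝ → E) (cω : Continuous ω)
    (ω1 : ∀ e s, s ≤ 1/2 → ω (e, s) = (h (T1 (Ov.incl hDC e), 1 - 2 * s)).v)
    (ω2 : ∀ e s, 1/2 ≤ s → ω (e, s) = T (Ov.incl hDC e, 2 - 2 * s))
    {XA X0 : Type} [TopologicalSpace XA] [TopologicalSpace X0] (ι : X0 → XA) (cι : Continuous ι)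
    (φA : XA → Ov p A) (hφA : CE (fun x => p (φA x).v) (fun e => p e.v) φA)
    (φ0 : X0 → Ov p D) (hφ0 : CE (fun x => p (φ0 x).v) (fun e => p e.v) φ0)
    (hι : ∀ x, (φA (ι x)).v = (φ0 x).v)
    (j : X0 → L) (hj : ∀ x, j x = f (T1 (Ov.incl hDC (φ0 x))))
    (φ : dmc ι j → Ov p (A ∪ C))
    (eA : ∀ a, (φ (dmc.inA _ _ a)).v = (φA a).v)
    (eM : ∀ x s, 0 ≤ s → s ≤ 1 → (φ (dmc.inM _ _ x s)).v = ω (φ0 x, s))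
    (eL : ∀ l, (φ (dmc.inL _ _ l)).v = (g l).v) :
    CE (fun x => p (φ x).v) (fun e => p e.v) φ := by
  have vF : ∀ x : Ov p {v}, p x.v = v := fun x => x.mem
  have ω_1 : ∀ e, ω (e, 1) = e.v := fun e => by rw [ω2 _ _ (by norm_num), T0 _ _ (by norm_num)]; rfl
  have ω_0 : ∀ e, ω (e, 0) = (g (f (T1 (Ov.incl hDC e)))).v := fun e => by
    rw [ω1 _ _ (by norm_num)]; norm_num [h1]
  have pω : ∀ e s, 0 ≤ s → s ≤ 1 → p (ω (e, s)) = v + rr s • (p e.v - v) := by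
    intro e s hs hs'
    rcases le_total s (1/2) with h | h
    · rw [ω1 _ _ h, vF, rr_of_le h]; simp
    · rw [ω2 _ _ h, pT, rr_of_ge h, cl_of_mem (by linarith) (by linarith)]
      simp only [Ov.incl_v]; congr 2; ring
  have vAC : v ∈ A ∪ C := Or.inr cone.hv
  have mD : ∀ (e : Ov p D) (x : ℝ), 0 ≤ x → x ≤ 1 → v + x • (p e.v - v) ∈ C := by
    intro e x hx hx'
    have := ((cone.memD _).1 e.mem).2
    exact (cone.scale _ (hDC e.mem) x hx (by rw [this]; linarith)).1
  have rr1 : ∀ x : ℝ, 0 ≤ x → x ≤ 1 → rr x ≤ 1 := fun x h h' => rr_le (by norm_num) (by linarith)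
  have ωm : ∀ e x, p (ω (e, cl x)) ∈ A ∪ C := by
    intro e x
    rw [pω _ _ (cl_nonneg _) (cl_le _)]
    exact Or.inr (mD _ _ (rr_nonneg _) (rr1 _ (cl_nonneg _) (cl_le _)))
  let b : dmc (Ov.incl hDA : Ov p D → Ov p A) (fun e => f (T1 (Ov.incl hDC e))) → Ov p (A ∪ C) :=
    dmc.lift (fun a => Ov.incl Set.subset_union_left a) (fun z => Ov.mk (ω (z.1, cl z.2)) (ωm _ _))
      (fun l => Ov.mk (g l).v (by rw [vF]; exact vAC))
      (fun m => by ext; simp [cl_of_ge le_rfl, ω_1])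
      (fun m => by ext; simp [cl_of_le le_rfl, ω_0])
  have cb : Continuous b := dmc.cont_lift (by fun_prop) (by fun_prop) (by fun_prop)
  have bM : ∀ m x, (b (dmc.inM _ _ m x)).v = ω (m, cl x) := fun m x => by
    show ω (m, cl (cl x)) = _
    rw [cl_of_mem (cl_nonneg _) (cl_le _)]
  have pbM : ∀ m x, p (b (dmc.inM _ _ m x)).v = v + rr (cl x) • (p m.v - v) := fun m x => by
    rw [bM, pω _ _ (cl_nonneg _) (cl_le _)]
  have pbL : ∀ l, p (b (dmc.inL _ _ l)).v = v := fun l => vF _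
  have clip : ∀ x y : ℝ, |cl x - cl y| ≤ |x - y| := by
    intro x y
    unfold cl
    rw [max_comm 0, max_comm 0, min_comm 1, min_comm 1]
    exact (abs_max_sub_max_le_abs _ _ _).trans (abs_min_sub_min_le_max _ _ _ _ |>.trans (by simp))
  have hq : ∀ ε > 0, ∃ δ > 0, ∀ m (x x' : ℝ), |x - x'| ≤ δ →
      dist (p (b (dmc.inM _ _ m x)).v) (p (b (dmc.inM _ _ m x')).v) < ε := by
    intro ε hε
    have R0 := cone.R0
    refine ⟨ε / (4 * R), by positivity, fun m x x' hx => ?_⟩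
    rw [pbM, pbM]
    refine (mixdist v _ _ _ (k := 2 * (ε / (4 * R))) (cone.v_nD (hDC m.mem)) ?_).trans_lt ?_
    · refine (rr_lip _ _).trans ?_
      have := clip x x'
      linarith
    · have : 2 * (ε / (4 * R)) * R = ε / 2 := by field_simp; ring
      linarith
  have hqE : ∀ ε > 0, ∃ δ > 0, ∀ m m' : Ov p D, dist (p m.v) (p m'.v) < δ → ∀ x : ℝ,
      dist (p (b (dmc.inM _ _ m x)).v) (p (b (dmc.inM _ _ m' x)).v) < ε := by
    intro ε hε
    refine ⟨ε, hε, fun m m' hm x => ?_⟩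
    rw [pbM, pbM, dist_add_left, dist_smul₀, dist_sub_right, Real.norm_eq_abs,
      abs_of_nonneg (rr_nonneg _)]
    refine lt_of_le_of_lt ?_ hm
    have := rr1 _ (cl_nonneg x) (cl_le x)
    nlinarith [dist_nonneg (x := p m.v) (y := p m'.v)]
  have CEb : CE (fun z => p (b z).v) (fun e => p e.v) b := by
    have TCm : ∀ e t, p (T (e, t)) ∈ C := by
      intro e t
      rw [pT]
      refine (cone.scale _ e.mem _ (by linarith [cl_le t]) ?_).1
      have := cone.s1 _ e.mem
      have := cone.s0 _ e.mem
      nlinarith [cl_nonneg t, cl_le t]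
    let TC : Ov p C × ℝ → Ov p C := fun z => Ov.mk (T z) (TCm _ _)
    have cTC : Continuous TC := by fun_prop
    have vC : ({v} : Set V) ⊆ C := by simpa using cone.hv
    have T0C : ∀ (e : Ov p C), TC (e, 0) = e := fun e => by ext; exact T0 _ _ le_rfl
    have CEf : CE (fun a : Ov p C => v) (fun l : L => v) (fun e => f (T1 e)) := by
      refine ⟨by fun_prop, fun _ => rfl, fun ε hε => ⟨fun l => Ov.incl vC (g l), by fun_prop, ?_, ?_⟩⟩
      · refine CH.trans (g := fun e => TC (e, 1)) ?_ ?_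
        · exact CH.mk' (fun z => TC z) (by fun_prop) (fun x => T0C _) (fun x => rfl) (by simp [hε])
        · refine CH.mk' (fun z => Ov.incl vC (h (T1 z.1, z.2))) (by fun_prop) ?_ ?_ (by simp [hε])
          · intro x; ext; simp only [h0, Ov.incl_v, hT1]; rfl
          · intro x; simp only [h1]
      · refine CH.trans (g := fun l => f (g l)) ?_ ?_
        · exact CH.mk' k ck (by simpa using k0) (by simpa using k1) (by simp [hε])
        · refine CH.mk' (fun z => f (Ov.mk (T (Ov.incl vC (g z.1), z.2))
            (by show _ = _; rw [pT]; simp [vF]))) (by fun_prop) ?_ ?_ (by simp [hε])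
          · intro x; simp only [T0 _ _ le_rfl]; rfl
          · intro x; congr 1; ext; rw [hT1]; rfl
    have ha := dmc.endChangeL (i := (Ov.incl hDA : Ov p D → Ov p A))
      (j := (Ov.incl hDC : Ov p D → Ov p C)) (by fun_prop) (by fun_prop) (φ := fun e => f (T1 e))
      (fun z => p (b z).v) (by simp only [pbL]; exact CEf) hq
    have θm : ∀ (e : Ov p C) t, p (T (e, t)) ∈ A ∪ C := fun e t => Or.inr (TCm _ _)
    let θ : dmc (Ov.incl hDA : Ov p D → Ov p A) (Ov.incl hDC : Ov p D → Ov p C) → Ov p (A ∪ C) :=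
      dmc.lift (fun a => Ov.incl Set.subset_union_left a)
        (fun z => Ov.mk (T (Ov.incl hDC z.1, 1 - rr z.2)) (θm _ _))
        (fun e => Ov.mk (T (e, 1)) (θm _ _))
        (fun m => by ext; simp only [Ov.mk_v]; rw [rr_of_ge (by norm_num), T0 _ _ (by norm_num)]; rfl)
        (fun m => by ext; simp only [Ov.mk_v]; rw [rr_of_le (by norm_num), sub_zero])
    have cθ : Continuous θ := dmc.cont_lift (by fun_prop) (by fun_prop) (by fun_prop)
    have θM : ∀ m t, 0 ≤ t → t ≤ 1 → (θ (dmc.inM _ _ m t)).v = T (Ov.incl hDC m, 1 - rr t) := by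
      intro m t ht ht'
      show T (Ov.incl hDC m, 1 - rr (cl t)) = _
      rw [cl_of_mem ht ht']
    have hθ := CE_theta hp hl cone cA hAD hAB hDA hDC T cT T0 pT θ cθ (fun _ => rfl) θM (fun _ => rfl)
    have pθM : ∀ m t, 0 ≤ t → t ≤ 1 → p (θ (dmc.inM _ _ m t)).v = v + rr t • (p m.v - v) := by
      intro m t ht ht'
      rw [θM _ _ ht ht', pT, cl_of_mem (by linarith [rr1 t ht ht']) (by linarith [rr_nonneg t]),
        sub_sub_cancel]
      rfl
    have pθL : ∀ e, p (θ (dmc.inL _ _ e)).v = v := by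
      intro e
      show p (T (e, 1)) = v
      rw [pT, cl_of_ge le_rfl]; simp
    have bMM : ∀ m x, 0 ≤ x → x ≤ 1 → (b (dmc.mapL (i := (Ov.incl hDA : Ov p D → Ov p A))
        (j := (Ov.incl hDC : Ov p D → Ov p C)) (fun e => f (T1 e)) (dmc.inM _ _ m x))).v
        = ω (m, x) := by
      intro m x hx hx'
      rw [dmc.mapL_inM, bM, cl_of_mem hx hx']
    have same : ∀ z, p (b (dmc.mapL (i := (Ov.incl hDA : Ov p D → Ov p A))
        (j := (Ov.incl hDC : Ov p D → Ov p C)) (fun e => f (T1 e)) z)).v = p (θ z).v := by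
      refine dmc.ind ?_ ?_ ?_
      · intro a; rfl
      · intro m x hx hx'
        rw [bMM _ _ hx hx', pθM _ _ hx hx', pω _ _ hx hx']
      · intro l; rw [pθL]; exact pbL _
    have hba := CE.congr (φ' := fun z => b (dmc.mapL (i := (Ov.incl hDA : Ov p D → Ov p A))
        (j := (Ov.incl hDC : Ov p D → Ov p C)) (fun e => f (T1 e)) z)) hθ same (by
      intro η hη
      refine dmc.ch (fun z => Ov.incl Set.subset_union_left z.1)
        (fun z => if h' : z.2.1 ≤ 1/2 then
            Ov.mk (h (T1 (Ov.incl hDC z.1), z.2.2 * (1 - 2 * z.2.1))).v (by rw [vF]; exact vAC)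
          else Ov.mk (T (Ov.incl hDC z.1, 2 - 2 * z.2.1)) (θm _ _))
        (fun z => Ov.mk (h (T1 z.1, z.2)).v (by rw [vF]; exact vAC)) (by fun_prop) ?_ (by fun_prop)
        ?_ ?_ ?_ ?_ ?_ ?_ ?_ ?_ ?_ ?_ ?_
      · simp only [dite_eq_ite]
        refine Continuous.if_le (by fun_prop) (by fun_prop) (by fun_prop) (by fun_prop) ?_
        intro z hz
        ext
        simp only [Ov.mk_v]
        rw [hz]
        norm_num [h0, hT1]
      · intro m t _ _
        ext
        norm_num
        rw [T0 _ _ le_rfl]; rfl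
      · intro m t _ _
        ext; norm_num
      · intro a; rfl
      · intro m x hx hx'
        ext
        rw [θM _ _ hx hx']
        simp only
        split_ifs with h'
        · rw [rr_of_le h']; simp [h0, hT1]
        · rw [rr_of_ge (by linarith)]; simp only [Ov.mk_v]; congr 2; ring
      · intro a; ext; simp only [h0, Ov.mk_v, hT1]; rfl
      · intro a; rfl
      · intro m x hx hx'
        ext
        rw [bMM _ _ hx hx']
        simp only
        split_ifs with h'
        · rw [ω1 _ _ h']; simp
        · rw [ω2 _ _ (by linarith)]; rfl
      · intro l; ext; simp only [h1]; rfl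
      · intro a t _ _
        show dist (p a.v) (p a.v) < η
        simpa using hη
      · intro m x t hx hx' _ _
        rw [pθM _ _ hx hx']
        simp only
        split_ifs with h'
        · simp only [Ov.mk_v, vF]; rw [rr_of_le h']; simpa using hη
        · simp only [Ov.mk_v]
          rw [pT, rr_of_ge (by linarith), cl_of_mem (by linarith) (by linarith)]
          simp only [Ov.incl_v]
          rw [show 1 - (2 - 2 * x) = 2 * x - 1 by ring]; simpa using hη
      · intro l t _ _
        rw [pθL]; simp only [Ov.mk_v, vF]; simpa using hη)
    simp only [same] at ha
    exact CE.of_comp ha cb (fun _ => rfl) hba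
  have hj' : j = fun x => f (T1 (Ov.incl hDC (φ0 x))) := funext hj
  subst hj'
  have cφ0 := hφ0.1
  have hm := dmc.middleChange (i := (Ov.incl hDA : Ov p D → Ov p A))
    (j := fun e => f (T1 (Ov.incl hDC e))) (by fun_prop) (by fun_prop) (φ := φ0)
    (fun z => p (b z).v) (fun e => p e.v) hφ0 hq hqE
  have ei : (fun m => (Ov.incl hDA : Ov p D → Ov p A) (φ0 m)) = fun m => φA (ι m) := by
    ext m; exact (hι m).symm
  have key : ∀ (i' : X0 → Ov p A) (ei : i' = fun m => φA (ι m))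
      (G : dmc i' (fun m => f (T1 (Ov.incl hDC (φ0 m)))) → Ov p (A ∪ C))
      (GA : ∀ a, (G (dmc.inA _ _ a)).v = a.v)
      (GM : ∀ m x, 0 ≤ x → x ≤ 1 → (G (dmc.inM _ _ m x)).v = ω (φ0 m, x))
      (GLL : ∀ l, (G (dmc.inL _ _ l)).v = (g l).v)
      (CEG : CE (fun z => p (G z).v) (fun e => p e.v) G),
      CE (fun x => p (φ x).v) (fun e => p e.v) φ := by
    intro i' ei G GA GM GLL CEG
    subst ei
    have GM' : ∀ m x, (G (dmc.inM _ _ m x)).v = ω (φ0 m, cl x) := by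
      intro m x
      rw [← dmc.inM_cl, GM _ _ (cl_nonneg _) (cl_le _)]
    have := dmc.endChange cι (by fun_prop) (φ := φA) (fun z => p (G z).v)
      (by simp only [GA]; exact hφA) (by
        intro ε hε
        obtain ⟨δ, hδ, h⟩ := hq ε hε
        refine ⟨δ, hδ, fun m x x' hx => ?_⟩
        have := h (φ0 m) x x' hx
        rw [GM', GM', ← bM, ← bM]; exact this)
    have h2 := CE.comp CEG this
    have e : φ = fun x => G (dmc.mapA φA x) := by
      ext z
      refine dmc.ind (P := fun z => (φ z).v = (G (dmc.mapA φA z)).v) ?_ ?_ ?_ z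
      · intro a; rw [eA]; exact (GA _).symm
      · intro m x hx hx'; rw [eM _ _ hx hx', dmc.mapA_inM, GM _ _ hx hx']
      · intro a; rw [eL]; exact (GLL _).symm
    rw [e]; exact h2
  refine key _ ei (fun z => b (dmc.mapM _ _ φ0 z)) (fun a => rfl) ?_ (fun a => rfl) (CE.comp CEb hm)
  intro m x hx hx'
  rw [dmc.mapM_inM, bM, cl_of_mem hx hx']

end ConeStep2

section ANE

/-- absolute neighbourhood extensor, for a subset -/
def ANEs {Z : Type} [TopologicalSpace Z] (S : Set Z) : Prop :=
  ∀ (Y : Type) [MetricSpace Y] (Y0 : Set Y) (f : Y → Z), IsClosed Y0 → ContinuousOn f Y0 →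
    Set.MapsTo f Y0 S → ∃ (Ω : Set Y) (F : Y → Z), IsOpen Ω ∧ Y0 ⊆ Ω ∧ ContinuousOn F Ω ∧
      Set.MapsTo F Ω S ∧ Set.EqOn F f Y0

def ANE (Z : Type) [TopologicalSpace Z] : Prop :=
  ∀ (Y : Type) [MetricSpace Y] (Y0 : Set Y) (f : Y → Z), IsClosed Y0 → ContinuousOn f Y0 →
    ∃ (Ω : Set Y) (F : Y → Z), IsOpen Ω ∧ Y0 ⊆ Ω ∧ ContinuousOn F Ω ∧ Set.EqOn F f Y0

variable {Z X : Type} [TopologicalSpace Z] [TopologicalSpace X]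

lemma ANEs.ane (h : ANEs (Set.univ : Set Z)) : ANE Z := by
  intro Y _ Y0 f h0 hf
  obtain ⟨Ω, F, a, b, c, -, d⟩ := h Y Y0 f h0 hf (fun _ _ => trivial)
  exact ⟨Ω, F, a, b, c, d⟩

lemma ANEs.subtype {S : Set Z} (h : ANEs S) : ANE S := by
  intro Y _ Y0 f h0 hf
  obtain ⟨Ω, F, a, b, c, d, e⟩ := h Y Y0 (fun y => (f y).1) h0
    (continuous_subtype_val.comp_continuousOn hf) (fun y _ => (f y).2)
  classical
  refine ⟨Ω, fun y => if hy : y ∈ Ω then ⟨F y, d hy⟩ else f y, a, b, ?_, ?_⟩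
  · rw [continuousOn_iff_continuous_restrict]
    have : Continuous fun y : Ω => (⟨F y, d y.2⟩ : S) :=
      (continuousOn_iff_continuous_restrict.1 c).subtype_mk _
    convert this using 1
    ext y; simp [Set.restrict]
  · intro y hy
    simp only [dif_pos (b hy)]
    exact Subtype.ext (e hy)

lemma ANE.range (h : ANE X) {g : X → Z} (hg : Topology.IsEmbedding g) : ANEs (Set.range g) := by
  intro Y _ Y0 f h0 hf hm
  rcases isEmpty_or_nonempty X with hX | hX
  · have : Y0 = ∅ := by
      ext y; constructor
      · intro hy; obtain ⟨x, -⟩ := hm hy; exact hX.elim x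
      · simp
    exact ⟨∅, f, isOpen_empty, by simp [this], by simp, by simp [Set.MapsTo], by simp [this, Set.EqOn]⟩
  have gi : ∀ y ∈ Y0, g (Function.invFun g (f y)) = f y := fun y hy => Function.invFun_eq (hm hy)
  obtain ⟨Ω, F, a, b, c, d⟩ := h Y Y0 (fun y => Function.invFun g (f y)) h0 (by
    rw [hg.isInducing.continuousOn_iff]
    exact hf.congr gi)
  refine ⟨Ω, fun y => g (F y), a, b, hg.continuous.comp_continuousOn c, fun y _ => ⟨_, rfl⟩, ?_⟩
  intro y hy
  simp only [d hy, gi y hy]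

lemma ANEs.union {Z1 Z2 : Set Z} (c1 : IsClosed Z1) (c2 : IsClosed Z2) (h1 : ANEs Z1) (h2 : ANEs Z2)
    (h12 : ANEs (Z1 ∩ Z2)) : ANEs (Z1 ∪ Z2) := by
  classical
  intro Y _ Y0 f h0 hf hm
  have cl1 : IsClosed (Y0 ∩ f ⁻¹' Z1) := hf.preimage_isClosed_of_isClosed h0 c1
  have cl2 : IsClosed (Y0 ∩ f ⁻¹' Z2) := hf.preimage_isClosed_of_isClosed h0 c2
  rcases Set.eq_empty_or_nonempty (Y0 ∩ f ⁻¹' Z1) with e1 | n1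
  · obtain ⟨Ω, F, a, b, c, d, e⟩ := h2 Y Y0 f h0 hf (fun y hy => (hm hy).resolve_left
      (fun h => by have : y ∈ Y0 ∩ f ⁻¹' Z1 := ⟨hy, h⟩
                   rw [e1] at this; exact this))
    exact ⟨Ω, F, a, b, c, fun y hy => Or.inr (d hy), e⟩
  rcases Set.eq_empty_or_nonempty (Y0 ∩ f ⁻¹' Z2) with e2 | n2
  · obtain ⟨Ω, F, a, b, c, d, e⟩ := h1 Y Y0 f h0 hf (fun y hy => (hm hy).resolve_right
      (fun h => by have : y ∈ Y0 ∩ f ⁻¹' Z2 := ⟨hy, h⟩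
                   rw [e2] at this; exact this))
    exact ⟨Ω, F, a, b, c, fun y hy => Or.inl (d hy), e⟩
  set Y1 := Y0 ∩ f ⁻¹' Z1 with hY1
  set Y2 := Y0 ∩ f ⁻¹' Z2 with hY2
  let N1 : Set Y := {y | Metric.infDist y Y1 ≤ Metric.infDist y Y2}
  let N2 : Set Y := {y | Metric.infDist y Y2 ≤ Metric.infDist y Y1}
  have cN1 : IsClosed N1 := isClosed_le (Metric.continuous_infDist_pt _) (Metric.continuous_infDist_pt _)
  have cN2 : IsClosed N2 := isClosed_le (Metric.continuous_infDist_pt _) (Metric.continuous_infDist_pt _)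
  have Y01 : ∀ y ∈ Y0, y ∈ N1 → y ∈ Y1 := by
    intro y hy hN
    rcases hm hy with h | h
    · exact ⟨hy, h⟩
    · have hh : Metric.infDist y Y2 = 0 := Metric.infDist_zero_of_mem ⟨hy, h⟩
      have : Metric.infDist y Y1 = 0 := le_antisymm (by rw [← hh]; exact hN) Metric.infDist_nonneg
      exact (cl1.mem_iff_infDist_zero n1).2 this
  have Y02 : ∀ y ∈ Y0, y ∈ N2 → y ∈ Y2 := by
    intro y hy hN
    rcases hm hy with h | h
    · have hh : Metric.infDist y Y1 = 0 := Metric.infDist_zero_of_mem ⟨hy, h⟩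
      have : Metric.infDist y Y2 = 0 := le_antisymm (by rw [← hh]; exact hN) Metric.infDist_nonneg
      exact (cl2.mem_iff_infDist_zero n2).2 this
    · exact ⟨hy, h⟩
  obtain ⟨Ω, G, oΩ, sΩ, cG, mG, eG⟩ := h12 Y (Y1 ∩ Y2) f (cl1.inter cl2)
    (hf.mono fun y hy => hy.1.1) (fun y hy => ⟨hy.1.2, hy.2.2⟩)
  obtain ⟨O, oO, sO, cO⟩ := normal_exists_closure_subset (cl1.inter cl2) oΩ sΩ
  have part : ∀ (Yi Zi : Set _) (hYi : Yi = Y0 ∩ f ⁻¹' Zi) (cYi : IsClosed Yi)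
      (hZ : Zi = Z1 ∨ Zi = Z2) (hs : ANEs Zi), ∃ (Ω' : Set Y) (F : Y → Z), IsOpen Ω' ∧ Yi ⊆ Ω' ∧
      ContinuousOn F Ω' ∧ Set.MapsTo F Ω' Zi ∧ Set.EqOn F f Yi ∧ 
      (∀ y ∈ N1, y ∈ N2 → y ∈ O → F y = G y) := by
    intro Yi Zi hYi cYi hZ hs
    have hov : ∀ y ∈ Yi, y ∈ N1 → y ∈ N2 → G y = f y := fun y hy a b => 
      eG ⟨Y01 y (hYi ▸ hy).1 a, Y02 y (hYi ▸ hy).1 b⟩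
    let f' : Y → Z := fun y => if y ∈ Yi then f y else G y
    have e1 : Set.EqOn f' f Yi := fun y hy => if_pos hy
    have e2 : Set.EqOn f' G (N1 ∩ N2 ∩ closure O) := fun y hy => by
      by_cases h : y ∈ Yi
      · rw [e1 h, hov y h hy.1.1 hy.1.2]
      · exact if_neg h
    obtain ⟨Ω', F, a, b, c, d, e⟩ := hs Y (Yi ∪ (N1 ∩ N2 ∩ closure O)) f'
      (cYi.union ((cN1.inter cN2).inter isClosed_closure)) (by
        refine ContinuousOn.union_of_isClosed ?_ ?_ cYi ((cN1.inter cN2).inter isClosed_closure)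
        · exact (hf.mono fun y hy => (hYi ▸ hy).1).congr e1
        · exact (cG.mono fun y hy => cO hy.2).congr e2) (by
        rintro y (hy | hy)
        · rw [e1 hy]; exact (hYi ▸ hy).2
        · rw [e2 hy]
          have := mG (cO hy.2)
          rcases hZ with rfl | rfl
          · exact this.1
          · exact this.2)
    refine ⟨Ω', F, a, Set.subset_union_left.trans b, c, d, ?_, ?_⟩
    · intro y hy; rw [e (Or.inl hy), e1 hy]
    · intro y a b h
      have : y ∈ N1 ∩ N2 ∩ closure O := ⟨⟨a, b⟩, subset_closure h⟩
      rw [e (Or.inr this), e2 this]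
  obtain ⟨Ω1, F1, o1, s1, k1, m1, q1, r1⟩ := part Y1 Z1 hY1 cl1 (Or.inl rfl) h1
  obtain ⟨Ω2, F2, o2, s2, k2, m2, q2, r2⟩ := part Y2 Z2 hY2 cl2 (Or.inr rfl) h2
  let F : Y → Z := fun y => if y ∈ N1 then F1 y else F2 y
  let W : Set Y := (N1 ∩ Ω1ᶜ ∪ N2 ∩ Ω2ᶜ ∪ (N1 ∩ N2) ∩ Oᶜ)ᶜ
  have W1 : ∀ y ∈ W, y ∈ N1 → y ∈ Ω1 := fun y hy h => by
    by_contra hh; exact hy (Or.inl (Or.inl ⟨h, hh⟩))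
  have W2 : ∀ y ∈ W, y ∈ N2 → y ∈ Ω2 := fun y hy h => by
    by_contra hh; exact hy (Or.inl (Or.inr ⟨h, hh⟩))
  have W3 : ∀ y ∈ W, y ∈ N1 → y ∈ N2 → y ∈ O := fun y hy h h' => by
    by_contra hh; exact hy (Or.inr ⟨⟨h, h'⟩, hh⟩)
  have FN1 : ∀ y ∈ N1, F y = F1 y := fun y h => if_pos h
  have FN2 : ∀ y ∈ W, y ∈ N2 → F y = F2 y := fun y hy h => by
    by_cases h' : y ∈ N1
    · rw [FN1 y h', r1 y h' h (W3 y hy h' h), r2 y h' h (W3 y hy h' h)]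
    · exact if_neg h'
  have NN : ∀ y, y ∈ N1 ∨ y ∈ N2 := fun y => le_total (Metric.infDist y Y1) (Metric.infDist y Y2)
  refine ⟨W, F, ?_, ?_, ?_, ?_, ?_⟩
  · rw [isOpen_compl_iff]
    exact ((cN1.inter o1.isClosed_compl).union (cN2.inter o2.isClosed_compl)).union
      ((cN1.inter cN2).inter oO.isClosed_compl)
  · intro y hy
    rintro ((⟨a, b⟩ | ⟨a, b⟩) | ⟨⟨a, a'⟩, b⟩)
    · exact b (s1 (Y01 y hy a))
    · exact b (s2 (Y02 y hy a))
    · exact b (sO ⟨Y01 y hy a, Y02 y hy a'⟩)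
  · rw [continuousOn_iff_continuous_restrict]
    rw [← continuousOn_univ]
    have : (Set.univ : Set W) = Subtype.val ⁻¹' N1 ∪ Subtype.val ⁻¹' N2 := by
      ext y; simpa using NN y.1
    rw [this]
    refine ContinuousOn.union_of_isClosed ?_ ?_ (cN1.preimage continuous_subtype_val)
      (cN2.preimage continuous_subtype_val)
    · refine ContinuousOn.congr (f := fun y : W => F1 y.1) ?_ (fun y hy => FN1 y hy)
      exact k1.comp continuous_subtype_val.continuousOn (fun y hy => W1 y.1 y.2 hy)
    · refine ContinuousOn.congr (f := fun y : W => F2 y.1) ?_ (fun y hy => FN2 y y.2 hy)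
      exact k2.comp continuous_subtype_val.continuousOn (fun y hy => W2 y.1 y.2 hy)
  · intro y hy
    rcases NN y with h | h
    · rw [FN1 y h]; exact Or.inl (m1 (W1 y hy h))
    · rw [FN2 y hy h]; exact Or.inr (m2 (W2 y hy h))
  · intro y hy
    rcases NN y with h | h
    · rw [FN1 y h]; exact q1 (Y01 y hy h)
    · by_cases h' : y ∈ N1
      · rw [FN1 y h']; exact q1 (Y01 y hy h')
      · show (if y ∈ N1 then F1 y else F2 y) = _
        rw [if_neg h']; exact q2 (Y02 y hy h)

/-- relative version in an open subset -/
lemma ANE.rel (h : ANE X) {Y : Type} [MetricSpace Y] {Y0 O : Set Y} {f : Y → X} (c0 : IsClosed Y0)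
    (oO : IsOpen O) (hf : ContinuousOn f (Y0 ∩ O)) : ∃ (Ω : Set Y) (F : Y → X), IsOpen Ω ∧
      Y0 ∩ O ⊆ Ω ∧ Ω ⊆ O ∧ ContinuousOn F Ω ∧ Set.EqOn F f (Y0 ∩ O) := by
  classical
  obtain ⟨Ω, F, a, b, c, d⟩ := h O (Subtype.val ⁻¹' Y0) (fun y => f y.1)
    (c0.preimage continuous_subtype_val)
    (hf.comp continuous_subtype_val.continuousOn (fun y hy => ⟨hy, y.2⟩))
  refine ⟨Subtype.val '' Ω, fun y => if hy : y ∈ O then F ⟨y, hy⟩ else f y,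
    oO.isOpenMap_subtype_val _ a, ?_, ?_, ?_, ?_⟩
  · intro y hy; exact ⟨⟨y, hy.2⟩, b hy.1, rfl⟩
  · rintro _ ⟨y, -, rfl⟩; exact y.2
  · rintro _ ⟨y, hy, rfl⟩
    refine ContinuousAt.continuousWithinAt ?_
    rw [← oO.isOpenEmbedding_subtypeVal.continuousAt_iff (f := Subtype.val) (x := y)]
    have := c.continuousAt (a.mem_nhds hy)
    have e : (fun y => if hy : y ∈ O then F ⟨y, hy⟩ else f y) ∘ Subtype.val = F := by
      funext z; simp
    rw [e]; exact this
  · intro y hy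
    simp only [dif_pos hy.2]
    exact d (x := ⟨y, hy.2⟩) hy.1

end ANE

/-- compact ENR, in terms of extension properties -/
def CENR (X : Type) [TopologicalSpace X] : Prop :=
  CompactSpace X ∧ (∃ (n : ℕ) (e : X → Fin n → ℝ), Continuous e ∧ Function.Injective e) ∧ ANE X

lemma emb_of {X : Type} [TopologicalSpace X] {W : Type} [NormedAddCommGroup W] [NormedSpace ℝ W]
    [FiniteDimensional ℝ W] {e : X → W} (ce : Continuous e) (ie : Function.Injective e) :
    ∃ (n : ℕ) (e : X → Fin n → ℝ), Continuous e ∧ Function.Injective e := by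
  let E := ContinuousLinearEquiv.ofFinrankEq (𝕜 := ℝ) (E := W)
    (F := Fin (Module.finrank ℝ W) → ℝ) (by simp)
  exact ⟨_, fun x => E (e x), by fun_prop, E.injective.comp ie⟩

lemma CENR.t2 {X : Type} [TopologicalSpace X] (h : CENR X) : T2Space X := by
  obtain ⟨-, ⟨n, e, ce, ie⟩, -⟩ := h
  exact T2Space.of_injective_continuous ie ce

lemma emb_cpt {X Y : Type} [TopologicalSpace X] [TopologicalSpace Y] [CompactSpace X] [T2Space Y]
    {e : X → Y} (ce : Continuous e) (ie : Function.Injective e) : Topology.IsClosedEmbedding e :=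
  ce.isClosedEmbedding ie

lemma CENR.retr {X : Type} [TopologicalSpace X] [Nonempty X] (h : CENR X) :
    ∃ (n : ℕ) (e : X → Fin n → ℝ) (U : Set (Fin n → ℝ)) (ρ : (Fin n → ℝ) → X),
      Topology.IsClosedEmbedding e ∧ IsOpen U ∧ (∀ x, e x ∈ U) ∧ ContinuousOn ρ U ∧
      ∀ x, ρ (e x) = x := by
  obtain ⟨c, ⟨n, e, ce, ie⟩, a⟩ := h
  have he := emb_cpt ce ie
  have l : ∀ x, Function.invFun e (e x) = x := Function.leftInverse_invFun ie
  obtain ⟨U, ρ, oU, sU, cρ, eρ⟩ := a (Fin n → ℝ) (Set.range e) (Function.invFun e) he.isClosed_range (by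
    rw [he.isInducing.continuousOn_iff]
    refine continuousOn_id.congr ?_
    rintro _ ⟨x, rfl⟩; simp [l])
  exact ⟨n, e, U, ρ, he, oU, fun x => sU ⟨x, rfl⟩, cρ, fun x => by rw [eρ ⟨x, rfl⟩, l]⟩

lemma CENR.homeo {X Y : Type} [TopologicalSpace X] [TopologicalSpace Y] (h : CENR X) (e : X ≃ₜ Y) :
    CENR Y := by
  obtain ⟨c, ⟨n, g, cg, ig⟩, a⟩ := h
  have hr := a.range e.isEmbedding
  rw [e.surjective.range_eq] at hr
  exact ⟨e.compactSpace, ⟨n, fun y => g (e.symm y), by fun_prop, ig.comp e.symm.injective⟩, hr.ane⟩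

namespace dmc
variable {A M L Z : Type} [TopologicalSpace A] [TopologicalSpace M] [TopologicalSpace L]
  [TopologicalSpace Z] {i : M → A} {j : M → L}

lemma ind' {P : dmc i j → Prop} (hA : ∀ a, P (inA i j a))
    (hM : ∀ m s, 0 < s → s < 1 → P (inM i j m s)) (hL : ∀ l, P (inL i j l)) (z) : P z := by
  refine ind hA ?_ hL z
  intro m s hs hs'
  rcases hs.eq_or_lt with h | h
  · rw [inM_bot _ h.ge]; exact hL _
  rcases hs'.eq_or_lt with h' | h'
  · rw [inM_top _ h'.ge]; exact hA _
  exact hM m s h h'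

def sg : dmc i j → ℝ := lift (fun _ => 1) (fun z => z.2) (fun _ => 0) (fun _ => rfl) (fun _ => rfl)
@[simp] lemma sg_A (a) : sg (inA i j a) = 1 := rfl
@[simp] lemma sg_L (a) : sg (inL i j a) = 0 := rfl
@[simp] lemma sg_M' (m s) : sg (inM i j m s) = cl s := rfl
@[fun_prop] lemma cont_sg : Continuous (sg : dmc i j → ℝ) :=
  cont_lift (by fun_prop) (by fun_prop) (by fun_prop)
lemma sg_nonneg (z : dmc i j) : 0 ≤ sg z := by
  refine ind (P := fun z => 0 ≤ sg z) ?_ ?_ ?_ z <;> intros <;> simp [cl_nonneg]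
lemma sg_le (z : dmc i j) : sg z ≤ 1 := by
  refine ind (P := fun z => sg z ≤ 1) ?_ ?_ ?_ z <;> intros <;> simp [cl_le]

lemma inj_of {Z : Type} {h : dmc i j → Z} (τ : Z → ℝ) (tA : ∀ a, τ (h (inA i j a)) = 1)
    (tL : ∀ a, τ (h (inL i j a)) = 0) (tM : ∀ m s, 0 < s → s < 1 → τ (h (inM i j m s)) = s)
    (iA : Function.Injective fun a => h (inA i j a)) (iL : Function.Injective fun a => h (inL i j a))
    (iM : ∀ m m' s, 0 < s → s < 1 → h (inM i j m s) = h (inM i j m' s) → m = m') :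
    Function.Injective h := by
  intro z z' e
  have et := congrArg τ e
  revert e et
  refine ind' (P := fun z => h z = h z' → τ (h z) = τ (h z') → z = z') ?_ ?_ ?_ z
  · intro a
    refine ind' (P := fun z' => h (inA i j a) = h z' → τ (h (inA i j a)) = τ (h z') → inA i j a = z') ?_ ?_ ?_ z'
    · intro a' e et; rw [iA e]
    · intro m' t ht ht' e et; rw [tA, tM _ _ ht ht'] at et; linarith
    · intro l' e et; rw [tA, tL] at et; linarith
  · intro m s hs hs'
    refine ind' (P := fun z' => h (inM i j m s) = h z' → τ (h (inM i j m s)) = τ (h z') → inM i j m s = z') ?_ ?_ ?_ z'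
    · intro a' e et; rw [tA, tM _ _ hs hs'] at et; linarith
    · intro m' t ht ht' e et; rw [tM _ _ hs hs', tM _ _ ht ht'] at et; subst et; rw [iM _ _ _ hs hs' e]
    · intro l' e et; rw [tL, tM _ _ hs hs'] at et; linarith
  · intro l
    refine ind' (P := fun z' => h (inL i j l) = h z' → τ (h (inL i j l)) = τ (h z') → inL i j l = z') ?_ ?_ ?_ z'
    · intro a' e et; rw [tA, tL] at et; linarith
    · intro m' t ht ht' e et; rw [tL, tM _ _ ht ht'] at et; linarith
    · intro l' e et; rw [iL e]

lemma compact [CompactSpace A] [CompactSpace M] [CompactSpace L] : CompactSpace (dmc i j) := by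
  have : CompactSpace (Set.Icc (0:ℝ) 1) := inferInstance
  let P : A ⊕ (M × Set.Icc (0:ℝ) 1) ⊕ L → dmc i j :=
    Sum.elim (inA i j) (Sum.elim (fun z => inM i j z.1 z.2.1) (inL i j))
  have cP : Continuous P := continuous_sum_dom.2 ⟨by show Continuous (inA i j); fun_prop,
    continuous_sum_dom.2 ⟨by
      show Continuous (fun z : M × Set.Icc (0:ℝ) 1 => inM i j z.1 z.2.1); fun_prop,
      by show Continuous (inL i j); fun_prop⟩⟩
  have sP : Function.Surjective P := by
    intro z
    refine ind (P := fun z => ∃ x, P x = z) ?_ ?_ ?_ z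
    · intro a; exact ⟨Sum.inl a, rfl⟩
    · intro m s hs hs'; exact ⟨Sum.inr (Sum.inl (m, ⟨s, hs, hs'⟩)), rfl⟩
    · intro a; exact ⟨Sum.inr (Sum.inr a), rfl⟩
  exact sP.compactSpace cP

section emb
variable {WA WM WL : Type} [NormedAddCommGroup WA] [NormedSpace ℝ WA] [NormedAddCommGroup WM]
  [NormedSpace ℝ WM] [NormedAddCommGroup WL] [NormedSpace ℝ WL]

/-- explicit embedding -/
def emb (i : M → A) (j : M → L) (eA : A → WA) (eM : M → WM) (eL : L → WL) :
    dmc i j → WA × WM × ℝ × WL :=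
  lift (fun a => (eA a, 0, 1, 0))
    (fun z => (z.2 • eA (i z.1), (z.2 * (1 - z.2)) • eM z.1, z.2, (1 - z.2) • eL (j z.1)))
    (fun l => (0, 0, 0, eL l)) (fun m => by simp) (fun m => by simp)

lemma cont_emb (ci : Continuous i) (cj : Continuous j) {eA : A → WA} {eM : M → WM} {eL : L → WL}
    (cA : Continuous eA) (cM : Continuous eM) (cL : Continuous eL) :
    Continuous (emb i j eA eM eL) := cont_lift (by fun_prop) (by fun_prop) (by fun_prop)

lemma inj_emb {eA : A → WA} {eM : M → WM} {eL : L → WL} (iA : Function.Injective eA)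
    (iM : Function.Injective eM) (iL : Function.Injective eL) :
    Function.Injective (emb i j eA eM eL) := by
  have hM : ∀ m s, 0 < s → s < 1 → emb i j eA eM eL (inM i j m s) =
      (s • eA (i m), (s * (1 - s)) • eM m, s, (1 - s) • eL (j m)) := by
    intro m s hs hs'
    show (cl s • eA (i m), (cl s * (1 - cl s)) • eM m, cl s, (1 - cl s) • eL (j m)) = _
    rw [cl_of_mem hs.le hs'.le]
  refine inj_of (fun z => z.2.2.1) (fun _ => rfl) (fun _ => rfl) ?_ ?_ ?_ ?_
  · intro m s hs hs'; rw [hM m s hs hs']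
  · intro a a' h; exact iA (congrArg (fun z => z.1) h)
  · intro a a' h; exact iL (congrArg (fun z => z.2.2.2) h)
  · intro m m' s hs hs' h
    rw [hM m s hs hs', hM m' s hs hs'] at h
    have h2 := congrArg (fun z => z.2.1) h
    have : s * (1 - s) ≠ 0 := (mul_pos hs (by linarith)).ne'
    exact iM (smul_right_injective _ this h2)
end emb

lemma embeds (ci : Continuous i) (cj : Continuous j)
    (hA : ∃ (n : ℕ) (e : A → Fin n → ℝ), Continuous e ∧ Function.Injective e)
    (hM : ∃ (n : ℕ) (e : M → Fin n → ℝ), Continuous e ∧ Function.Injective e)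
    (hL : ∃ (n : ℕ) (e : L → Fin n → ℝ), Continuous e ∧ Function.Injective e) :
    ∃ (n : ℕ) (e : dmc i j → Fin n → ℝ), Continuous e ∧ Function.Injective e := by
  obtain ⟨a, eA, cA, iA⟩ := hA
  obtain ⟨m, eM, cM, iM⟩ := hM
  obtain ⟨l, eL, cL, iL⟩ := hL
  exact emb_of (cont_emb ci cj cA cM cL) (inj_emb iA iM iL)

/-- mapping cylinders are extensors -/
lemma cyl (cj : Continuous j) (hM : CENR M) (hL : CENR L) : ANE (dmc (fun m : M => m) j) := by
  classical
  intro Y _ Y0 f c0 hf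
  rcases isEmpty_or_nonempty Y with hY | hY'
  · exact ⟨∅, f, isOpen_empty, fun y => hY.elim y, by simp, fun y => hY.elim y⟩
  obtain ⟨y0⟩ := hY'
  have nL : Nonempty L := by
    refine ind (P := fun _ => Nonempty L) ?_ ?_ ?_ (f y0)
    · intro a; exact ⟨j a⟩
    · intro a _ _ _; exact ⟨j a⟩
    · intro l; exact ⟨l⟩
  obtain ⟨nl, e, U, ρ, he, oU, eU, cρ, ρe⟩ := hL.retr
  let R : dmc (fun m : M => m) j → L := lift j (fun z => j z.1) (fun l => l) (fun _ => rfl)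
    (fun _ => rfl)
  have cR : Continuous R := cont_lift cj (by fun_prop) (by fun_prop)
  obtain ⟨Ω, l, oΩ, sΩ, cl1, el⟩ := hL.2.2 Y Y0 (fun y => R (f y)) c0 (cR.comp_continuousOn hf)
  rcases isEmpty_or_nonempty M with eM | nM
  · refine ⟨Ω, fun y => inL _ _ (l y), oΩ, sΩ, by fun_prop, ?_⟩
    intro y hy
    simp only [el hy]
    refine ind (P := fun z => inL _ _ (R z) = z) ?_ ?_ ?_ (f y)
    · intro a; exact eM.elim a
    · intro a; exact eM.elim a
    · intro l; rfl
  obtain ⟨cptM, ⟨nm, ε, cε, iε⟩, aM⟩ := hM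
  have cptL := hL.1
  have hε := emb_cpt cε iε
  obtain ⟨m0⟩ := id nM
  let mc : dmc (fun m : M => m) j → M := lift (fun m => m) (fun z => if 0 < z.2 then z.1 else m0)
    (fun _ => m0) (fun m => by simp) (fun m => by simp)
  let ξ : dmc (fun m : M => m) j → Fin nm → ℝ := lift (fun m => ε m) (fun z => z.2 • ε z.1)
    (fun _ => 0) (fun m => by simp) (fun m => by simp)
  have cξ : Continuous ξ := cont_lift cε (by fun_prop) (by fun_prop)
  have hξ : ∀ z, ξ z = sg z • ε (mc z) := by
    refine ind' ?_ ?_ ?_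
    · intro m; show ε m = (1:ℝ) • ε m; simp
    · intro m s hs hs'
      show cl s • ε m = cl s • ε (if 0 < cl s then m else m0)
      rw [if_pos (by rwa [cl_of_mem hs.le hs'.le])]
    · intro l; show 0 = (0:ℝ) • ε m0; simp
  have rec1 : ∀ z : dmc (fun m : M => m) j, 0 < sg z → inM _ _ (mc z) (sg z) = z := by
    refine ind' ?_ ?_ ?_
    · intro m _; show inM _ _ m 1 = _; exact inM_top _ le_rfl
    · intro m s hs hs' _
      show inM _ _ (if 0 < cl s then m else m0) (cl s) = _
      rw [if_pos (by rwa [cl_of_mem hs.le hs'.le]), inM_cl]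
    · intro l h; simp at h
  have rec0 : ∀ z : dmc (fun m : M => m) j, sg z = 0 → inL _ _ (R z) = z := by
    refine ind' ?_ ?_ ?_
    · intro m h; simp at h
    · intro m s hs hs' h; rw [sg_M', cl_of_mem hs.le hs'.le] at h; linarith
    · intro l _; rfl
  let t : dmc (fun m : M => m) j → (Fin nl → ℝ) × ℝ × (Fin nm → ℝ) := fun z => (e (R z), sg z, ξ z)
  have ct : Continuous t := by have := he.continuous; fun_prop
  have it : Function.Injective t := by
    intro z z' h
    have h1 : R z = R z' := he.injective (congrArg (fun z => z.1) h)
    have h2 : sg z = sg z' := congrArg (fun z => z.2.1) h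
    have h3 : ξ z = ξ z' := congrArg (fun z => z.2.2) h
    rcases (sg_nonneg z).eq_or_lt with h0 | h0
    · rw [← rec0 z h0.symm, h1, rec0 z' (by rw [← h2, ← h0])]
    · have : mc z = mc z' := by
        rw [hξ, hξ, ← h2] at h3
        exact iε (smul_right_injective _ h0.ne' h3)
      rw [← rec1 z h0, this, h2, rec1 z' (h2 ▸ h0)]
  have cptZ : CompactSpace (dmc (fun m : M => m) j) := compact
  have het := emb_cpt ct it
  have ctest : ∀ (F : Y → dmc (fun m : M => m) j) (y : Y), ContinuousAt (fun y => e (R (F y))) y →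
      ContinuousAt (fun y => sg (F y)) y → ContinuousAt (fun y => ξ (F y)) y → ContinuousAt F y := by
    intro F y h1 h2 h3
    rw [het.isInducing.continuousAt_iff]
    exact h1.prodMk (h2.prodMk h3)
  obtain ⟨S', hS'⟩ := ContinuousMap.exists_restrict_eq c0
    (⟨fun y => sg (f y.1), by
      have := continuousOn_iff_continuous_restrict.1 (cont_sg.comp_continuousOn hf); exact this⟩ :
      C(Y0, ℝ))
  let S : Y → ℝ := fun y => cl (S' y)
  have cS : Continuous S := by have := S'.continuous; fun_prop
  have eS : ∀ y ∈ Y0, S y = sg (f y) := by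
    intro y hy
    have := congrArg (fun g => g ⟨y, hy⟩) hS'
    have h2 : S' y = sg (f y) := this
    show cl (S' y) = _
    rw [h2, cl_of_mem (sg_nonneg _) (sg_le _)]
  let P : Set Y := Y0 ∩ (fun y => sg (f y)) ⁻¹' {0}
  have cP : IsClosed P := (cont_sg.comp_continuousOn hf).preimage_isClosed_of_isClosed c0
    isClosed_singleton
  have sgP : ∀ y ∈ Y0, y ∉ P → 0 < sg (f y) := by
    intro y hy hP
    refine lt_of_le_of_ne (sg_nonneg _) (fun h => hP ⟨hy, h.symm⟩)
  obtain ⟨W, x, oW, sW, sW', cx, ex⟩ := aM.rel (f := fun y => mc (f y)) c0 cP.isOpen_compl (by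
    rw [hε.isInducing.continuousOn_iff]
    have h1 : ContinuousOn (fun y => (sg (f y))⁻¹ • ξ (f y)) (Y0 ∩ Pᶜ) := by
      refine ContinuousOn.smul (f := fun y => (sg (f y))⁻¹) (g := fun y => ξ (f y)) (ContinuousOn.inv₀ (f := fun y => sg (f y)) ?_ ?_) ?_
      · exact (cont_sg.comp_continuousOn hf).mono Set.inter_subset_left
      · intro y hy; exact (sgP y hy.1 hy.2).ne'
      · exact (cξ.comp_continuousOn hf).mono Set.inter_subset_left
    refine h1.congr ?_
    intro y hy
    have := (sgP y hy.1 hy.2).ne'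
    simp only [hξ, smul_smul, inv_mul_cancel₀ this, one_smul, Function.comp])
  have jx : ∀ y ∈ Y0, y ∉ P → j (x y) = l y := by
    intro y hy hP
    rw [ex ⟨hy, hP⟩, el hy]
    have h0 := sgP y hy hP
    show j (mc (f y)) = R (f y)
    conv_rhs => rw [← rec1 _ h0]
    rfl
  rcases P.eq_empty_or_nonempty with hP | hP
  · refine ⟨W, fun y => inM _ _ (x y) (S y), oW, ?_, ?_, ?_⟩
    · intro y hy; exact sW ⟨hy, by simp [hP]⟩
    · have : Continuous fun z : M × ℝ => inM (fun m : M => m) j z.1 z.2 := by fun_prop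
      exact this.comp_continuousOn (cx.prodMk cS.continuousOn)
    · intro y hy
      have hyP : y ∉ P := by simp [hP]
      simp only
      rw [ex ⟨hy, hyP⟩, eS y hy]
      exact rec1 _ (sgP y hy hyP)
  obtain ⟨κ, hκ, hκU⟩ := (isCompact_range he.continuous).exists_thickening_subset_open oU (by
    rintro _ ⟨l, rfl⟩; exact eU l)
  let W2 : Set Y := (W ∩ Ω) ∩ {y | dist (e (j (x y))) (e (l y)) - min κ (Metric.infDist y P) < 0}
  have ce := he.continuous
  have cjx : ContinuousOn (fun y => e (j (x y))) (W ∩ Ω) :=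
    (ce.comp cj).comp_continuousOn (cx.mono Set.inter_subset_left)
  have cel : ContinuousOn (fun y => e (l y)) Ω := ce.comp_continuousOn cl1
  have oW2 : IsOpen W2 := by
    refine ContinuousOn.isOpen_inter_preimage (f := fun y => dist (e (j (x y))) (e (l y)) - min κ (Metric.infDist y P)) (t := Set.Iio 0) ?_ (oW.inter oΩ) isOpen_Iio
    refine ContinuousOn.sub (continuous_dist.comp_continuousOn (cjx.prodMk (cel.mono Set.inter_subset_right))) ?_
    exact (continuous_const.min (Metric.continuous_infDist_pt P)).continuousOn
  have W2P : ∀ y ∈ W2, y ∉ P := fun y hy => sW' hy.1.1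
  have Y0W2 : ∀ y ∈ Y0, y ∉ P → y ∈ W2 := by
    intro y hy hyP
    refine ⟨⟨sW ⟨hy, hyP⟩, sΩ hy⟩, ?_⟩
    show dist (e (j (x y))) (e (l y)) - min κ (Metric.infDist y P) < 0
    rw [jx y hy hyP, dist_self, zero_sub, neg_lt_zero]
    refine lt_min hκ (lt_of_le_of_ne Metric.infDist_nonneg ?_)
    intro h
    exact hyP ((cP.mem_iff_infDist_zero hP).2 h.symm)
  obtain ⟨p0, hp0⟩ := hP
  have n0 : Y0.Nonempty := ⟨p0, hp0.1⟩
  have nW : W2ᶜ.Nonempty := ⟨p0, fun h => W2P _ h hp0⟩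
  have hP : P.Nonempty := ⟨p0, hp0⟩
  let a : Y → ℝ := fun y => Metric.infDist y Y0
  let c : Y → ℝ := fun y => Metric.infDist y W2ᶜ
  have ca : Continuous a := Metric.continuous_infDist_pt _
  have cc : Continuous c := Metric.continuous_infDist_pt _
  have a0 : ∀ y, 0 ≤ a y := fun y => Metric.infDist_nonneg
  have c00 : ∀ y, 0 ≤ c y := fun y => Metric.infDist_nonneg
  have cW2 : ∀ y, y ∉ W2 → c y = 0 := fun y hy => Metric.infDist_zero_of_mem hy
  have ac : ∀ y, y ∉ P → a y + c y ≠ 0 := by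
    intro y hy h
    have h1 : a y = 0 := by linarith [a0 y, c00 y]
    have h2 : c y = 0 := by linarith [a0 y, c00 y]
    have h3 : y ∈ Y0 := (c0.mem_iff_infDist_zero n0).2 h1
    exact (oW2.isClosed_compl.mem_iff_infDist_zero nW).2 h2 (Y0W2 y h3 hy)
  let u : Y → ℝ := fun y => c y / (a y + c y)
  have cu : ∀ y, y ∉ P → ContinuousAt u y := fun y hy =>
    (cc.continuousAt).div (ca.add cc).continuousAt (ac y hy)
  let β : Y → ℝ := fun y => cl (2 - 4 * u y)
  let τ : Y → ℝ := fun y => S y * cl (2 * u y - 1)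
  let z : Y → Fin nl → ℝ := fun y => if y ∈ W2 then (1 - β y) • e (j (x y)) + β y • e (l y) else e (l y)
  have zd : ∀ y, dist (z y) (e (l y)) ≤ Metric.infDist y P ∧ dist (z y) (e (l y)) < κ := by
    intro y
    by_cases hy : y ∈ W2
    · simp only [z, if_pos hy]
      have h1 : dist (e (j (x y))) (e (l y)) < min κ (Metric.infDist y P) := by
        have := hy.2; simp only [Set.mem_setOf_eq] at this; linarith
      have h2 : dist ((1 - β y) • e (j (x y)) + β y • e (l y)) (e (l y)) ≤
          dist (e (j (x y))) (e (l y)) := by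
        rw [dist_eq_norm, dist_eq_norm]
        have : (1 - β y) • e (j (x y)) + β y • e (l y) - e (l y) =
          (1 - β y) • (e (j (x y)) - e (l y)) := by
            rw [smul_sub, sub_smul 1 (β y) (e (l y)), one_smul]; abel
        rw [this, norm_smul, Real.norm_eq_abs,
          abs_of_nonneg (by linarith [cl_le (2 - 4 * u y)] : (0:ℝ) ≤ 1 - β y)]
        have : 1 - β y ≤ 1 := by linarith [cl_nonneg (2 - 4 * u y)]
        exact mul_le_of_le_one_left (norm_nonneg _) this
      exact ⟨h2.trans (h1.le.trans (min_le_right _ _)), h2.trans_lt (h1.trans_le (min_le_left _ _))⟩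
    · simp only [z, if_neg hy, dist_self]; exact ⟨Metric.infDist_nonneg, hκ⟩
  have zU : ∀ y, z y ∈ U := fun y => hκU (Metric.mem_thickening_iff.2 ⟨_, ⟨l y, rfl⟩, (zd y).2⟩)
  let F : Y → dmc (fun m : M => m) j := fun y => if y ∈ W2 then
    (if 1/2 < u y then inM _ _ (x y) (τ y) else inL _ _ (ρ (z y))) else inL _ _ (l y)
  have FR : ∀ y, R (F y) = ρ (z y) := by
    intro y
    by_cases hy : y ∈ W2
    · simp only [F, if_pos hy]
      split_ifs with h
      · have : β y = 0 := cl_of_le (by linarith)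
        simp only [z, if_pos hy, this]
        simp only [sub_zero, one_smul, zero_smul, add_zero, ρe]
        rfl
      · rfl
    · simp only [F, z, if_neg hy, ρe]; rfl
  have τb : ∀ y, 0 ≤ τ y ∧ τ y ≤ 1 := fun y => ⟨mul_nonneg (cl_nonneg _) (cl_nonneg _),
    mul_le_one₀ (cl_le _) (cl_nonneg _) (cl_le _)⟩
  have Fs : ∀ y, sg (F y) = if y ∈ W2 then τ y else 0 := by
    intro y
    by_cases hy : y ∈ W2
    · simp only [F, if_pos hy]
      split_ifs with h
      · rw [sg_M', cl_of_mem (τb y).1 (τb y).2]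
      · simp only [τ]; rw [cl_of_le (by linarith : 2 * u y - 1 ≤ 0)]; simp
    · simp only [F, if_neg hy]; rfl
  have Fξ : ∀ y, ξ (F y) = if y ∈ W2 then τ y • ε (x y) else 0 := by
    intro y
    by_cases hy : y ∈ W2
    · simp only [F, if_pos hy]
      split_ifs with h
      · show cl (τ y) • ε (x y) = _
        rw [cl_of_mem (τb y).1 (τb y).2]
      · simp only [τ]; rw [cl_of_le (by linarith : 2 * u y - 1 ≤ 0), mul_zero, zero_smul]; rfl
    · simp only [F, if_neg hy]; rfl
  refine ⟨Ω, F, oΩ, sΩ, ?_, ?_⟩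
  · intro y hy
    refine ContinuousAt.continuousWithinAt ?_
    have cly : ContinuousAt (fun y => e (l y)) y := cel.continuousAt (oΩ.mem_nhds hy)
    suffices h : ContinuousAt z y ∧ ContinuousAt (fun y => if y ∈ W2 then τ y else 0) y ∧
        ContinuousAt (fun y => if y ∈ W2 then τ y • ε (x y) else 0) y by
      refine ctest F y ?_ ?_ ?_
      · simp only [FR]
        exact ce.continuousAt.comp ((cρ.continuousAt (oU.mem_nhds (zU y))).comp h.1)
      · simp only [Fs]; exact h.2.1
      · simp only [Fξ]; exact h.2.2
    by_cases hyP : y ∈ P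
    · have hyW : y ∉ W2 := fun h => W2P _ h hyP
      have S0 : S y = 0 := by rw [eS y hyP.1]; exact hyP.2
      obtain ⟨b, hb⟩ : ∃ b, ∀ m, ‖ε m‖ ≤ b := by
        obtain ⟨b, hb⟩ := (isCompact_range hε.continuous).isBounded.exists_norm_le
        exact ⟨b, fun m => hb _ ⟨m, rfl⟩⟩
      have lS : Filter.Tendsto S (nhds y) (nhds 0) := by
        have := cS.continuousAt (x := y); rwa [ContinuousAt, S0] at this
      refine ⟨?_, ?_, ?_⟩
      · have zy : z y = e (l y) := if_neg hyW
        rw [ContinuousAt, zy]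
        have h1 : Filter.Tendsto (fun y' => dist (z y') (e (l y'))) (nhds y) (nhds 0) := by
          have : Filter.Tendsto (fun y' => Metric.infDist y' P) (nhds y) (nhds 0) := by
            have := (Metric.continuous_infDist_pt P).continuousAt (x := y)
            rwa [ContinuousAt, Metric.infDist_zero_of_mem hyP] at this
          exact squeeze_zero (fun _ => dist_nonneg) (fun y' => (zd y').1) this
        have h2 : Filter.Tendsto (fun y' => z y' - e (l y') + e (l y')) (nhds y) 
            (nhds (0 + e (l y))) := by
          refine Filter.Tendsto.add ?_ cly
          rw [tendsto_zero_iff_norm_tendsto_zero]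
          simpa only [dist_eq_norm] using h1
        simpa using h2
      · rw [ContinuousAt, if_neg hyW]
        refine squeeze_zero (fun y' => ?_) (fun y' => ?_) lS
        · split_ifs
          · exact (τb _).1
          · exact le_rfl
        · split_ifs
          · exact mul_le_of_le_one_right (cl_nonneg _) (cl_le _)
          · exact cl_nonneg _
      · rw [ContinuousAt, if_neg hyW, tendsto_zero_iff_norm_tendsto_zero]
        have lb : Filter.Tendsto (fun y' => S y' * b) (nhds y) (nhds 0) := by
          simpa using lS.mul_const b
        refine squeeze_zero (fun _ => norm_nonneg _) (fun y' => ?_) lb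
        have b0 : 0 ≤ b := (norm_nonneg _).trans (hb m0)
        split_ifs
        · rw [norm_smul, Real.norm_eq_abs, abs_of_nonneg (τb _).1]
          exact mul_le_mul (mul_le_of_le_one_right (cl_nonneg _) (cl_le _)) (hb _) (norm_nonneg _)
            (cl_nonneg _)
        · simp only [norm_zero]; exact mul_nonneg (cl_nonneg _) b0
    · have cuy := cu y hyP
      have cβ : ContinuousAt β y := cl_cont.continuousAt.comp
        (f := fun y => 2 - 4 * u y) (by fun_prop)
      have cτ : ContinuousAt τ y := cS.continuousAt.mul (cl_cont.continuousAt.comp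
        (f := fun y => 2 * u y - 1) (by fun_prop))
      by_cases hyW : y ∈ W2
      · have ev : ∀ᶠ y' in nhds y, y' ∈ W2 := oW2.mem_nhds hyW
        have h1 : ContinuousAt (fun y => e (j (x y))) y :=
          cjx.continuousAt ((oW.inter oΩ).mem_nhds hyW.1)
        have h2 : ContinuousAt (fun y => ε (x y)) y :=
          cε.continuousAt.comp (cx.continuousAt (oW.mem_nhds hyW.1.1))
        refine ⟨?_, ?_, ?_⟩
        · refine ContinuousAt.congr (f := fun y => (1 - β y) • e (j (x y)) + β y • e (l y)) ?_ ?_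
          · exact ((continuousAt_const.sub cβ).smul h1).add (cβ.smul cly)
          · filter_upwards [ev] with y' hy'; simp only [z, if_pos hy']
        · refine ContinuousAt.congr cτ ?_
          filter_upwards [ev] with y' hy'; simp only [if_pos hy']
        · refine ContinuousAt.congr (cτ.smul h2) ?_
          filter_upwards [ev] with y' hy'; simp only [if_pos hy', Pi.smul_apply']
      · have u0 : u y < 1/4 := by simp only [u, cW2 y hyW, zero_div]; norm_num
        have ev : ∀ᶠ y' in nhds y, u y' < 1/4 := cuy.eventually (gt_mem_nhds u0)
        have τ0 : ∀ y', u y' < 1/4 → τ y' = 0 := fun y' h => by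
          simp only [τ]; rw [cl_of_le (by linarith), mul_zero]
        refine ⟨?_, ?_, ?_⟩
        · refine ContinuousAt.congr cly ?_
          filter_upwards [ev] with y' hy'
          have : β y' = 1 := cl_of_ge (by linarith)
          simp only [z, this]; simp
        · refine ContinuousAt.congr (f := fun _ => (0:ℝ)) continuousAt_const ?_
          filter_upwards [ev] with y' hy'; simp only [τ0 y' hy', ite_self]
        · refine ContinuousAt.congr (f := fun _ => (0 : Fin nm → ℝ)) continuousAt_const ?_
          filter_upwards [ev] with y' hy'; simp only [τ0 y' hy', zero_smul, ite_self]
  · intro y hy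
    by_cases hyP : y ∈ P
    · have hyW : y ∉ W2 := fun h => W2P _ h hyP
      simp only [F, if_neg hyW, el hy]
      exact rec0 _ hyP.2
    · have hyW := Y0W2 y hy hyP
      have ha : a y = 0 := Metric.infDist_zero_of_mem hy
      have hu : u y = 1 := by
        have := ac y hyP
        simp only [u]; rw [ha, zero_add] at *; exact div_self this
      have ht : τ y = sg (f y) := by
        simp only [τ]; rw [hu, cl_of_ge (by norm_num), mul_one, eS y hy]
      have hgt : 1/2 < u y := by rw [hu]; norm_num
      simp only [F, if_pos hyW, if_pos hgt]
      rw [ht, ex ⟨hy, hyP⟩]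
      exact rec1 _ (sgP y hy hyP)

lemma cenr (ci : Continuous i) (cj : Continuous j) (hA : CENR A) (hM : CENR M) (hL : CENR L) :
    CENR (dmc i j) := by
  have cA := hA.1
  have cM := hM.1
  have cL := hL.1
  have cpt : CompactSpace (dmc i j) := compact
  have em := embeds ci cj hA.2.1 hM.2.1 hL.2.1
  refine ⟨cpt, em, ?_⟩
  have t2 : T2Space (dmc i j) := by
    obtain ⟨n, e, ce, ie⟩ := em
    exact T2Space.of_injective_continuous ie ce
  have tM : T2Space M := hM.t2
  obtain ⟨_, eA, ceA, ieA⟩ := hA.2.1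
  obtain ⟨_, eM, ceM, ieM⟩ := hM.2.1
  obtain ⟨_, eL, ceL, ieL⟩ := hL.2.1
  have icE := inj_emb (i := i) (j := j) ieA ieM ieL
  have injA : Function.Injective (inA i j) := fun a a' h =>
    ieA (congrArg (fun z => (emb i j eA eM eL z).1) h)
  have injL : Function.Injective (inL i j) := fun a a' h =>
    ieL (congrArg (fun z => (emb i j eA eM eL z).2.2.2) h)
  have injM : ∀ s, 0 < s → s < 1 → Function.Injective fun m => inM i j m s := by
    intro s hs hs' m m' h
    have h2 : (cl s * (1 - cl s)) • eM m = (cl s * (1 - cl s)) • eM m' :=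
      congrArg (fun z => (emb i j eA eM eL z).2.1) h
    rw [cl_of_mem hs.le hs'.le] at h2
    exact ieM (smul_right_injective _ (mul_pos hs (by linarith)).ne' h2)
  let g1 : dmc (fun m : M => m) j → dmc i j := lift (fun m => inM i j m (1/2))
    (fun z => inM i j z.1 (z.2/2)) (inL i j) (fun m => rfl) (fun m => inM_bot _ (by norm_num))
  let g2 : dmc (fun m : M => m) i → dmc i j := lift (fun m => inM i j m (1/2))
    (fun z => inM i j z.1 (1 - z.2/2)) (inA i j) (fun m => by norm_num)
    (fun m => inM_top _ (by norm_num))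
  let g3 : M → dmc i j := fun m => inM i j m (1/2)
  have c1 : Continuous g1 := cont_lift (by fun_prop) (by fun_prop) (by fun_prop)
  have c2 : Continuous g2 := cont_lift (by fun_prop) (by fun_prop) (by fun_prop)
  have c3 : Continuous g3 := by fun_prop
  have g1M : ∀ m s, 0 ≤ s → s ≤ 1 → g1 (inM _ _ m s) = inM i j m (s/2) := by
    intro m s h h'; show inM i j m (cl s/2) = _; rw [cl_of_mem h h']
  have g2M : ∀ m s, 0 ≤ s → s ≤ 1 → g2 (inM _ _ m s) = inM i j m (1 - s/2) := by
    intro m s h h'; show inM i j m (1 - cl s/2) = _; rw [cl_of_mem h h']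
  have cpt1 : CompactSpace (dmc (fun m : M => m) j) := compact
  have cpt2 : CompactSpace (dmc (fun m : M => m) i) := compact
  have i1 : Function.Injective g1 := by
    refine inj_of (fun z => 2 * sg z) ?_ ?_ ?_ ?_ ?_ ?_
    · intro a; show 2 * cl (1/2) = 1; rw [cl_of_mem] <;> norm_num
    · intro a; show 2 * (0:ℝ) = 0; norm_num
    · intro m s h h'; rw [g1M _ _ h.le h'.le, sg_M', cl_of_mem] <;> linarith
    · exact injM _ (by norm_num) (by norm_num)
    · exact injL
    · intro m m' s h h' e
      rw [g1M _ _ h.le h'.le, g1M _ _ h.le h'.le] at e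
      exact injM _ (by linarith) (by linarith) e
  have i2 : Function.Injective g2 := by
    refine inj_of (fun z => 2 * (1 - sg z)) ?_ ?_ ?_ ?_ ?_ ?_
    · intro a; show 2 * (1 - cl (1/2)) = 1; rw [cl_of_mem] <;> norm_num
    · intro a; show 2 * (1 - (1:ℝ)) = 0; norm_num
    · intro m s h h'; rw [g2M _ _ h.le h'.le, sg_M', cl_of_mem] <;> linarith
    · exact injM _ (by norm_num) (by norm_num)
    · exact injA
    · intro m m' s h h' e
      rw [g2M _ _ h.le h'.le, g2M _ _ h.le h'.le] at e
      exact injM _ (by linarith) (by linarith) e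
  have i3 : Function.Injective g3 := injM _ (by norm_num) (by norm_num)
  have s1 : ∀ z, sg (g1 z) ≤ 1/2 := by
    refine ind ?_ ?_ ?_
    · intro a; show cl (1/2) ≤ 1/2; rw [cl_of_mem] <;> norm_num
    · intro m s h h'; rw [g1M _ _ h h', sg_M', cl_of_mem] <;> linarith
    · intro l; show (0:ℝ) ≤ 1/2; norm_num
  have s2 : ∀ z, 1/2 ≤ sg (g2 z) := by
    refine ind ?_ ?_ ?_
    · intro a; show 1/2 ≤ cl (1/2); rw [cl_of_mem] <;> norm_num
    · intro m s h h'; rw [g2M _ _ h h', sg_M', cl_of_mem] <;> linarith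
    · intro l; show 1/2 ≤ (1:ℝ); norm_num
  have E1 := emb_cpt c1 i1
  have E2 := emb_cpt c2 i2
  have E3 := emb_cpt c3 i3
  have key : ∀ z : dmc i j, (z ∈ Set.range g1 ∨ z ∈ Set.range g2) ∧
      (sg z = 1/2 → z ∈ Set.range g3) := by
    refine ind' ?_ ?_ ?_
    · intro a; exact ⟨Or.inr ⟨inL _ _ a, rfl⟩, fun h => by norm_num at h⟩
    · intro m s h h'
      constructor
      · rcases le_total s (1/2) with h2 | h2
        · left; refine ⟨inM _ _ m (2*s), ?_⟩
          rw [g1M _ _ (by linarith) (by linarith)]; congr 1; ring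
        · right; refine ⟨inM _ _ m (2*(1-s)), ?_⟩
          rw [g2M _ _ (by linarith) (by linarith)]; congr 1; ring
      · intro e; rw [sg_M', cl_of_mem h.le h'.le] at e; exact ⟨m, by rw [e]⟩
    · intro l; exact ⟨Or.inl ⟨inL _ _ l, rfl⟩, fun h => by norm_num at h⟩
  have hu : Set.range g1 ∪ Set.range g2 = Set.univ := Set.eq_univ_of_forall fun z => (key z).1
  have hi : Set.range g1 ∩ Set.range g2 = Set.range g3 := by
    ext z
    constructor
    · rintro ⟨⟨x, hx⟩, ⟨y, hy⟩⟩
      refine (key z).2 (le_antisymm ?_ ?_)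
      · rw [← hx]; exact s1 x
      · rw [← hy]; exact s2 y
    · rintro ⟨m, rfl⟩; exact ⟨⟨inA _ _ m, rfl⟩, ⟨inA _ _ m, rfl⟩⟩
  have := ANEs.union E1.isClosed_range E2.isClosed_range ((cyl cj hM hL).range E1.isEmbedding)
    ((cyl ci hM hA).range E2.isEmbedding) (by rw [hi]; exact hM.2.2.range E3.isEmbedding)
  rw [hu] at this
  exact this.ane

end dmc

section poly
variable {V : Type} [NormedAddCommGroup V] [NormedSpace ℝ V] [FiniteDimensional ℝ V]

lemma affine_sum (f : V →ᵃ[ℝ] ℝ) (τ : Finset V) (a : V → ℝ) (ha : ∑ v ∈ τ, a v = 1) :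
    f (∑ v ∈ τ, a v • v) = ∑ v ∈ τ, a v * f v := by
  have h : ∀ x, f x = f.linear x + f 0 := fun x => congrFun (AffineMap.decomp f) x
  have h2 : ∑ v ∈ τ, a v * f v = ∑ v ∈ τ, (a v * f.linear v + a v * f 0) :=
    Finset.sum_congr rfl fun v _ => by rw [h v, mul_add]
  rw [h2, h, map_sum, Finset.sum_add_distrib, ← Finset.sum_mul, ha, one_mul]
  simp only [map_smul, smul_eq_mul]

/-- barycentric coordinates -/
lemma bary (τ : Finset V) (hτ : AffineIndependent ℝ ((↑) : τ → V)) :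
    ∃ w : V → V → ℝ, (∀ u, Continuous (w u)) ∧
      (∀ a : V → ℝ, ∑ v ∈ τ, a v = 1 → ∀ u ∈ τ, w u (∑ v ∈ τ, a v • v) = a u) := by
  classical
  obtain ⟨t, ht₁, ht₂, ht₃⟩ := exists_subset_affineIndependent_affineSpan_eq_top (s := (τ : Set V)) hτ
  let b : AffineBasis t ℝ V := ⟨((↑) : t → V), ht₂, by rw [Subtype.range_coe_subtype, Set.setOf_mem_eq]; exact ht₃⟩
  refine ⟨fun u => if h : u ∈ t then b.coord ⟨u, h⟩ else 0, ?_, ?_⟩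
  · intro u
    simp only
    split_ifs with h
    · exact continuous_barycentric_coord b _
    · exact continuous_zero
  · intro a ha u hu
    have hut : u ∈ t := ht₁ hu
    simp only [dif_pos hut]
    rw [affine_sum _ _ _ ha, Finset.sum_eq_single u]
    · have := b.coord_apply_eq ⟨u, hut⟩
      have : b.coord ⟨u, hut⟩ u = 1 := this
      rw [this, mul_one]
    · intro v hv hvu
      have : b.coord ⟨u, hut⟩ v = 0 := b.coord_apply_ne (i := ⟨u, hut⟩) (j := ⟨v, ht₁ hv⟩) (by
        intro h; exact hvu (congrArg Subtype.val h).symm)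
      rw [this, mul_zero]
    · intro h; exact absurd hu h

lemma ANEs.simplex (τ : Finset V) (hτ : AffineIndependent ℝ ((↑) : τ → V)) :
    ANEs (convexHull ℝ (τ : Set V)) := by
  intro Y _ Y0 f c0 hf hm
  obtain ⟨w, cw, hw⟩ := bary τ hτ
  have ext : ∀ u, ∃ W : C(Y, ℝ), ∀ y ∈ Y0, W y = w u (f y) := by
    intro u
    obtain ⟨S', hS'⟩ := ContinuousMap.exists_restrict_eq c0
      (⟨fun y => w u (f y.1), by
        have := continuousOn_iff_continuous_restrict.1 ((cw u).comp_continuousOn hf); exact this⟩ :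
        C(Y0, ℝ))
    exact ⟨S', fun y hy => congrArg (fun g => g ⟨y, hy⟩) hS'⟩
  choose W hW using ext
  let S : Y → ℝ := fun y => ∑ u ∈ τ, max 0 (W u y)
  have cS : Continuous S := continuous_finset_sum _ fun u _ => continuous_const.max (W u).continuous
  have co : ∀ y ∈ Y0, (∀ u ∈ τ, 0 ≤ W u y) ∧ ∑ u ∈ τ, W u y = 1 ∧ ∑ u ∈ τ, W u y • u = f y := by
    intro y hy
    obtain ⟨a, a0, a1, a2⟩ := Finset.mem_convexHull'.1 (hm hy)
    have h : ∀ u ∈ τ, W u y = a u := fun u hu => by rw [hW u y hy, ← a2, hw a a1 u hu]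
    refine ⟨fun u hu => by rw [h u hu]; exact a0 u hu, ?_, ?_⟩
    · rw [Finset.sum_congr rfl h, a1]
    · rw [← a2]; exact Finset.sum_congr rfl fun u hu => by rw [h u hu]
  have SY : ∀ y ∈ Y0, S y = 1 := by
    intro y hy
    obtain ⟨h0, h1, -⟩ := co y hy
    rw [← h1]; exact Finset.sum_congr rfl fun u hu => max_eq_right (h0 u hu)
  refine ⟨{y | 0 < S y}, fun y => ∑ u ∈ τ, ((S y)⁻¹ * max 0 (W u y)) • u, isOpen_lt continuous_const cS, ?_, ?_, ?_, ?_⟩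
  · intro y hy; show 0 < S y; rw [SY y hy]; norm_num
  · refine continuousOn_finset_sum _ fun u _ => ?_
    refine ContinuousOn.smul (f := fun y => (S y)⁻¹ * max 0 (W u y)) (ContinuousOn.mul (f := fun y => (S y)⁻¹) (cS.continuousOn.inv₀ fun y hy => ?_) ?_) continuousOn_const
    · exact ne_of_gt hy
    · exact (continuous_const.max (W u).continuous).continuousOn
  · intro y hy
    have hy : 0 < S y := hy
    refine Finset.mem_convexHull'.2 ⟨fun u => (S y)⁻¹ * max 0 (W u y), ?_, ?_, rfl⟩
    · intro u _; positivity
    · rw [← Finset.mul_sum]; exact inv_mul_cancel₀ hy.ne'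
  · intro y hy
    obtain ⟨h0, h1, h2⟩ := co y hy
    simp only [SY y hy, inv_one, one_mul]
    rw [← h2]; exact Finset.sum_congr rfl fun u hu => by rw [max_eq_right (h0 u hu)]

/-- polyhedron of a finite set of simplices -/
def poly (S : Finset (Finset V)) : Set V := ⋃ s ∈ S, convexHull ℝ (s : Set V)

lemma mem_poly {S : Finset (Finset V)} {x : V} :
    x ∈ poly S ↔ ∃ s ∈ S, x ∈ convexHull ℝ (s : Set V) := by simp [poly]

lemma poly_mono {S T : Finset (Finset V)} (h : S ⊆ T) : poly S ⊆ poly T := by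
  intro x hx
  obtain ⟨s, hs, hx⟩ := mem_poly.1 hx
  exact mem_poly.2 ⟨s, h hs, hx⟩

lemma conv_compact (s : Finset V) : IsCompact (convexHull ℝ (s : Set V)) :=
  s.finite_toSet.isCompact_convexHull ℝ

lemma poly_compact (S : Finset (Finset V)) : IsCompact (poly S) :=
  S.isCompact_biUnion fun s _ => conv_compact s

open Classical in
def bd (τ : Finset V) : Finset (Finset V) := τ.ssubsets.filter Finset.Nonempty

lemma mem_bd {τ t : Finset V} : t ∈ bd τ ↔ t ⊂ τ ∧ t.Nonempty := by simp [bd]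

variable {K : Geometry.SimplicialComplex ℝ V}

structure DCl (K : Geometry.SimplicialComplex ℝ V) (S : Finset (Finset V)) : Prop where
  sub : ∀ s ∈ S, s ∈ K.faces
  down : ∀ s ∈ S, ∀ t ⊆ s, t.Nonempty → t ∈ S

lemma DCl.bd {τ : Finset V} (h : τ ∈ K.faces) : DCl K (bd τ) := by
  refine ⟨fun s hs => ?_, fun s hs t ht hn => ?_⟩
  · obtain ⟨h1, h2⟩ := mem_bd.1 hs
    exact K.down_closed h h1.subset h2
  · obtain ⟨h1, h2⟩ := mem_bd.1 hs
    exact mem_bd.2 ⟨lt_of_le_of_lt ht h1, hn⟩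

open Classical in
lemma DCl.erase {S : Finset (Finset V)} {τ : Finset V} (h : DCl K S)
    (hmax : ∀ t ∈ S, t.card ≤ τ.card) : DCl K (S.erase τ) := by
  refine ⟨fun s hs => h.sub s (Finset.mem_of_mem_erase hs), fun s hs t ht hn => ?_⟩
  obtain ⟨h1, h2⟩ := Finset.mem_erase.1 hs
  refine Finset.mem_erase.2 ⟨?_, h.down s h2 t ht hn⟩
  rintro rfl
  exact h1 (Finset.eq_of_subset_of_card_le ht (hmax s h2)).symm

open Classical in
lemma DCl.bd_sub {S : Finset (Finset V)} {τ : Finset V} (h : DCl K S) (hτ : τ ∈ S) :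
    _root_.bd τ ⊆ S.erase τ := by
  intro t ht
  obtain ⟨h1, h2⟩ := mem_bd.1 ht
  exact Finset.mem_erase.2 ⟨h1.ne, h.down τ hτ t h1.subset h2⟩

open Classical in
lemma poly_erase {S : Finset (Finset V)} {τ : Finset V} (hτ : τ ∈ S) :
    poly S = poly (S.erase τ) ∪ convexHull ℝ (τ : Set V) := by
  ext x
  constructor
  · intro hx
    obtain ⟨s, hs, hx⟩ := mem_poly.1 hx
    by_cases e : s = τ
    · right; rwa [← e]
    · left; exact mem_poly.2 ⟨s, Finset.mem_erase.2 ⟨e, hs⟩, hx⟩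
  · rintro (h | h)
    · exact poly_mono (Finset.erase_subset _ _) h
    · exact mem_poly.2 ⟨τ, hτ, h⟩

open Classical in
lemma poly_inter {S : Finset (Finset V)} {τ : Finset V} (h : DCl K S) (hτ : τ ∈ S)
    (hmax : ∀ t ∈ S, t.card ≤ τ.card) :
    poly (S.erase τ) ∩ convexHull ℝ (τ : Set V) = poly (bd τ) := by
  ext x
  constructor
  · rintro ⟨h1, h2⟩
    obtain ⟨s, hs, hx⟩ := mem_poly.1 h1
    obtain ⟨hne, hs⟩ := Finset.mem_erase.1 hs
    have h3 := K.inter_subset_convexHull (h.sub s hs) (h.sub τ hτ) ⟨hx, h2⟩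
    rw [← Finset.coe_inter] at h3
    refine mem_poly.2 ⟨s ∩ τ, mem_bd.2 ⟨?_, ?_⟩, h3⟩
    · refine lt_of_le_of_ne Finset.inter_subset_right ?_
      intro e
      have : τ ⊆ s := by rw [← e]; exact Finset.inter_subset_left
      exact hne (Finset.eq_of_subset_of_card_le this (hmax s hs)).symm
    · have : (convexHull ℝ ((s ∩ τ : Finset V) : Set V)).Nonempty := ⟨x, h3⟩
      exact Finset.coe_nonempty.1 (convexHull_nonempty_iff.1 this)
  · intro hx
    refine ⟨poly_mono (h.bd_sub hτ) hx, ?_⟩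
    obtain ⟨s, hs, hx⟩ := mem_poly.1 hx
    exact convexHull_mono (by exact_mod_cast (mem_bd.1 hs).1.subset) hx

lemma exists_max {S : Finset (Finset V)} (h : S.Nonempty) :
    ∃ τ ∈ S, ∀ t ∈ S, t.card ≤ τ.card := Finset.exists_max_image S _ h

open Classical in
lemma ANEs.poly : ∀ (n : ℕ) (S : Finset (Finset V)), S.card ≤ n → DCl K S → ANEs (poly S) := by
  intro n
  induction n with
  | zero =>
    intro S hS _ Y _ Y0 f _ _ hm
    have : S = ∅ := Finset.card_eq_zero.1 (by omega)
    subst this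
    have : Y0 = ∅ := by
      ext y; simp only [Set.mem_empty_iff_false, iff_false]; intro hy
      have := hm hy; simp [_root_.poly] at this
    subst this
    exact ⟨∅, f, isOpen_empty, by simp, by simp, by simp [Set.MapsTo], by simp⟩
  | succ n ih =>
    intro S hS hd
    rcases S.eq_empty_or_nonempty with rfl | hne
    · exact ih _ (by simp) hd
    obtain ⟨τ, hτ, hmax⟩ := exists_max hne
    rw [poly_erase hτ]
    have hc := Finset.card_erase_lt_of_mem hτ
    refine ANEs.union (poly_compact _).isClosed (conv_compact _).isClosed (ih _ (by omega) (hd.erase hmax))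
      (ANEs.simplex τ (K.indep (hd.sub τ hτ))) ?_
    rw [poly_inter hd hτ hmax]
    refine ih _ ?_ (DCl.bd (hd.sub τ hτ))
    have := Finset.card_le_card (hd.bd_sub hτ)
    omega

lemma space_eq (hK : K.faces.Finite) : DCl K hK.toFinset ∧ K.space = poly hK.toFinset := by
  refine ⟨⟨fun s hs => by simpa using hs, fun s hs t ht hn => ?_⟩, ?_⟩
  · simp only [Set.Finite.mem_toFinset] at *; exact K.down_closed hs ht hn
  · ext x; rw [mem_poly, Geometry.SimplicialComplex.mem_space_iff]; simp

lemma CENR.space (hK : K.faces.Finite) : CENR K.space := by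
  obtain ⟨h1, h2⟩ := space_eq hK
  rw [h2]
  refine ⟨isCompact_iff_compactSpace.1 (poly_compact _), ?_, (ANEs.poly _ _ le_rfl h1).subtype⟩
  exact emb_of (e := fun x : poly hK.toFinset => x.1) continuous_subtype_val Subtype.val_injective

lemma exists_cone (τ : Finset V) (hne : τ.Nonempty) (hτ : AffineIndependent ℝ ((↑) : τ → V)) :
    ∃ v s R, Cone (convexHull ℝ (τ : Set V)) (poly (bd τ)) v s R := by
  classical
  obtain ⟨w, cw, hw⟩ := bary τ hτ
  have N0 : (0:ℝ) < τ.card := by exact_mod_cast hne.card_pos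
  set N : ℝ := (τ.card : ℝ) with hN
  let s : V → ℝ := fun x => τ.sup' hne (fun u => 1 - N * w u x)
  have sN : ∑ u ∈ τ, N⁻¹ = 1 := by
    rw [Finset.sum_const, nsmul_eq_mul, ← hN, mul_inv_cancel₀ N0.ne']
  have co : ∀ x ∈ convexHull ℝ (τ : Set V), (∀ u ∈ τ, 0 ≤ w u x) ∧ ∑ u ∈ τ, w u x = 1 ∧
      ∑ u ∈ τ, w u x • u = x := by
    intro y hy
    obtain ⟨a, a0, a1, a2⟩ := Finset.mem_convexHull'.1 hy
    have h : ∀ u ∈ τ, w u y = a u := fun u hu => by rw [← a2, hw a a1 u hu]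
    refine ⟨fun u hu => by rw [h u hu]; exact a0 u hu, ?_, ?_⟩
    · rw [Finset.sum_congr rfl h, a1]
    · conv_rhs => rw [← a2]
      exact Finset.sum_congr rfl fun u hu => by rw [h u hu]
  have les : ∀ x, ∀ u ∈ τ, 1 - N * w u x ≤ s x := fun x u hu =>
    Finset.le_sup' (fun u => 1 - N * w u x) hu
  have sle : ∀ x c, (∀ u ∈ τ, 1 - N * w u x ≤ c) → s x ≤ c := fun x c h => Finset.sup'_le _ _ h
  have s0 : ∀ x ∈ convexHull ℝ (τ : Set V), 0 ≤ s x := by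
    intro x hx
    by_contra hc
    push Not at hc
    have h1 : ∑ u ∈ τ, N⁻¹ < ∑ u ∈ τ, w u x := by
      refine Finset.sum_lt_sum_of_nonempty hne fun u hu => ?_
      rw [inv_lt_iff_one_lt_mul₀ N0]
      linarith [les x u hu]
    rw [sN, (co x hx).2.1] at h1
    exact lt_irrefl _ h1
  have s1 : ∀ x ∈ convexHull ℝ (τ : Set V), s x ≤ 1 := fun x hx => sle x 1 fun u hu => by
    have := mul_nonneg N0.le ((co x hx).1 u hu); linarith
  let v : V := ∑ u ∈ τ, N⁻¹ • u
  have diff : ∀ x ∈ convexHull ℝ (τ : Set V), x - v = ∑ u ∈ τ, (w u x - N⁻¹) • u := by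
    intro x hx
    simp only [sub_smul, Finset.sum_sub_distrib, (co x hx).2.2]
    rfl
  refine ⟨v, s, 1 + ∑ u ∈ τ, ‖u‖, ?_, (conv_compact _).isClosed, ?_, ?_, s0, s1, ?_, ?_, ?_⟩
  · exact Continuous.finset_sup'_apply hne fun u _ => by have := cw u; fun_prop
  · exact Finset.mem_convexHull'.2 ⟨fun _ => N⁻¹, fun _ _ => by positivity, sN, rfl⟩
  · intro b
    constructor
    · intro hb
      obtain ⟨t, ht, hb⟩ := mem_poly.1 hb
      obtain ⟨ht, -⟩ := mem_bd.1 ht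
      have hbC := convexHull_mono (by exact_mod_cast ht.subset) hb
      refine ⟨hbC, le_antisymm (s1 b hbC) ?_⟩
      obtain ⟨u, hu, hut⟩ := Finset.exists_of_ssubset ht
      obtain ⟨a, a0, a1, a2⟩ := Finset.mem_convexHull'.1 hb
      have h := hw (fun u => if u ∈ t then a u else 0) (by
        rw [← a1, Finset.sum_ite_mem, Finset.inter_eq_right.2 ht.subset]) u hu
      have e : ∑ v ∈ τ, (if v ∈ t then a v else 0) • v = b := by
        rw [← a2]
        simp only [ite_smul, zero_smul]
        rw [Finset.sum_ite_mem, Finset.inter_eq_right.2 ht.subset]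
      rw [e, if_neg hut] at h
      have := les b u hu
      rw [h] at this; linarith
    · rintro ⟨hb, hs⟩
      obtain ⟨u, hu, e⟩ := Finset.exists_mem_eq_sup' hne (fun u => 1 - N * w u b)
      have e : s b = 1 - N * w u b := e
      have hwu : w u b = 0 := by
        have : N * w u b = 0 := by linarith
        exact (mul_eq_zero.1 this).resolve_left N0.ne'
      obtain ⟨h0, h1, h2⟩ := co b hb
      have hs1 : ∑ x ∈ τ.erase u, w x b = 1 := by
        rw [← h1, ← Finset.add_sum_erase _ _ hu, hwu, zero_add]
      refine mem_poly.2 ⟨τ.erase u, mem_bd.2 ⟨Finset.erase_ssubset hu, ?_⟩, ?_⟩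
      · by_contra hc
        rw [Finset.not_nonempty_iff_eq_empty] at hc
        rw [hc] at hs1; simp at hs1
      · refine Finset.mem_convexHull'.2 ⟨fun x => w x b, fun x hx => h0 x (Finset.mem_of_mem_erase hx), hs1, ?_⟩
        conv_rhs => rw [← h2, ← Finset.add_sum_erase _ _ hu, hwu, zero_smul, zero_add]
  · intro b hb μ μ0 hμ
    obtain ⟨h0, h1, h2⟩ := co b hb
    have e : v + μ • (b - v) = ∑ u ∈ τ, (N⁻¹ + μ * (w u b - N⁻¹)) • u := by
      rw [diff b hb, Finset.smul_sum, ← Finset.sum_add_distrib]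
      exact Finset.sum_congr rfl fun u _ => by rw [add_smul, mul_smul]
    have es : ∑ u ∈ τ, (N⁻¹ + μ * (w u b - N⁻¹)) = 1 := by
      rw [Finset.sum_add_distrib, ← Finset.mul_sum, Finset.sum_sub_distrib, sN, h1]; ring
    have ew : ∀ u ∈ τ, 1 - N * w u (v + μ • (b - v)) = μ * (1 - N * w u b) := by
      intro u hu
      rw [e, hw _ es u hu]; field_simp; ring
    constructor
    · rw [e]
      refine Finset.mem_convexHull'.2 ⟨_, fun u hu => ?_, es, rfl⟩
      have h3 : μ * (1 - N * w u b) ≤ 1 :=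
        (mul_le_mul_of_nonneg_left (les b u hu) μ0).trans hμ
      have : N⁻¹ + μ * (w u b - N⁻¹) = N⁻¹ * (1 - μ * (1 - N * w u b)) := by field_simp; ring
      rw [this]
      exact mul_nonneg (by positivity) (by linarith)
    · refine le_antisymm ?_ ?_
      · refine sle _ _ fun u hu => ?_
        rw [ew u hu]; exact mul_le_mul_of_nonneg_left (les b u hu) μ0
      · obtain ⟨u, hu, e⟩ := Finset.exists_mem_eq_sup' hne (fun u => 1 - N * w u b)
        have e : s b = 1 - N * w u b := e
        rw [e, ← ew u hu]; exact les _ u hu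
  · have : 0 ≤ ∑ u ∈ τ, ‖u‖ := Finset.sum_nonneg fun _ _ => norm_nonneg _
    linarith
  · intro b hb
    obtain ⟨h0, h1, h2⟩ := co b hb
    have sb := s0 b hb
    have key : ∀ u ∈ τ, |w u b - N⁻¹| ≤ s b := by
      intro u hu
      have hN1 : N⁻¹ ≤ 1 := inv_le_one_of_one_le₀ (by rw [hN]; exact_mod_cast hne.card_pos)
      have lo : ∀ x ∈ τ, N⁻¹ - w x b ≤ N⁻¹ * s b := by
        intro x hx
        have := mul_le_mul_of_nonneg_left (les b x hx) (inv_nonneg.2 N0.le)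
        rwa [mul_sub, mul_one, ← mul_assoc, inv_mul_cancel₀ N0.ne', one_mul] at this
      have lo' : N⁻¹ * s b ≤ s b := mul_le_of_le_one_left sb hN1
      rw [abs_le]
      constructor
      · linarith [lo u hu]
      · have h3 : ∑ x ∈ τ.erase u, (N⁻¹ - w x b) ≤ ∑ x ∈ τ.erase u, N⁻¹ * s b :=
          Finset.sum_le_sum fun x hx => lo x (Finset.mem_of_mem_erase hx)
        have h4 : ∑ x ∈ τ.erase u, N⁻¹ * s b ≤ ∑ x ∈ τ, N⁻¹ * s b :=
          Finset.sum_le_sum_of_subset_of_nonneg (Finset.erase_subset _ _) fun _ _ _ => by positivity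
        have h6 : ∑ x ∈ τ, N⁻¹ * s b = s b := by rw [← Finset.sum_mul, sN, one_mul]
        rw [h6] at h4
        have h5 : ∑ x ∈ τ, (N⁻¹ - w x b) = 0 := by rw [Finset.sum_sub_distrib, sN, h1, sub_self]
        rw [← Finset.add_sum_erase _ _ hu] at h5
        linarith
    rw [diff b hb]
    calc ‖∑ u ∈ τ, (w u b - N⁻¹) • u‖ ≤ ∑ u ∈ τ, ‖(w u b - N⁻¹) • u‖ := norm_sum_le _ _
      _ ≤ ∑ u ∈ τ, s b * ‖u‖ := Finset.sum_le_sum fun u hu => by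
          rw [norm_smul, Real.norm_eq_abs]
          exact mul_le_mul_of_nonneg_right (key u hu) (norm_nonneg _)
      _ = s b * ∑ u ∈ τ, ‖u‖ := by rw [Finset.mul_sum]
      _ ≤ (1 + ∑ u ∈ τ, ‖u‖) * s b := by linarith

end poly

section build
variable {V E : Type} [NormedAddCommGroup V] [NormedSpace ℝ V] [FiniteDimensional ℝ V]
  [TopologicalSpace E]

def CEo (p : E → V) {X : Type} [TopologicalSpace X] (Φ : X → E) (S : Set V) : Prop :=
  ∃ hm : ∀ x, p (Φ x) ∈ S, CE (fun x => p (Φ x)) (fun e : Ov p S => p e.v)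
    (fun x => Ov.mk (Φ x) (hm x))

lemma CEo.homeo {p : E → V} {X Y : Type} [TopologicalSpace X] [TopologicalSpace Y] {Φ : X → E}
    {S : Set V} (h : CEo p Φ S) (e : Y ≃ₜ X) : CEo p (fun y => Φ (e y)) S := by
  obtain ⟨hm, h⟩ := h
  exact ⟨fun y => hm _, h.comp (CE.of_homeo e (fun x => rfl))⟩

/-- fibre data -/
def FD (p : E → V) (v : V) : Prop :=
  ∃ (L : Type) (_ : TopologicalSpace L) (f : Ov p {v} → L) (g : L → Ov p {v})
    (h : Ov p {v} × ℝ → Ov p {v}) (k : L × ℝ → L), CENR L ∧ Continuous f ∧ Continuous g ∧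
    Continuous h ∧ Continuous k ∧ (∀ x, h (x, 0) = x) ∧ (∀ x, h (x, 1) = g (f x)) ∧
    (∀ x, k (x, 0) = x) ∧ (∀ x, k (x, 1) = f (g x))

def Good (p : E → V) (K : Geometry.SimplicialComplex ℝ V) (S : Finset (Finset V)) : Prop :=
  ∃ (X : Type) (_ : TopologicalSpace X) (Φ : X → E) (Q : Finset (Finset V) → Set X),
    CompactSpace X ∧ (∃ (n : ℕ) (e : X → Fin n → ℝ), Continuous e ∧ Function.Injective e) ∧
    Continuous Φ ∧ (∀ T T', T ⊆ T' → Q T ⊆ Q T') ∧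
    ∀ T, DCl K T → T ⊆ S → CENR (Q T) ∧ CEo p (fun x : Q T => Φ x.1) (poly T)

lemma CENR.of_empty (X : Type) [TopologicalSpace X] [IsEmpty X] : CENR X := by
  refine ⟨inferInstance, ⟨0, fun _ => 0, continuous_const, fun x => isEmptyElim x⟩, ?_⟩
  intro Y _ Y0 f _ _
  exact ⟨∅, f, isOpen_empty, fun y => isEmptyElim (f y), by simp, fun y => isEmptyElim (f y)⟩

lemma good_empty (p : E → V) (K : Geometry.SimplicialComplex ℝ V) : Good p K ∅ := by
  refine ⟨Empty, inferInstance, fun x => x.elim, fun _ => Set.univ, inferInstance,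
    ⟨0, fun _ => 0, continuous_const, fun x => x.elim⟩, continuous_of_const (fun x => x.elim),
    fun _ _ _ => subset_rfl, ?_⟩
  intro T _ hT
  have : T = ∅ := Finset.subset_empty.1 hT
  subst this
  refine ⟨CENR.of_empty _, fun x => x.1.elim, ?_⟩
  have : IsEmpty (Ov p (poly (∅ : Finset (Finset V)))) := ⟨fun e => by
    have := e.mem; simp [poly] at this⟩
  have h := CE.of_homeo (V := V) (Homeomorph.empty : (Set.univ : Set Empty) ≃ₜ Ov p (poly (∅ : Finset (Finset V))))
    (qX := fun x => x.1.elim) (qE := fun e => p e.v) (fun x => x.1.elim)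
  convert h using 1
  ext x; exact x.1.elim

namespace dmc
variable {A M L Z : Type} [TopologicalSpace A] [TopologicalSpace M] [TopologicalSpace L]
  {i : M → A} {j : M → L}
lemma injs
    (hA : ∃ (n : ℕ) (e : A → Fin n → ℝ), Continuous e ∧ Function.Injective e)
    (hM : ∃ (n : ℕ) (e : M → Fin n → ℝ), Continuous e ∧ Function.Injective e)
    (hL : ∃ (n : ℕ) (e : L → Fin n → ℝ), Continuous e ∧ Function.Injective e) :
    Function.Injective (inA i j) ∧ Function.Injective (inL i j) ∧
    ∀ s, 0 < s → s < 1 → Function.Injective fun m => inM i j m s := by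
  obtain ⟨_, eA, ceA, ieA⟩ := hA
  obtain ⟨_, eM, ceM, ieM⟩ := hM
  obtain ⟨_, eL, ceL, ieL⟩ := hL
  refine ⟨fun a a' h => ieA (congrArg (fun z => (emb i j eA eM eL z).1) h),
    fun a a' h => ieL (congrArg (fun z => (emb i j eA eM eL z).2.2.2) h), ?_⟩
  intro s hs hs' m m' h
  have h2 : (cl s * (1 - cl s)) • eM m = (cl s * (1 - cl s)) • eM m' :=
    congrArg (fun z => (emb i j eA eM eL z).2.1) h
  rw [cl_of_mem hs.le hs'.le] at h2
  exact ieM (smul_right_injective _ (mul_pos hs (by linarith)).ne' h2)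
end dmc

lemma transport {X Y : Type} [TopologicalSpace X] [TopologicalSpace Y] [T2Space Y] {p : E → V}
    {N : X → Y} (cN : Continuous N) (iN : Function.Injective N) (hX : CENR X) {Q : Set Y}
    (hQ : Set.range N = Q) {Φ : Y → E} {S : Set V} (h : CEo p (fun x => Φ (N x)) S) :
    CENR Q ∧ CEo p (fun x : Q => Φ x.1) S := by
  subst hQ
  have := hX.1
  let e : X ≃ₜ Set.range N := (emb_cpt cN iN).isEmbedding.toHomeomorph
  refine ⟨hX.homeo e, ?_⟩
  have := h.homeo e.symm
  have e2 : ∀ y : Set.range N, N (e.symm y) = y.1 := fun y =>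
    congrArg Subtype.val (e.apply_symm_apply y)
  simpa only [e2] using this

open Classical in
lemma good_step {p : E → V} (hp : Continuous p) {B : Set V} (hl : HL p B) (fd : ∀ v ∈ B, FD p v)
    {K : Geometry.SimplicialComplex ℝ V} {S : Finset (Finset V)} (hS : DCl K S) (hSB : poly S ⊆ B)
    {τ : Finset V} (hτ : τ ∈ S) (hmax : ∀ t ∈ S, t.card ≤ τ.card) (ih : Good p K (S.erase τ)) :
    Good p K S := by
  have hτK := hS.sub τ hτ
  obtain ⟨v, s, R, cone⟩ := exists_cone τ (K.nonempty_of_mem_faces hτK) (K.indep hτK)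
  set C : Set V := convexHull ℝ (τ : Set V) with hC
  set D : Set V := poly (bd τ) with hD
  have hCB : C ⊆ B := fun x hx => hSB (mem_poly.2 ⟨τ, hτ, hx⟩)
  have hDC : D ⊆ C := cone.DC
  obtain ⟨L, _, f, g, h, k, hL, cf, cg, ch, ck, h0, h1, k0, k1⟩ := fd v (hCB cone.hv)
  have sc : ∀ b ∈ C, ∀ μ : ℝ, 0 ≤ μ → μ ≤ 1 → v + μ • (b - v) ∈ C := fun b hb μ m0 m1 =>
    (cone.scale b hb μ m0 (mul_le_one₀ m1 (cone.s0 b hb) (cone.s1 b hb))).1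
  obtain ⟨H, cH, H0, pH⟩ := hl (Ov p C) (fun e => e.v)
    (fun z => v + (1 - cl z.2) • (p z.1.v - v)) (by fun_prop) (by fun_prop)
    (fun z t _ _ => hCB (sc _ z.mem _ (by linarith [cl_le t]) (by linarith [cl_nonneg t])))
    (fun z => by simp [cl_of_le le_rfl])
  let T : Ov p C × ℝ → E := fun z => H (z.1, cl z.2)
  have cT : Continuous T := by fun_prop
  have T0 : ∀ e t, t ≤ 0 → T (e, t) = e.v := fun e t ht => by
    show H (e, cl t) = _; rw [cl_of_le ht, H0]
  have pT : ∀ e t, p (T (e, t)) = v + (1 - cl t) • (p e.v - v) := fun e t => by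
    show p (H (e, cl t)) = _
    rw [pH _ _ (cl_nonneg _) (cl_le _)]
    simp only [cl_of_mem (cl_nonneg t) (cl_le t)]
  let T1 : Ov p C → Ov p {v} := fun e => Ov.mk (T (e, 1)) (by
    rw [pT, cl_of_ge le_rfl]; simp)
  have cT1 : Continuous T1 := Ov.cont_mk (by fun_prop) _
  let ω : Ov p D × ℝ → E := fun z => if z.2 ≤ 1/2 then (h (T1 (Ov.incl hDC z.1), 1 - 2 * z.2)).v
    else T (Ov.incl hDC z.1, 2 - 2 * z.2)
  have ωe : ∀ e : Ov p D, (h (T1 (Ov.incl hDC e), 1 - 2 * (1/2))).v = T (Ov.incl hDC e, 2 - 2 * (1/2)) := by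
    intro e
    norm_num [h0]; rfl
  have cω : Continuous ω := by
    refine Continuous.if_le (by fun_prop) (by fun_prop) (by fun_prop) (by fun_prop) ?_
    intro z hz; rw [hz]; exact ωe z.1
  have ω1 : ∀ e s, s ≤ 1/2 → ω (e, s) = (h (T1 (Ov.incl hDC e), 1 - 2 * s)).v :=
    fun e s hs => if_pos hs
  have ω2 : ∀ e s, 1/2 ≤ s → ω (e, s) = T (Ov.incl hDC e, 2 - 2 * s) := by
    intro e s hs
    rcases hs.eq_or_lt with rfl | hs
    · rw [ω1 _ _ le_rfl]; exact ωe e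
    · exact if_neg (not_le.2 hs)
  have ω_1 : ∀ e, ω (e, 1) = e.v := fun e => by rw [ω2 _ _ (by norm_num), T0 _ _ (by norm_num)]; rfl
  have ω_0 : ∀ e, ω (e, 0) = (g (f (T1 (Ov.incl hDC e)))).v := fun e => by
    rw [ω1 _ _ (by norm_num)]; norm_num [h1]
  have pω : ∀ e s, p (ω (e, s)) ∈ C := by
    intro e s
    rcases le_total s (1/2) with hs | hs
    · rw [ω1 _ _ hs]
      have : p (h (T1 (Ov.incl hDC e), 1 - 2 * s)).v = v := (h (T1 (Ov.incl hDC e), 1 - 2 * s)).mem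
      rw [this]; exact cone.hv
    · rw [ω2 _ _ hs, pT]
      exact sc _ (Ov.mem _) _ (by linarith [cl_le (2 - 2 * s)]) (by linarith [cl_nonneg (2 - 2 * s)])
  obtain ⟨X, _, Φ, Q, cX, eX, cΦ, mQ, hQ⟩ := ih
  obtain ⟨cenr0, hm0, ce0⟩ := hQ (bd τ) (DCl.bd hτK) (hS.bd_sub hτ)
  let φ0 : Q (bd τ) → Ov p D := fun x => Ov.mk (Φ x.1) (hm0 x)
  have cφ0 : Continuous φ0 := ce0.1
  let j : Q (bd τ) → L := fun x => f (T1 (Ov.incl hDC (φ0 x)))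
  have cj : Continuous j := by fun_prop
  let i0 : Q (bd τ) → X := fun x => x.1
  have ci0 : Continuous i0 := continuous_subtype_val
  let Φ' : dmc i0 j → E := dmc.lift Φ (fun z => ω (φ0 z.1, z.2)) (fun l => (g l).v)
    (fun m => ω_1 _) (fun m => ω_0 _)
  have cΦ' : Continuous Φ' := dmc.cont_lift cΦ (by fun_prop) (by fun_prop)
  have cpt0 := cenr0.1
  have cptL := hL.1
  have cptX' : CompactSpace (dmc i0 j) := dmc.compact
  have eX' := dmc.embeds ci0 cj eX cenr0.2.1 hL.2.1
  have t2 : T2Space (dmc i0 j) := by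
    obtain ⟨n, e, ce, ie⟩ := eX'
    exact T2Space.of_injective_continuous ie ce
  obtain ⟨injA, injL, injM⟩ := dmc.injs (i := i0) (j := j) eX cenr0.2.1 hL.2.1
  let Q1 : Set (dmc i0 j) := Set.range (fun z : Q (bd τ) × ℝ => dmc.inM i0 j z.1 z.2) ∪
    Set.range (dmc.inL i0 j)
  let Q' : Finset (Finset V) → Set (dmc i0 j) := fun T =>
    dmc.inA i0 j '' Q (T.erase τ) ∪ {z | τ ∈ T ∧ z ∈ Q1}
  refine ⟨dmc i0 j, inferInstance, Φ', Q', cptX', eX', cΦ', ?_, ?_⟩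
  · intro T T' hT
    exact Set.union_subset_union (Set.image_mono (mQ _ _ (Finset.erase_subset_erase _ hT)))
      (fun z hz => ⟨hT hz.1, hz.2⟩)
  intro T' hT' hTS
  have hTS' : T'.erase τ ⊆ S.erase τ := Finset.erase_subset_erase _ hTS
  by_cases hτT : τ ∈ T'
  · have hmaxT : ∀ t ∈ T', t.card ≤ τ.card := fun t ht => hmax t (hTS ht)
    obtain ⟨cenrA, hmA, ceA⟩ := hQ (T'.erase τ) (hT'.erase hmaxT) hTS'
    have hbd : bd τ ⊆ T'.erase τ := hT'.bd_sub hτT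
    have hDA : D ⊆ poly (T'.erase τ) := poly_mono hbd
    let ι : Q (bd τ) → Q (T'.erase τ) := Set.inclusion (mQ _ _ hbd)
    have cι : Continuous ι := continuous_inclusion _
    let N : dmc ι j → dmc i0 j := dmc.lift (fun a => dmc.inA i0 j a.1)
      (fun z => dmc.inM i0 j z.1 z.2) (dmc.inL i0 j) (fun m => dmc.inM_top _ le_rfl)
      (fun m => dmc.inM_bot _ le_rfl)
    have cN : Continuous N := dmc.cont_lift (by fun_prop) (by fun_prop) (by fun_prop)
    have NM : ∀ m s, N (dmc.inM ι j m s) = dmc.inM i0 j m s := fun m s => by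
      show dmc.inM i0 j m (cl s) = _; rw [dmc.inM_cl]
    have iN : Function.Injective N := by
      refine dmc.inj_of dmc.sg (fun _ => rfl) (fun _ => rfl) ?_ ?_ ?_ ?_
      · intro m s hs hs'; rw [NM, dmc.sg_M', cl_of_mem hs.le hs'.le]
      · intro a a' e; exact Subtype.ext (injA e)
      · exact injL
      · intro m m' s hs hs' e
        rw [NM, NM] at e
        exact injM s hs hs' e
    have rN : Set.range N = Q' T' := by
      ext z
      constructor
      · rintro ⟨y, rfl⟩
        refine dmc.ind (P := fun y => N y ∈ Q' T') ?_ ?_ ?_ y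
        · intro a; exact Or.inl ⟨a.1, a.2, rfl⟩
        · intro m s _ _; exact Or.inr ⟨hτT, Or.inl ⟨(m, s), (NM m s).symm⟩⟩
        · intro l; exact Or.inr ⟨hτT, Or.inr ⟨l, rfl⟩⟩
      · rintro (⟨a, ha, rfl⟩ | ⟨-, ⟨⟨m, s⟩, rfl⟩ | ⟨l, rfl⟩⟩)
        · exact ⟨dmc.inA ι j ⟨a, ha⟩, rfl⟩
        · exact ⟨dmc.inM ι j m s, NM m s⟩
        · exact ⟨dmc.inL ι j l, rfl⟩
    refine transport cN iN (dmc.cenr cι cj cenrA cenr0 hL) rN ?_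
    rw [poly_erase hτT]
    have hm : ∀ z, p (Φ' (N z)) ∈ poly (T'.erase τ) ∪ C := by
      refine dmc.ind ?_ ?_ ?_
      · intro a; exact Or.inl (hmA a)
      · intro m s _ _; rw [NM]; exact Or.inr (pω _ _)
      · intro l; refine Or.inr ?_
        have : p (g l).v = v := (g l).mem
        show p (g l).v ∈ C
        rw [this]; exact cone.hv
    refine ⟨hm, ?_⟩
    refine cone_step hp hl cone (poly_compact _).isClosed (poly_inter hT' hτT hmaxT) ?_ hDA hDC
      T cT T0 pT T1 (fun _ => rfl) cT1 f cf g cg h ch h0 h1 k ck k0 k1 ω cω ω1 ω2 ι cι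
      (fun x => Ov.mk (Φ x.1) (hmA x)) ceA φ0 ce0 (fun _ => rfl) j (fun _ => rfl)
      (fun z => Ov.mk (Φ' (N z)) (hm z)) (fun _ => rfl) ?_ (fun _ => rfl)
    · rw [hC, ← poly_erase hτT]; exact (poly_mono hTS).trans hSB
    · intro x s hs hs'
      rw [Ov.mk_v, NM]
      exact dmc.lift_inM _ hs hs'
  · have eT : T'.erase τ = T' := Finset.erase_eq_of_notMem hτT
    rw [eT] at hTS'
    obtain ⟨cenrA, hA⟩ := hQ T' hT' hTS'
    refine transport (N := fun a : Q T' => dmc.inA i0 j a.1) (by fun_prop)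
      (fun a a' e => Subtype.ext (injA e)) cenrA ?_ hA
    ext z
    simp only [Q', eT]
    constructor
    · rintro ⟨a, rfl⟩; exact Or.inl ⟨a.1, a.2, rfl⟩
    · rintro (⟨a, ha, rfl⟩ | ⟨h, -⟩)
      · exact ⟨⟨a, ha⟩, rfl⟩
      · exact absurd h hτT

open Classical in
lemma good_all {p : E → V} (hp : Continuous p) {B : Set V} (hl : HL p B) (fd : ∀ v ∈ B, FD p v)
    {K : Geometry.SimplicialComplex ℝ V} : ∀ (n : ℕ) (S : Finset (Finset V)), S.card ≤ n →
    DCl K S → poly S ⊆ B → Good p K S := by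
  intro n
  induction n with
  | zero =>
    intro S hS _ _
    have : S = ∅ := Finset.card_eq_zero.1 (by omega)
    subst this; exact good_empty p K
  | succ n ih =>
    intro S hS hd hB
    rcases S.eq_empty_or_nonempty with rfl | hne
    · exact good_empty p K
    obtain ⟨τ, hτ, hmax⟩ := exists_max hne
    have hc := Finset.card_erase_lt_of_mem hτ
    exact good_step hp hl fd hd hB hτ hmax (ih _ (by omega) (hd.erase hmax)
      ((poly_mono (Finset.erase_subset _ _)).trans hB))

end build

lemma CENR.isENR {X : Type} [TopologicalSpace X] (h : CENR X) : IsENR X := by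
  rcases isEmpty_or_nonempty X with hX | hX
  · have : IsEmpty (∅ : Set (Fin 0 → ℝ)) := by simp
    refine ⟨0, ∅, ⟨Homeomorph.empty⟩, ∅, isOpen_empty, subset_rfl, ContinuousMap.id _, ?_⟩
    intro x hx; exact this.elim x
  · obtain ⟨n, e, U, ρ, he, oU, eU, cρ, ρe⟩ := h.retr
    refine ⟨n, Set.range e, ⟨he.isEmbedding.toHomeomorph⟩, U, oU, ?_, ?_⟩
    · rintro _ ⟨x, rfl⟩; exact eU x
    · refine ⟨⟨fun x => ⟨e (ρ x.1), ⟨_, rfl⟩⟩, ?_⟩, ?_⟩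
      · refine Continuous.subtype_mk ?_ _
        exact he.continuous.comp (continuousOn_iff_continuous_restrict.1 cρ)
      · rintro ⟨x, hx⟩ ⟨y, hy⟩
        refine Subtype.ext ?_
        have hy : e y = x := hy
        subst hy
        show e (ρ (e y)) = e y
        rw [ρe]

lemma exists_delta {V : Type} [NormedAddCommGroup V] {ε : ℝ} (hε : 0 < ε) :
    ∃ δ : C(C(I, V), ℝ), ∀ u, 0 < δ u ∧ ∀ t t' : I, dist t t' ≤ δ u → dist (u t) (u t') < ε := by
  refine exists_continuous_forall_mem_convex_of_local_const
    (t := fun u : C(I, V) => {d : ℝ | 0 < d ∧ ∀ t t' : I, dist t t' ≤ d → dist (u t) (u t') < ε}) ?_ ?_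
  · intro u
    refine Set.OrdConnected.convex ⟨?_⟩
    intro a ha b hb c hc
    exact ⟨ha.1.trans_le hc.1, fun t t' h => hb.2 t t' (h.trans hc.2)⟩
  · intro u
    have uc : UniformContinuous u := CompactSpace.uniformContinuous_of_continuous u.continuous
    obtain ⟨d, d0, hd⟩ := Metric.uniformContinuous_iff.1 uc (ε/3) (by linarith)
    refine ⟨d/2, ?_⟩
    filter_upwards [Metric.ball_mem_nhds u (by linarith : 0 < ε/3)] with w hw
    refine ⟨by linarith, fun t t' h => ?_⟩
    have h1 := hd (lt_of_le_of_lt h (by linarith))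
    have h2 := ContinuousMap.dist_apply_le_dist (f := w) (g := u) t
    have h3 := ContinuousMap.dist_apply_le_dist (f := w) (g := u) t'
    have h4 : dist w u < ε/3 := hw
    have h5 := dist_triangle4 (w t) (u t) (u t') (w t')
    rw [dist_comm (u t')] at h5
    linarith

section fin
variable {n : ℕ} {K : Geometry.SimplicialComplex ℝ (Fin n → ℝ)} {E B : Type} [TopologicalSpace E]
  [TopologicalSpace B]

lemma HL_of {p : E → B} (hp : IsHurewiczFibration p) (β : B ≃ₜ K.space) :
    HL (fun e => (β (p e)).1) K.space := by
  intro Z _ f h cf ch hB h0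
  obtain ⟨H, H0, hH⟩ := hp.2 Z ⟨f, cf⟩
    ⟨fun z => β.symm ⟨h (z.1, z.2.1), hB _ _ z.2.2.1 z.2.2.2⟩,
      β.symm.continuous.comp (Continuous.subtype_mk (by fun_prop) _)⟩ (by
    intro x
    show β.symm ⟨h (x, 0), _⟩ = p (f x)
    rw [β.symm_apply_eq]
    exact Subtype.ext (h0 x))
  refine ⟨fun z => H (z.1, Set.projIcc 0 1 zero_le_one z.2), ?_, ?_, ?_⟩
  · have := continuous_projIcc (a := (0:ℝ)) (b := 1) (h := zero_le_one)
    fun_prop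
  · intro z
    have : Set.projIcc (0:ℝ) 1 zero_le_one 0 = 0 := Set.projIcc_left _
    simp only [this, H0]; rfl
  · intro z t ht ht'
    simp only [Set.projIcc_of_mem zero_le_one (⟨ht, ht'⟩ : t ∈ Set.Icc (0:ℝ) 1), hH]
    show (β (β.symm _)).1 = _
    rw [β.apply_symm_apply]

lemma htpy {X : Type} [TopologicalSpace X] {f : C(X, X)}
    (h : f.Homotopic (ContinuousMap.id X)) : ∃ H : X × ℝ → X, Continuous H ∧
      (∀ x, H (x, 0) = x) ∧ ∀ x, H (x, 1) = f x := by
  obtain ⟨F⟩ := h.symm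
  refine ⟨fun z => F (Set.projIcc 0 1 zero_le_one z.2, z.1), ?_, ?_, ?_⟩
  · have := continuous_projIcc (a := (0:ℝ)) (b := 1) (h := zero_le_one)
    fun_prop
  · intro x
    have : Set.projIcc (0:ℝ) 1 zero_le_one 0 = 0 := Set.projIcc_left _
    simp only [this, F.apply_zero]; rfl
  · intro x
    have : Set.projIcc (0:ℝ) 1 zero_le_one 1 = 1 := Set.projIcc_right _
    simp only [this, F.apply_one]

lemma FD_of {p : E → B} (hf : ∀ b : B, HomotopyEquivToFiniteComplex (p ⁻¹' {b} : Set E))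
    (β : B ≃ₜ K.space) (v) (hv : v ∈ K.space) : FD (fun e => (β (p e)).1) v := by
  obtain ⟨m, K', hK', ⟨η⟩⟩ := hf (β.symm ⟨v, hv⟩)
  have e0 : {e | (β (p e)).1 ∈ ({v} : Set (Fin n → ℝ))} = p ⁻¹' {β.symm ⟨v, hv⟩} := by
    ext e
    simp only [Set.mem_setOf_eq, Set.mem_singleton_iff, Set.mem_preimage]
    rw [β.eq_symm_apply, Subtype.ext_iff]
  let e1 : Ov (fun e => (β (p e)).1) {v} ≃ₜ (p ⁻¹' {β.symm ⟨v, hv⟩} : Set E) :=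
    Homeomorph.setCongr e0
  let θ := e1.toHomotopyEquiv.trans η
  obtain ⟨h, ch, h0, h1⟩ := htpy θ.left_inv
  obtain ⟨k, ck, k0, k1⟩ := htpy θ.right_inv
  exact ⟨K'.space, inferInstance, θ.toFun, θ.invFun, h, k, CENR.space hK', θ.toFun.continuous,
    θ.invFun.continuous, ch, ck, h0, h1, k0, k1⟩

lemma approx {p : E → B} (hp : IsHurewiczFibration p) (hK : K.faces.Finite) (β : B ≃ₜ K.space)
    {X : Type} [TopologicalSpace X] {φ : X → E}
    (h : CE (fun x => (β (p (φ x))).1) (fun e => (β (p e)).1) φ) :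
    IsApproxFibration (fun x => p (φ x)) := by
  obtain ⟨cφ, -, hce⟩ := h
  refine ⟨hp.1.comp cφ, ?_⟩
  intro Z _ f h h0 𝒰 oU cU
  have cpt : CompactSpace K.space := (CENR.space hK).1
  obtain ⟨ε, ε0, hε⟩ := lebesgue_number_lemma_of_metric (α := K.space) (s := Set.univ)
    (c := fun U : 𝒰 => β.symm ⁻¹' U.1) isCompact_univ
    (fun U => (oU U.1 U.2).preimage β.symm.continuous) (by
      intro x _
      have : β.symm x ∈ ⋃₀ 𝒰 := by rw [cU]; trivial
      obtain ⟨U, hU, hx⟩ := this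
      exact Set.mem_iUnion.2 ⟨⟨U, hU⟩, hx⟩)
  obtain ⟨ψ, cψ, ⟨G, cG, G0, G1, dG⟩, Kd⟩ := hce (ε/3) (by linarith)
  have dψ : ∀ e, dist (β (p (φ (ψ e)))).1 (β (p e)).1 < ε/3 := fun e => Kd.dist_right e
  obtain ⟨HE, HE0, pHE⟩ := hp.2 Z ⟨fun z => φ (f z), by fun_prop⟩ h (fun z => h0 z)
  obtain ⟨δ', hδ'⟩ := exists_delta (V := Fin n → ℝ) (by linarith : 0 < ε/3)
  let hV : C(Z × I, Fin n → ℝ) := ⟨fun z => (β (h z)).1, by fun_prop⟩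
  let δ : Z → ℝ := fun z => δ' (hV.curry z)
  have cδ : Continuous δ := by fun_prop
  have δ0 : ∀ z, 0 < δ z := fun z => (hδ' _).1
  have dh : ∀ z (t t' : I), dist t t' ≤ δ z → dist (β (h (z, t))).1 (β (h (z, t'))).1 < ε/3 :=
    fun z t t' htt => (hδ' (hV.curry z)).2 t t' htt
  have cpr := continuous_projIcc (a := (0:ℝ)) (b := 1) (h := zero_le_one)
  let H : Z × I → X := fun z => if z.2.1 ≤ δ z.1 then G (f z.1, z.2.1 / δ z.1)
    else ψ (HE (z.1, Set.projIcc 0 1 zero_le_one (z.2.1 - δ z.1)))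
  have cH : Continuous H := by
    refine Continuous.if_le ?_ ?_ (by fun_prop) (by fun_prop) ?_
    · refine cG.comp (Continuous.prodMk (by fun_prop) ?_)
      exact Continuous.div (by fun_prop) (by fun_prop) fun z => (δ0 _).ne'
    · fun_prop
    · intro z hz
      rw [hz, div_self (δ0 _).ne', G1 _ _ le_rfl, sub_self]
      have : Set.projIcc (0:ℝ) 1 zero_le_one 0 = 0 := Set.projIcc_left _
      rw [this, HE0]; rfl
  refine ⟨⟨H, cH⟩, ?_, ?_⟩
  · intro z
    show H (z, 0) = f z
    simp only [H]
    rw [if_pos (by simpa using (δ0 z).le)]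
    simp [G0 _ _ le_rfl]
  · rintro ⟨z, t⟩
    show ∃ U ∈ 𝒰, p (φ (H (z, t))) ∈ U ∧ h (z, t) ∈ U
    have key : dist (β (p (φ (H (z, t))))).1 (β (h (z, t))).1 < ε := by
      by_cases ht : t.1 ≤ δ z
      · have e : H (z, t) = G (f z, t.1 / δ z) := if_pos ht
        have h1 := dG (f z) (t.1 / δ z)
        have h2 := dh z 0 t (by rw [dist_comm, Subtype.dist_eq, Real.dist_eq]; simpa [abs_of_nonneg t.2.1] using ht)
        rw [h0] at h2
        rw [e]
        have := dist_triangle (β (p (φ (G (f z, t.1 / δ z))))).1 (β (p (φ (f z)))).1 (β (h (z, t))).1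
        linarith
      · have e : H (z, t) = ψ (HE (z, Set.projIcc 0 1 zero_le_one (t.1 - δ z))) := if_neg ht
        push Not at ht
        set t' : I := Set.projIcc 0 1 zero_le_one (t.1 - δ z) with ht'
        have et : t'.1 = t.1 - δ z := by
          rw [ht', Set.projIcc_of_mem zero_le_one (⟨by linarith, by linarith [δ0 z, t.2.2]⟩ : t.1 - δ z ∈ Set.Icc (0:ℝ) 1)]
        have h1 := dψ (HE (z, t'))
        rw [pHE] at h1
        have h2 := dh z t' t (by
          rw [Subtype.dist_eq, Real.dist_eq, et]; simp [abs_of_pos (δ0 z)])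
        rw [e]
        have := dist_triangle (β (p (φ (ψ (HE (z, t')))))).1 (β (h (z, t'))).1 (β (h (z, t))).1
        linarith
    obtain ⟨U, hU⟩ := hε (β (h (z, t))) trivial
    refine ⟨U.1, U.2, ?_, ?_⟩
    · have : β (p (φ (H (z, t)))) ∈ Metric.ball (β (h (z, t))) ε := key
      have := hU this
      simpa using this
    · have := hU (Metric.mem_ball_self ε0)
      simpa using this

end fin

theorem fibration_equiv_approx_fibration_with_compact_ENR_total_space
    (E B : Type) [TopologicalSpace E] [TopologicalSpace B]
    (hB : IsFiniteSimplicialComplex B)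
    (p : E → B) (hp : IsHurewiczFibration p)
    (hfib : ∀ b : B, HomotopyEquivToFiniteComplex (p ⁻¹' {b} : Set E)) :
    ∃ (X : Type) (_ : TopologicalSpace X), CompactSpace X ∧ IsENR X ∧
      ∃ (q : X → B) (φ : ContinuousMap.HomotopyEquiv X E),
        IsApproxFibration q ∧ ∀ x : X, p (φ.toFun x) = q x := by
  obtain ⟨n, K, hK, ⟨β⟩⟩ := hB
  have hpc := hp.1
  obtain ⟨hd, hs⟩ := space_eq hK
  obtain ⟨X, _, Φ, Q, -, -, -, -, hQ⟩ := good_all (p := fun e => (β (p e)).1) (by fun_prop)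
    (HL_of hp β) (FD_of hfib β) (K := K) _ hK.toFinset le_rfl hd hs.ge
  obtain ⟨cenr, hm, ce⟩ := hQ _ hd subset_rfl
  let e : Ov (fun e => (β (p e)).1) (poly hK.toFinset) ≃ₜ E :=
    { toFun := fun e => e.v
      invFun := fun e => Ov.mk e (by rw [← hs]; exact (β (p e)).2)
      left_inv := fun e => rfl
      right_inv := fun e => rfl
      continuous_toFun := by fun_prop
      continuous_invFun := Ov.cont_mk (f := fun e => e) continuous_id (fun e => by rw [← hs]; exact (β (p e)).2) }
  let φ : Q hK.toFinset → E := fun x => Φ x.1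
  have hce : CE (fun x => (β (p (φ x))).1) (fun e => (β (p e)).1) φ :=
    (CE.of_homeo (V := Fin n → ℝ) e (qX := fun e => (β (p e.v)).1) (qE := fun e => (β (p e)).1)
      (fun _ => rfl)).comp ce
  have ap := approx hp hK β hce
  obtain ⟨cφ, -, h⟩ := hce
  obtain ⟨ψ, cψ, ⟨F, cF, F0, F1, -⟩, ⟨G, cG, G0, G1, -⟩⟩ := h 1 one_pos
  refine ⟨Q hK.toFinset, inferInstance, cenr.1, cenr.isENR, fun x => p (φ x),
    ⟨⟨φ, cφ⟩, ⟨ψ, cψ⟩, ?_, ?_⟩, ap, fun x => rfl⟩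
  · refine ContinuousMap.Homotopic.symm ⟨⟨⟨fun z => F (z.2, z.1.1), by fun_prop⟩, ?_, ?_⟩⟩
    · intro x; exact F0 _ _ le_rfl
    · intro x; exact F1 _ _ le_rfl
  · refine ContinuousMap.Homotopic.symm ⟨⟨⟨fun z => G (z.2, z.1.1), by fun_prop⟩, ?_, ?_⟩⟩
    · intro x; exact G0 _ _ le_rfl
    · intro x; exact G1 _ _ le_rfl

end
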